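/- Let ζ = exp(2πi/5). Then U_{5,3}( (ζq;q)_∞ (ζ^{-1}q;q)_∞ (q;q)_∞ R(ζ;q²) ) = (ζ² + ζ³) J_5 J_{5,1} J_{10,3} / J_{5,2}, where the J-products are in the variable q. -/

import Mathlib

/-!
Write `P(q) = (ζq;q)(ζ⁻¹q;q)(q;q)`, `κ = ζ² + ζ³` and `[x;Q] = (x;Q)(Q/x;Q)`, all products being
infinite.  Everything follows from the 5-dissections of the two factors `P(q)` and `R(ζ;q²)`.

By the Jacobi triple product, `(1 - ζ) P(q)` is the theta series `∑ (-1)^n q^{n(n-1)/2} ζ^n`.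
Sorting `n` modulo `5` and dividing by `1 - ζ` leaves two residue classes (`P_dissect`):
with `t = q⁵`, and `θ_k = ∑ (-1)^n t^{5n(n-1)/2} t^{kn}`,
  `P(q) = θ₂ + κ q θ₁`.

For the rank, counting partitions by their largest part gives an Eulerian series for `R(z;q)`
(`rankGF_eq`), and comparing `q`-difference equations in `z` turns it into the Appell sum
`(q;q) R(z;q) = (1 - z) ∑ (-1)^m q^{m(3m+1)/2} / (1 - z q^m)` (`rank_appell`).
At `z = ζ` one has `1/(1 - ζx) = (1 + ζx + ⋯ + ζ⁴x⁴)/(1 - x⁵)`, so that sorting `m` modulo `5`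
writes the Appell sum in Appell sums of modulus `t⁵` (`AA_dissect`).  Partial fractions of
`1/([x b₁][x b₂][x b₃])` (`pfD_eq`, `pf_const`), two logarithmic derivatives of the three-term theta
relation (`theta_one`, `theta_two`) and the 5-dissection of `(q;q)` (`euler_dissect`) then yield the
dissection of Atkin and Swinnerton-Dyer (`rank_dissect`),
  `R(ζ;q) = g₀ + q g₁ + q² g₂ + q³ g₃`,
in which the `g_k` are functions of `t`, there is no `q⁴` term, and
`g₁ = (t⁵;t⁵) / [t;t⁵]`.

Replace `q` by `q²` in the second dissection: in
`(θ₂ + κ q θ₁)(g₀ + q² g₁ + q⁴ g₂ + q⁶ g₃)` the only term with exponent `3` modulo `5` is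
`κ θ₁ g₁(t²) q³`.  Thus the left-hand side, in the variable `t`, is `κ θ₁ (t¹⁰;t¹⁰) / [t²;t¹⁰]`
(`residue_three`), which is the stated product (`product_form`).

The triple product, the Appell sum for the rank and the partial fractions rest on one principle: the
quotient or the difference of the two sides extends analytically to `ℂ \ {0}`, or even to `0`, and
satisfies a first-order `Q`-difference equation which forces it to be constant or zero
(`elliptic_const`, `cubic_unique`, `germ_zero`).  The three-term relation comes from multiplying two
theta series and sorting the summation indices by parity (`th_mul_th`).

The hypothesis describes the coefficients `a` only through values of unconditional sums, which are
`0` for divergent series, so the convergence of the series has to be proved first; it follows from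
holomorphy and the value `1` at `q = 0` (`coeff_summable`).
-/

/-- The q-Pochhammer symbol `(a;q)_∞ = ∏_{k≥0} (1 - a q^k)`. -/
noncomputable def qPochInf (a q : ℂ) : ℂ := ∏' k : ℕ, (1 - a * q ^ k)

/-- The Dyson rank of a partition: largest part minus number of parts. -/
noncomputable def partitionRank {n : ℕ} (p : n.Partition) : ℤ :=
  (p.parts.sup : ℤ) - p.parts.card

/-- The rank generating function `R(z;q) = Σ_{n≥0} Σ_m N(m,n) z^m q^n`. -/
noncomputable def rankGF (z q : ℂ) : ℂ :=
  ∑' n : ℕ, (∑ p : n.Partition, z ^ partitionRank p) * q ^ n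

/-- `Jba b a q` is `J_{b,a} = (q^a;q^b)_∞ (q^{b-a};q^b)_∞ (q^b;q^b)_∞`. -/
noncomputable def Jba (b a : ℕ) (q : ℂ) : ℂ :=
  qPochInf (q ^ a) (q ^ b) * qPochInf (q ^ (b - a)) (q ^ b) * qPochInf (q ^ b) (q ^ b)

/-- `Jb b q` is `J_b = (q^b;q^b)_∞`. -/
noncomputable def Jb (b : ℕ) (q : ℂ) : ℂ := qPochInf (q ^ b) (q ^ b)

/-- `ζ = exp(2πi/5)`. -/
noncomputable def zeta5 : ℂ := Complex.exp (2 * Real.pi * Complex.I / 5)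

/-! ### Theta exponents and infinite products -/

namespace RankFive

open Filter Topology

/-- The triangular exponent `n(n-1)/2`, as an integer. -/
def tri (n : ℤ) : ℤ := n * (n - 1) / 2

lemma two_mul_tri (n : ℤ) : 2 * tri n = n * (n - 1) :=
  Int.two_mul_ediv_two_of_even (Int.even_mul_pred_self n)

lemma tri_eq {n k : ℤ} (h : n * (n - 1) = 2 * k) : tri n = k := by
  have := two_mul_tri n
  omega

lemma tri_add (m n : ℤ) : tri (m + n) = tri m + tri n + m * n :=
  tri_eq (by linear_combination - two_mul_tri m - two_mul_tri n)

lemma tri_neg (n : ℤ) : tri (-n) = tri n + n :=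
  tri_eq (by linear_combination - two_mul_tri n)

lemma tri_zero : tri 0 = 0 := rfl
lemma tri_one : tri 1 = 0 := rfl
lemma tri_two : tri 2 = 1 := rfl

lemma tri_add_one (n : ℤ) : tri (n + 1) = tri n + n := by
  rw [tri_add, tri_one]; ring

lemma tri_one_sub (n : ℤ) : tri (1 - n) = tri n :=
  tri_eq (by linear_combination - two_mul_tri n)

lemma summable_nat_gauss {r s : ℝ} (hr : 0 < r) (hr1 : r < 1) (hs : 0 < s) :
    Summable (fun n : ℕ => r ^ tri n * s ^ n) := by
  refine summable_of_ratio_test_tendsto_lt_one (l := 0) one_pos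
    (Eventually.of_forall fun n => by positivity) ?_
  have h : Tendsto (fun n : ℕ => r ^ n * s) atTop (𝓝 0) := by
    simpa using (tendsto_pow_atTop_nhds_zero_of_lt_one hr.le hr1).mul_const s
  refine h.congr fun n => ?_
  rw [Real.norm_of_nonneg (by positivity), Real.norm_of_nonneg (by positivity)]
  have : tri ((n + 1 : ℕ) : ℤ) = tri n + n := by push_cast; exact tri_add_one n
  rw [this, zpow_add₀ hr.ne', pow_succ, zpow_natCast]
  field_simp

/-- Gaussian decay dominates every geometric factor, in both directions. -/
lemma summable_gauss {r s : ℝ} (hr : 0 < r) (hr1 : r < 1) (hs : 0 < s) :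
    Summable (fun n : ℤ => r ^ tri n * s ^ n) := by
  refine Summable.of_nat_of_neg ?_ ?_
  · simpa using summable_nat_gauss hr hr1 hs
  · have := summable_nat_gauss (s := r * s⁻¹) hr hr1 (by positivity)
    refine this.congr fun n => ?_
    rw [tri_neg, zpow_add₀ hr.ne', mul_pow, zpow_neg, inv_pow, zpow_natCast, zpow_natCast]
    ring

variable {q Q : ℂ}

lemma summable_mul_pow (hq : ‖q‖ < 1) (a : ℂ) : Summable (fun k : ℕ => ‖-(a * q ^ k)‖) := by
  simp only [norm_neg, norm_mul, norm_pow]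
  exact (summable_geometric_of_lt_one (norm_nonneg _) hq).mul_left _

lemma poch_multipliable (hq : ‖q‖ < 1) (a : ℂ) :
    Multipliable (fun k : ℕ => (1 - a * q ^ k)) := by
  simpa [sub_eq_add_neg] using multipliable_one_add_of_summable (summable_mul_pow hq a)

lemma poch_succ (hq : ‖q‖ < 1) (a : ℂ) : qPochInf a q = (1 - a) * qPochInf (a * q) q := by
  unfold qPochInf
  have h := (poch_multipliable hq (a * q))
  rw [_root_.tprod_eq_zero_mul' (f := fun k : ℕ => 1 - a * q ^ k)]
  · simp only [pow_zero, mul_one]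
    congr 1
    refine tprod_congr fun k => ?_
    ring
  · refine h.congr fun k => ?_
    ring

lemma poch_ne_zero (hq : ‖q‖ < 1) {a : ℂ} (h : ∀ k : ℕ, a * q ^ k ≠ 1) : qPochInf a q ≠ 0 := by
  have := tprod_one_add_ne_zero_of_summable (f := fun k : ℕ => -(a * q ^ k))
    (fun k => by rw [← sub_eq_add_neg]; exact sub_ne_zero.2 (h k).symm) (summable_mul_pow hq a)
  simpa [qPochInf, sub_eq_add_neg] using this

lemma poch_ne_zero_of_norm (hq : ‖q‖ < 1) {a : ℂ} (ha : ‖a‖ < 1) : qPochInf a q ≠ 0 := by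
  refine poch_ne_zero hq fun k h => ?_
  have h1 : ‖a * q ^ k‖ < 1 := by
    rw [norm_mul, norm_pow]
    exact mul_lt_one_of_nonneg_of_lt_one_left (norm_nonneg _) ha (pow_le_one₀ (norm_nonneg _) hq.le)
  rw [h] at h1
  simp at h1

/-- Splitting an infinite product according to the residue of the index modulo `N`. -/
lemma poch_split (hq : ‖q‖ < 1) (a : ℂ) {N : ℕ} (hN : N ≠ 0) :
    qPochInf a q = ∏ j ∈ Finset.range N, qPochInf (a * q ^ j) (q ^ N) := by
  have hqN : ‖q ^ N‖ < 1 := by rw [norm_pow]; exact pow_lt_one₀ (norm_nonneg _) hq hN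
  have h1 : Tendsto (fun n => ∏ k ∈ Finset.range (N * n), (1 - a * q ^ k)) atTop
      (𝓝 (qPochInf a q)) :=
    (poch_multipliable hq a).hasProd.tendsto_prod_nat.comp
      (tendsto_id.const_mul_atTop' (Nat.pos_of_ne_zero hN))
  have h2 : Tendsto (fun n => ∏ j ∈ Finset.range N, ∏ k ∈ Finset.range n,
      (1 - a * q ^ j * (q ^ N) ^ k)) atTop
      (𝓝 (∏ j ∈ Finset.range N, qPochInf (a * q ^ j) (q ^ N))) :=
    tendsto_finsetProd _ fun j _ =>
      (poch_multipliable hqN (a * q ^ j)).hasProd.tendsto_prod_nat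
  refine tendsto_nhds_unique h1 (h2.congr fun n => ?_)
  rw [Finset.prod_comm]
  induction n with
  | zero => simp
  | succ n ih =>
    rw [Finset.prod_range_succ, ih, Nat.mul_succ, Finset.prod_range_add]
    congr 1
    refine Finset.prod_congr rfl fun j _ => ?_
    ring

lemma poch_differentiable (hq : ‖q‖ < 1) : Differentiable ℂ (fun a => qPochInf a q) := by
  intro a₀
  have hu : Summable (fun k : ℕ => (‖a₀‖ + 1) * ‖q‖ ^ k) :=
    (summable_geometric_of_lt_one (norm_nonneg _) hq).mul_left _
  have h := hu.hasProdLocallyUniformlyOn_nat_one_add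
    (f := fun k a => -(a * q ^ k)) (K := Metric.ball (0 : ℂ) (‖a₀‖ + 1)) Metric.isOpen_ball
    (Eventually.of_forall fun n x hx => by
      rw [norm_neg, norm_mul, norm_pow]
      gcongr
      simpa using (mem_ball_zero_iff.1 hx).le)
    (fun n => by fun_prop)
  have h2 := h.differentiableOn (.of_forall fun s => by
    simpa [Finset.prod_fn] using DifferentiableOn.finsetProd (fun _ _ ↦ by fun_prop))
    Metric.isOpen_ball
  have h3 := (h2.differentiableAt (x := a₀)
    (Metric.isOpen_ball.mem_nhds (by simp)))
  simpa [qPochInf, sub_eq_add_neg] using h3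

lemma poch_continuous (hq : ‖q‖ < 1) : Continuous (fun a => qPochInf a q) :=
  (poch_differentiable hq).continuous

/-- The theta quotient `[x;Q] = (x;Q)_∞ (Q/x;Q)_∞`. -/
noncomputable def br (Q x : ℂ) : ℂ := qPochInf x Q * qPochInf (Q / x) Q

/-- `[x;Q]` with its factor `1 - x` removed. -/
noncomputable def brh (Q x : ℂ) : ℂ := qPochInf (x * Q) Q * qPochInf (Q / x) Q

lemma br_eq (hQ : ‖Q‖ < 1) (x : ℂ) : br Q x = (1 - x) * brh Q x := by
  rw [br, brh, poch_succ hQ x]; ring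

lemma br_mul (hQ : ‖Q‖ < 1) (hQ0 : Q ≠ 0) {x : ℂ} (hx : x ≠ 0) :
    br Q (x * Q) = -x⁻¹ * br Q x := by
  have h : Q / (x * Q) = x⁻¹ := by field_simp
  have h2 : x⁻¹ * Q = Q / x := by field_simp
  rw [br, h, poch_succ hQ x⁻¹, h2, br_eq hQ, brh]
  field_simp
  ring

lemma br_inv (hQ : ‖Q‖ < 1) {x : ℂ} (hx : x ≠ 0) :
    br Q x⁻¹ = -x⁻¹ * br Q x := by
  have h2 : x⁻¹ * Q = Q / x := by field_simp
  have h : Q / x⁻¹ = x * Q := by field_simp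
  rw [br_eq hQ, br_eq hQ, brh, brh, h2, h]
  field_simp
  ring

lemma br_refl (hQ0 : Q ≠ 0) (x : ℂ) : br Q (Q / x) = br Q x := by
  have h : Q / (Q / x) = x := by
    field_simp
  rw [br, br, h, mul_comm]

lemma br_ne_zero (hQ : ‖Q‖ < 1) (hQ0 : Q ≠ 0) {x : ℂ} (hx : x ≠ 0)
    (h : ∀ m : ℤ, x * Q ^ m ≠ 1) : br Q x ≠ 0 := by
  refine mul_ne_zero (poch_ne_zero hQ fun k => by simpa using h k) (poch_ne_zero hQ fun k hk => ?_)
  apply h (-(k + 1 : ℕ))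
  rw [zpow_neg, zpow_natCast]
  rw [pow_succ]
  field_simp at hk ⊢
  exact hk.symm

lemma br_one (hQ : ‖Q‖ < 1) : br Q 1 = 0 := by
  rw [br_eq hQ]; ring

lemma br_differentiableAt (hQ : ‖Q‖ < 1) {x : ℂ} (hx : x ≠ 0) :
    DifferentiableAt ℂ (br Q) x := by
  unfold br
  exact ((poch_differentiable hQ) x).mul
    (((poch_differentiable hQ) (Q / x)).comp x ((differentiableAt_const Q).div
      differentiableAt_id hx))

lemma brh_differentiableAt (hQ : ‖Q‖ < 1) {x : ℂ} (hx : x ≠ 0) :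
    DifferentiableAt ℂ (brh Q) x := by
  unfold brh
  exact (((poch_differentiable hQ) (x * Q)).comp x (differentiableAt_id.mul_const Q)).mul
    (((poch_differentiable hQ) (Q / x)).comp x ((differentiableAt_const Q).div
      differentiableAt_id hx))

end RankFive

/-! ### Removable singularities and `Q`-difference equations on the punctured plane -/

namespace RankFive

open Filter Topology

/-- `D` agrees, off the point `x`, with a function analytic at `x`. -/
def Rem (D : ℂ → ℂ) (x : ℂ) : Prop := ∃ g, AnalyticAt ℂ g x ∧ D =ᶠ[𝓝[≠] x] g

lemma Rem.of_analytic {D : ℂ → ℂ} {x : ℂ} (h : AnalyticAt ℂ D x) : Rem D x :=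
  ⟨D, h, EventuallyEq.rfl⟩

lemma Rem.congr {D D' : ℂ → ℂ} {x : ℂ} (h : Rem D x) (h' : D' =ᶠ[𝓝[≠] x] D) : Rem D' x := by
  obtain ⟨g, hg, e⟩ := h
  exact ⟨g, hg, h'.trans e⟩

lemma Rem.add {D D' : ℂ → ℂ} {x : ℂ} (h : Rem D x) (h' : Rem D' x) :
    Rem (fun y => D y + D' y) x := by
  obtain ⟨g, hg, e⟩ := h
  obtain ⟨g', hg', e'⟩ := h'
  exact ⟨_, hg.add hg', e.add e'⟩

lemma Rem.sub {D D' : ℂ → ℂ} {x : ℂ} (h : Rem D x) (h' : Rem D' x) :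
    Rem (fun y => D y - D' y) x := by
  obtain ⟨g, hg, e⟩ := h
  obtain ⟨g', hg', e'⟩ := h'
  exact ⟨_, hg.sub hg', e.sub e'⟩

lemma Rem.mul {D D' : ℂ → ℂ} {x : ℂ} (h : Rem D x) (h' : Rem D' x) :
    Rem (fun y => D y * D' y) x := by
  obtain ⟨g, hg, e⟩ := h
  obtain ⟨g', hg', e'⟩ := h'
  exact ⟨_, hg.mul hg', e.mul e'⟩

/-- A simple pole with vanishing residue is removable. -/
lemma Rem.of_zero {N : ℂ → ℂ} {x : ℂ} (h : AnalyticAt ℂ N x) (h0 : N x = 0) :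
    Rem (fun y => N y / (y - x)) x := by
  obtain ⟨p, hp⟩ := h
  refine ⟨dslope N x, hp.has_fpower_series_dslope_fslope.analyticAt, ?_⟩
  filter_upwards [self_mem_nhdsWithin] with y hy
  rw [dslope_of_ne _ hy, slope_def_field, h0, sub_zero]

lemma tendsto_mul_punctured {Q : ℂ} (hQ : Q ≠ 0) (x : ℂ) :
    Tendsto (fun y => y * Q) (𝓝[≠] x) (𝓝[≠] (x * Q)) := by
  refine tendsto_nhdsWithin_of_tendsto_nhds_of_eventually_within _
    (((continuous_id.mul continuous_const).tendsto x).mono_left nhdsWithin_le_nhds) ?_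
  filter_upwards [self_mem_nhdsWithin] with y hy
  simpa [hQ] using hy

lemma tendsto_div_punctured {Q : ℂ} (hQ : Q ≠ 0) (x : ℂ) :
    Tendsto (fun y => y / Q) (𝓝[≠] (x * Q)) (𝓝[≠] x) := by
  have := tendsto_mul_punctured (inv_ne_zero hQ) (x * Q)
  rw [mul_assoc, mul_inv_cancel₀ hQ, mul_one] at this
  simpa [div_eq_mul_inv] using this

lemma Rem.forward {D u p : ℂ → ℂ} {Q x : ℂ} (hQ : Q ≠ 0) (h : Rem D x)
    (hu : AnalyticAt ℂ u x) (hp : AnalyticAt ℂ p x)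
    (fe : ∀ᶠ y in 𝓝[≠] x, D (y * Q) = u y * D y + p y) : Rem D (x * Q) := by
  obtain ⟨g, hg, e⟩ := h
  have hx : x * Q / Q = x := by field_simp
  have hd : AnalyticAt ℂ (fun y : ℂ => y / Q) (x * Q) := by fun_prop (disch := assumption)
  refine ⟨fun y => u (y / Q) * g (y / Q) + p (y / Q), ?_, ?_⟩
  · refine ((AnalyticAt.fun_comp (g := u) ?_ hd).mul (AnalyticAt.fun_comp (g := g) ?_ hd)).add
      (AnalyticAt.fun_comp (g := p) ?_ hd) <;> rwa [hx]
  · filter_upwards [tendsto_div_punctured hQ x (fe.and e)] with y hy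
    obtain ⟨h1, h2⟩ := hy
    have : y / Q * Q = y := by field_simp
    rw [this] at h1
    rw [h1, h2]

lemma Rem.backward {D u p : ℂ → ℂ} {Q x : ℂ} (hQ : Q ≠ 0) (h : Rem D (x * Q))
    (hu : AnalyticAt ℂ u x) (hp : AnalyticAt ℂ p x) (hu0 : u x ≠ 0)
    (fe : ∀ᶠ y in 𝓝[≠] x, D (y * Q) = u y * D y + p y) : Rem D x := by
  obtain ⟨g, hg, e⟩ := h
  refine ⟨fun y => (g (y * Q) - p y) / u y, ?_, ?_⟩
  · have hd : AnalyticAt ℂ (fun y : ℂ => y * Q) x := by fun_prop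
    exact ((AnalyticAt.fun_comp (g := g) (f := fun y => y * Q) (x := x) hg hd).sub hp).div hu hu0
  · filter_upwards [fe, tendsto_mul_punctured hQ x e,
      (hu.continuousAt.eventually_ne hu0).filter_mono nhdsWithin_le_nhds] with y h1 h2 h3
    simp only [Set.mem_preimage, Set.mem_ofPred_eq] at h2
    rw [← h2, h1]
    field_simp
    ring

/-- Removability propagates along the orbit of `x ↦ xQ`. -/
lemma Rem.orbit {D u p : ℂ → ℂ} {Q x : ℂ} (hQ : Q ≠ 0) (hx : x ≠ 0) (h : Rem D x)
    (hu : ∀ x ≠ 0, AnalyticAt ℂ u x) (hp : ∀ x ≠ 0, AnalyticAt ℂ p x) (hu0 : ∀ x ≠ 0, u x ≠ 0)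
    (fe : ∀ x ≠ 0, ∀ᶠ y in 𝓝[≠] x, D (y * Q) = u y * D y + p y) (m : ℤ) :
    Rem D (x * Q ^ m) := by
  have hne : ∀ m : ℤ, x * Q ^ m ≠ 0 := fun m => mul_ne_zero hx (zpow_ne_zero _ hQ)
  induction m with
  | zero => simpa using h
  | succ n ih =>
    have := ih.forward hQ (hu _ (hne _)) (hp _ (hne _)) (fe _ (hne _))
    rwa [mul_assoc, ← zpow_add_one₀ hQ] at this
  | pred n ih =>
    have h1 : x * Q ^ (-(n : ℤ)) = x * Q ^ (-(n : ℤ) - 1) * Q := by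
      rw [mul_assoc, ← zpow_add_one₀ hQ, sub_add_cancel]
    rw [h1] at ih
    exact ih.backward hQ (hu _ (hne _)) (hp _ (hne _)) (hu0 _ (hne _)) (fe _ (hne _))

lemma eq_of_eventually_punctured {f g : ℂ → ℂ} {x : ℂ} (hf : ContinuousAt f x)
    (hg : ContinuousAt g x) (h : f =ᶠ[𝓝[≠] x] g) : f x = g x :=
  tendsto_nhds_unique_of_eventuallyEq (hf.tendsto.mono_left nhdsWithin_le_nhds)
    (hg.tendsto.mono_left nhdsWithin_le_nhds) h

/-- The removable values patch together to one function. -/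
lemma Rem.extend (D : ℂ → ℂ) : ∃ G : ℂ → ℂ, ∀ x, Rem D x → AnalyticAt ℂ G x ∧ D =ᶠ[𝓝[≠] x] G := by
  classical
  refine ⟨fun x => if h : Rem D x then h.choose x else 0, fun x hx => ?_⟩
  have key : (fun y => if h : Rem D y then h.choose y else 0) =ᶠ[𝓝 x] hx.choose := by
    obtain ⟨hg, e⟩ := hx.choose_spec
    have e2 := eventually_eventually_nhdsWithin.2 e
    rw [eventually_nhdsWithin_iff] at e2
    filter_upwards [e2, hg.eventually_analyticAt] with y hy hy2
    by_cases hyx : y = x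
    · subst hyx
      rw [dif_pos hx]
    · have h3 : D =ᶠ[𝓝[≠] y] hx.choose := by
        have h4 := hy hyx
        have : 𝓝[≠] x ≤ 𝓝[≠] x := le_rfl
        have h5 : 𝓝[{x}ᶜ] y = 𝓝 y := (isOpen_compl_singleton.nhdsWithin_eq hyx)
        rw [h5] at h4
        exact h4.filter_mono nhdsWithin_le_nhds
      have hry : Rem D y := ⟨_, hy2, h3⟩
      rw [dif_pos hry]
      obtain ⟨ha, he⟩ := hry.choose_spec
      exact eq_of_eventually_punctured ha.continuousAt hy2.continuousAt (he.symm.trans h3)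
  obtain ⟨hg, e⟩ := hx.choose_spec
  exact ⟨hg.congr key.symm, e.trans (key.symm.filter_mono nhdsWithin_le_nhds)⟩

/-- A functional equation valid off a point passes to the analytic extensions. -/
lemma extend_fe {D G u p : ℂ → ℂ} {Q x : ℂ} (hQ : Q ≠ 0)
    (h1 : AnalyticAt ℂ G x ∧ D =ᶠ[𝓝[≠] x] G)
    (h2 : AnalyticAt ℂ G (x * Q) ∧ D =ᶠ[𝓝[≠] (x * Q)] G)
    (hu : ContinuousAt u x) (hp : ContinuousAt p x)
    (fe : ∀ᶠ y in 𝓝[≠] x, D (y * Q) = u y * D y + p y) : G (x * Q) = u x * G x + p x := by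
  refine eq_of_eventually_punctured (f := fun y => G (y * Q)) (g := fun y => u y * G y + p y)
    ?_ ?_ ?_
  · exact ContinuousAt.comp (g := G) (f := fun y => y * Q) h2.1.continuousAt (by fun_prop)
  · exact (hu.mul h1.1.continuousAt).add hp
  · filter_upwards [fe, h1.2, tendsto_mul_punctured hQ x h2.2] with y a b c
    simp only [Set.mem_preimage, Set.mem_ofPred_eq] at c
    rw [← c, ← b, a]

/-- Boundedness near `0` from a `Q`-difference inequality: every small point is moved into a
compact annulus by a power of `Q`. -/
lemma bdd_near_zero {G : ℂ → ℂ} {Q : ℂ} (hQ0 : Q ≠ 0) (hQ : ‖Q‖ < 1) {r K : ℝ}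
    (hG : ContinuousOn G {x | ‖Q‖ * r ≤ ‖x‖ ∧ ‖x‖ ≤ r})
    (step : ∀ x, x ≠ 0 → ‖x‖ ≤ r → ∀ M, K ≤ M → ‖G x‖ ≤ M → ‖G (x * Q)‖ ≤ M) :
    ∃ M, ∀ x, x ≠ 0 → ‖x‖ ≤ r → ‖G x‖ ≤ M := by
  have hc : IsCompact {x : ℂ | ‖Q‖ * r ≤ ‖x‖ ∧ ‖x‖ ≤ r} := by
    refine (isCompact_closedBall (0 : ℂ) r).of_isClosed_subset ?_ ?_
    · exact (isClosed_le continuous_const continuous_norm).inter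
        (isClosed_le continuous_norm continuous_const)
    · intro x hx
      simpa using hx.2
  obtain ⟨M0, hM0⟩ := hc.exists_bound_of_continuousOn hG
  have hQn : 0 < ‖Q‖ := norm_pos_iff.2 hQ0
  have main : ∀ n : ℕ, ∀ x : ℂ, x ≠ 0 → ‖Q‖ ^ (n + 1) * r ≤ ‖x‖ → ‖x‖ ≤ r →
      ‖G x‖ ≤ max M0 K := by
    intro n
    induction n with
    | zero => intro x _ h1 h2; exact (hM0 x ⟨by simpa using h1, h2⟩).trans (le_max_left _ _)
    | succ n ih =>
      intro x hx h1 h2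
      by_cases h3 : ‖Q‖ * r ≤ ‖x‖
      · exact (hM0 x ⟨h3, h2⟩).trans (le_max_left _ _)
      · have e : x / Q * Q = x := by field_simp
        have h4 : ‖x / Q‖ ≤ r := by
          rw [norm_div, div_le_iff₀ hQn]; linarith
        have h5 : x / Q ≠ 0 := div_ne_zero hx hQ0
        have := step (x / Q) h5 h4 (max M0 K) (le_max_right _ _) (ih _ h5 ?_ h4)
        · rwa [e] at this
        · rw [norm_div, le_div_iff₀ hQn]
          calc _ = ‖Q‖ ^ (n + 1 + 1) * r := by ring
            _ ≤ _ := h1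
  refine ⟨max M0 K, fun x hx h => ?_⟩
  have h0 : Tendsto (fun n : ℕ => ‖Q‖ ^ (n + 1) * r) atTop (𝓝 (0 * r)) :=
    ((tendsto_pow_atTop_nhds_zero_of_lt_one hQn.le hQ).comp (tendsto_add_atTop_nat 1)).mul_const r
  rw [zero_mul] at h0
  obtain ⟨n, hn⟩ := (h0.eventually_le_const (norm_pos_iff.2 hx)).exists
  exact main n x hx hn h

/-- The companion of `bdd_near_zero` at infinity. -/
lemma bdd_near_infty {G : ℂ → ℂ} {Q : ℂ} (hQ0 : Q ≠ 0) (hQ : ‖Q‖ < 1) {r K : ℝ} (hr : 0 < r)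
    (hG : ∀ x ≠ 0, ContinuousAt G x)
    (step : ∀ x, r ≤ ‖x‖ → ∀ M, K ≤ M → ‖G (x * Q)‖ ≤ M → ‖G x‖ ≤ M) :
    ∃ M, ∀ x, r ≤ ‖x‖ → ‖G x‖ ≤ M := by
  have hQn : 0 < ‖Q‖ := norm_pos_iff.2 hQ0
  have h1 : ContinuousOn (fun x => G x⁻¹) {x | ‖Q‖ * r⁻¹ ≤ ‖x‖ ∧ ‖x‖ ≤ r⁻¹} := by
    intro x hx
    have hx0 : x ≠ 0 := by
      rintro rfl
      have h1 := hx.1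
      have : 0 < ‖Q‖ * r⁻¹ := by positivity
      rw [norm_zero] at h1
      linarith
    exact (ContinuousAt.comp (g := G) (f := fun x => x⁻¹) (hG _ (inv_ne_zero hx0))
      (continuousAt_inv₀ hx0)).continuousWithinAt
  have h2 : ∀ x, x ≠ 0 → ‖x‖ ≤ r⁻¹ → ∀ M, K ≤ M → ‖G x⁻¹‖ ≤ M → ‖G (x * Q)⁻¹‖ ≤ M := by
    intro x hx hxr M hKM h
    have e : (x * Q)⁻¹ * Q = x⁻¹ := by field_simp
    refine step _ ?_ M hKM (by rwa [e])
    rw [norm_inv, norm_mul, le_inv_comm₀ hr (by positivity)]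
    calc ‖x‖ * ‖Q‖ ≤ ‖x‖ * 1 := by gcongr
      _ ≤ _ := by simpa using hxr
  obtain ⟨M, hM⟩ := bdd_near_zero (G := fun x => G x⁻¹) hQ0 hQ (r := r⁻¹) (K := K) h1 h2
  refine ⟨M, fun x hx => ?_⟩
  have hx0 : x ≠ 0 := by rintro rfl; simp at hx; linarith
  simpa using hM x⁻¹ (inv_ne_zero hx0) (by rw [norm_inv]; exact inv_anti₀ hr hx)

/-- Liouville's theorem on the punctured plane. -/
lemma punctured_liouville {G : ℂ → ℂ} (hG : ∀ x ≠ 0, AnalyticAt ℂ G x) {M : ℝ}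
    (hM : ∀ x ≠ 0, ‖G x‖ ≤ M) : ∃ C, ∀ x ≠ 0, G x = C := by
  have hd : DifferentiableOn ℂ G ({0}ᶜ) := fun x hx =>
    (hG x hx).differentiableAt.differentiableWithinAt
  have h := Complex.differentiableOn_update_limUnder_of_bddAbove (f := G) (c := 0)
    (s := Set.univ) Filter.univ_mem (by rwa [← Set.compl_eq_univ_sdiff])
    ⟨M, by rintro _ ⟨x, hx, rfl⟩; exact hM x hx.2⟩
  set H := Function.update G 0 (limUnder (𝓝[≠] 0) G) with hH
  have hd : Differentiable ℂ H := differentiableOn_univ.1 h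
  have hb : Bornology.IsBounded (Set.range H) := by
    refine (isBounded_iff_forall_norm_le).2 ⟨max M ‖H 0‖, ?_⟩
    rintro _ ⟨x, rfl⟩
    by_cases hx : x = 0
    · subst hx; exact le_max_right _ _
    · rw [hH, Function.update_of_ne hx]
      exact (hM x hx).trans (le_max_left _ _)
  refine ⟨H 0, fun x hx => ?_⟩
  rw [← hd.apply_eq_apply_of_bounded hb x 0, hH, Function.update_of_ne hx]

/-- A function on `ℂ \ {0}` without poles, invariant under `x ↦ xQ`, is constant. -/
lemma elliptic_const {D : ℂ → ℂ} {Q : ℂ} (hQ0 : Q ≠ 0) (hQ : ‖Q‖ < 1)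
    (hr : ∀ x ≠ 0, Rem D x) (fe : ∀ x ≠ 0, ∀ᶠ y in 𝓝[≠] x, D (y * Q) = D y) :
    ∃ C, ∀ x ≠ 0, ∀ᶠ y in 𝓝[≠] x, D y = C := by
  obtain ⟨G, hG⟩ := Rem.extend D
  have hfe : ∀ x ≠ 0, G (x * Q) = G x := fun x hx => by
    simpa using extend_fe (u := fun _ => 1) (p := fun _ => 0) hQ0 (hG x (hr x hx))
      (hG (x * Q) (hr _ (mul_ne_zero hx hQ0))) continuousAt_const continuousAt_const
      (by simpa using fe x hx)
  have hcont : ∀ x ≠ 0, ContinuousAt G x := fun x hx => (hG x (hr x hx)).1.continuousAt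
  obtain ⟨M, hM⟩ := bdd_near_zero (G := G) (r := 1) (K := 0) hQ0 hQ
    (fun x hx => (hcont x (by
      rintro rfl
      have h1 := hx.1
      simp at h1
      exact hQ0 h1)).continuousWithinAt)
    (fun x hx _ M _ h => by rwa [hfe x hx])
  obtain ⟨M', hM'⟩ := bdd_near_infty (G := G) (r := 1) (K := 0) hQ0 hQ one_pos hcont
    (fun x hx M _ h => by rwa [hfe x (by rintro rfl; simp at hx; linarith)] at h)
  obtain ⟨C, hC⟩ := punctured_liouville (G := G) (M := max M M') (fun x hx => (hG x (hr x hx)).1)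
    (fun x hx => by
      rcases le_total ‖x‖ 1 with h | h
      · exact (hM x hx h).trans (le_max_left _ _)
      · exact (hM' x h).trans (le_max_right _ _))
  refine ⟨C, fun x hx => ?_⟩
  filter_upwards [(hG x (hr x hx)).2,
    (continuousAt_id.eventually_ne hx).filter_mono nhdsWithin_le_nhds] with y h1 h2
  rw [h1, hC y h2]

/-- Uniqueness for `D(xQ) = c x³ D(x) + (quadratic polynomial)`: a solution without poles on
`ℂ \ {0}` vanishes.  The equation bounds `D` near `0` and near `∞`, so `D` is constant, and a
constant solution is zero. -/
lemma cubic_unique {D : ℂ → ℂ} {Q c e0 e1 e2 : ℂ} (hQ0 : Q ≠ 0) (hQ : ‖Q‖ < 1) (hc : c ≠ 0)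
    (hr : ∀ x ≠ 0, Rem D x)
    (fe : ∀ x ≠ 0, ∀ᶠ y in 𝓝[≠] x,
      D (y * Q) = c * y ^ 3 * D y + (e2 * y ^ 2 + e1 * y + e0)) :
    ∀ x ≠ 0, ∀ᶠ y in 𝓝[≠] x, D y = 0 := by
  obtain ⟨G, hG⟩ := Rem.extend D
  have hfe : ∀ x ≠ 0, G (x * Q) = c * x ^ 3 * G x + (e2 * x ^ 2 + e1 * x + e0) := fun x hx =>
    extend_fe (u := fun y => c * y ^ 3) (p := fun y => e2 * y ^ 2 + e1 * y + e0) hQ0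
      (hG x (hr x hx)) (hG (x * Q) (hr _ (mul_ne_zero hx hQ0))) (by fun_prop) (by fun_prop)
      (fe x hx)
  have hcont : ∀ x ≠ 0, ContinuousAt G x := fun x hx => (hG x (hr x hx)).1.continuousAt
  have hcn : 0 < ‖c‖ := norm_pos_iff.2 hc
  set E := ‖e2‖ + ‖e1‖ + ‖e0‖ with hE
  have hE0 : 0 ≤ E := by positivity
  -- near zero
  set r := min 1 (1 / (2 * ‖c‖)) with hrdef
  have hr0 : 0 < r := by positivity
  obtain ⟨M, hM⟩ := bdd_near_zero (G := G) (r := r) (K := 2 * E) hQ0 hQ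
    (fun x hx => (hcont x (by
      rintro rfl
      have h1 := hx.1
      have : 0 < ‖Q‖ * r := mul_pos (norm_pos_iff.2 hQ0) hr0
      simp at h1
      linarith)).continuousWithinAt)
    (fun x hx hxr M hKM h => by
      have h1 : ‖x‖ ≤ 1 := hxr.trans (min_le_left _ _)
      have h2 : ‖c‖ * ‖x‖ ^ 3 ≤ 1 / 2 := by
        have h3 : ‖x‖ ≤ 1 / (2 * ‖c‖) := hxr.trans (min_le_right _ _)
        have h4 : ‖x‖ ^ 3 ≤ ‖x‖ := by
          calc ‖x‖ ^ 3 = ‖x‖ * ‖x‖ ^ 2 := by ring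
            _ ≤ ‖x‖ * 1 := by gcongr; exact pow_le_one₀ (norm_nonneg _) h1
            _ = _ := mul_one _
        calc ‖c‖ * ‖x‖ ^ 3 ≤ ‖c‖ * (1 / (2 * ‖c‖)) := by gcongr; exact h4.trans h3
          _ = 1 / 2 := by field_simp
      have h5 : ‖e2 * x ^ 2 + e1 * x + e0‖ ≤ E := by
        calc _ ≤ ‖e2‖ * ‖x‖ ^ 2 + ‖e1‖ * ‖x‖ + ‖e0‖ := by
              refine (norm_add₃_le).trans ?_
              simp
          _ ≤ ‖e2‖ * 1 + ‖e1‖ * 1 + ‖e0‖ := by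
              gcongr
              exact pow_le_one₀ (norm_nonneg _) h1
          _ = E := by ring
      rw [hfe x hx]
      calc _ ≤ ‖c‖ * ‖x‖ ^ 3 * ‖G x‖ + E := by
            refine (norm_add_le _ _).trans ?_
            rw [norm_mul, norm_mul, norm_pow]
            gcongr
        _ ≤ 1 / 2 * M + E := by gcongr
        _ ≤ M := by linarith)
  -- near infinity
  set s := max 1 (2 / ‖c‖) with hs
  have hs1 : 1 ≤ s := le_max_left _ _
  obtain ⟨M', hM'⟩ := bdd_near_infty (G := G) (r := s) (K := E) hQ0 hQ (by linarith) hcont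
    (fun x hxs M hKM h => by
      have hx1 : 1 ≤ ‖x‖ := hs1.trans hxs
      have hx : x ≠ 0 := by rintro rfl; simp at hx1; linarith
      have h2 : 2 ≤ ‖c‖ * ‖x‖ := by
        have : 2 / ‖c‖ ≤ ‖x‖ := (le_max_right _ _).trans hxs
        rw [div_le_iff₀ hcn] at this
        linarith
      have h5 : ‖e2 * x ^ 2 + e1 * x + e0‖ ≤ E * ‖x‖ ^ 2 := by
        have h6 : ‖x‖ ≤ ‖x‖ ^ 2 := by nlinarith
        calc _ ≤ ‖e2‖ * ‖x‖ ^ 2 + ‖e1‖ * ‖x‖ + ‖e0‖ * 1 := by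
              refine (norm_add₃_le).trans ?_
              simp
          _ ≤ ‖e2‖ * ‖x‖ ^ 2 + ‖e1‖ * ‖x‖ ^ 2 + ‖e0‖ * ‖x‖ ^ 2 := by
              gcongr
              linarith
          _ = E * ‖x‖ ^ 2 := by ring
      have h7 : ‖c‖ * ‖x‖ ^ 3 * ‖G x‖ ≤ M * ‖x‖ ^ 2 + M * ‖x‖ ^ 2 := by
        have : c * x ^ 3 * G x = G (x * Q) - (e2 * x ^ 2 + e1 * x + e0) := by
          rw [hfe x hx]; ring
        calc _ = ‖c * x ^ 3 * G x‖ := by simp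
          _ ≤ ‖G (x * Q)‖ + ‖e2 * x ^ 2 + e1 * x + e0‖ := by rw [this]; exact norm_sub_le _ _
          _ ≤ M * 1 + E * ‖x‖ ^ 2 := by linarith
          _ ≤ _ := by
            have hM0 : 0 ≤ M := hE0.trans hKM
            gcongr
            nlinarith
      have h8 : 2 * ‖x‖ ^ 2 * ‖G x‖ ≤ 2 * ‖x‖ ^ 2 * M := by
        calc 2 * ‖x‖ ^ 2 * ‖G x‖ ≤ ‖c‖ * ‖x‖ * ‖x‖ ^ 2 * ‖G x‖ := by gcongr
          _ = ‖c‖ * ‖x‖ ^ 3 * ‖G x‖ := by ring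
          _ ≤ _ := h7
          _ = _ := by ring
      exact le_of_mul_le_mul_left h8 (by positivity))
  have hmid : ∃ M'', ∀ x : ℂ, r ≤ ‖x‖ → ‖x‖ ≤ s → ‖G x‖ ≤ M'' := by
    have hcp : IsCompact {x : ℂ | r ≤ ‖x‖ ∧ ‖x‖ ≤ s} := by
      refine (isCompact_closedBall (0 : ℂ) s).of_isClosed_subset ?_ ?_
      · exact (isClosed_le continuous_const continuous_norm).inter
          (isClosed_le continuous_norm continuous_const)
      · intro x hx
        simpa using hx.2
    obtain ⟨M0, hM0⟩ := hcp.exists_bound_of_continuousOn (f := G) (fun x hx =>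
      (hcont x (by rintro rfl; have := hx.1; simp at this; linarith)).continuousWithinAt)
    exact ⟨M0, fun x h1 h2 => hM0 x ⟨h1, h2⟩⟩
  obtain ⟨M'', hM''⟩ := hmid
  obtain ⟨C, hC⟩ := punctured_liouville (G := G) (M := max M (max M' M''))
    (fun x hx => (hG x (hr x hx)).1)
    (fun x hx => by
      rcases le_total ‖x‖ r with h | h
      · exact (hM x hx h).trans (le_max_left _ _)
      · rcases le_total ‖x‖ s with h' | h'
        · exact (hM'' x h h').trans ((le_max_right _ _).trans (le_max_right _ _))
        · exact (hM' x h').trans ((le_max_left _ _).trans (le_max_right _ _)))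
  -- a constant solution is zero: compare the values at `1, -1, 2, -2`
  have hC0 : C = 0 := by
    have hf : ∀ x : ℂ, x ≠ 0 → C = c * x ^ 3 * C + (e2 * x ^ 2 + e1 * x + e0) := fun x hx => by
      have := hfe x hx
      rwa [hC _ (mul_ne_zero hx hQ0), hC x hx] at this
    have h1 := hf 1 (by norm_num)
    have h2 := hf (-1) (by norm_num)
    have h3 := hf 2 (by norm_num)
    have h4 := hf (-2) (by norm_num)
    have h5 : c * C = 0 := by
      linear_combination (1/12) * ((h4 - h3) - 2 * (h2 - h1))
    exact (mul_eq_zero.1 h5).resolve_left hc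
  intro x hx
  filter_upwards [(hG x (hr x hx)).2,
    (continuousAt_id.eventually_ne hx).filter_mono nhdsWithin_le_nhds] with y h1 h2
  rw [h1, hC y h2, hC0]

/-- An analytic germ at `0` with `f(zq) = c z^k f(z)`, `k > 0`, vanishes: compare the orders
of vanishing of the two sides. -/
lemma germ_zero {f : ℂ → ℂ} {q c : ℂ} {k : ℕ} (hq0 : q ≠ 0) (hk : k ≠ 0) (hf : AnalyticAt ℂ f 0)
    (fe : ∀ᶠ z in 𝓝 (0 : ℂ), f (z * q) = c * z ^ k * f z) : ∀ᶠ z in 𝓝 (0 : ℂ), f z = 0 := by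
  by_contra hne
  have hne' : ¬ (∀ᶠ z in 𝓝 (0 : ℂ), f z = 0) := hne
  obtain ⟨n, g, hg, hg0, e⟩ := (hf.exists_eventuallyEq_pow_smul_nonzero_iff).2 hne'
  simp only [sub_zero, smul_eq_mul] at e
  have ht : Tendsto (fun z : ℂ => z * q) (𝓝 0) (𝓝 0) := by
    have : ContinuousAt (fun z : ℂ => z * q) 0 := by fun_prop
    simpa [ContinuousAt] using this
  have h : (fun z => q ^ n * g (z * q)) =ᶠ[𝓝[≠] (0 : ℂ)] (fun z => c * z ^ k * g z) := by
    filter_upwards [fe.filter_mono nhdsWithin_le_nhds, e.filter_mono nhdsWithin_le_nhds,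
      (ht.eventually e).filter_mono nhdsWithin_le_nhds, self_mem_nhdsWithin] with z h1 h2 h3 h4
    rw [h2, h3] at h1
    have hz : z ^ n ≠ 0 := pow_ne_zero _ h4
    refine mul_left_cancel₀ hz ?_
    linear_combination h1
  have h0 := eq_of_eventually_punctured (x := 0)
    (f := fun z => q ^ n * g (z * q)) (g := fun z => c * z ^ k * g z) ?_ ?_ h
  · simp [hk] at h0
    rcases h0 with h0 | h0
    · exact hq0 h0.1
    · exact hg0 h0
  · refine continuousAt_const.mul (ContinuousAt.comp (g := g) (f := fun z => z * q) ?_ (by fun_prop))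
    simpa using hg.continuousAt
  · exact (continuousAt_const.mul (continuousAt_id.pow k)).mul hg.continuousAt

end RankFive

/-! ### Theta series and level three Appell sums -/

namespace RankFive

open Filter Topology

variable {Q : ℂ}

lemma neg_one_zpow_add_one (n : ℤ) : (-1 : ℂ) ^ (n + 1) = -(-1) ^ n := by
  rw [zpow_add_one₀ (by norm_num)]; ring

lemma neg_one_zpow_neg (n : ℤ) : (-1 : ℂ) ^ (-n) = (-1) ^ n := by
  rw [zpow_neg, ← inv_zpow]; norm_num

/-- The theta series `∑ (-1)^n Q^{n(n-1)/2} x^n`. -/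
noncomputable def th (Q x : ℂ) : ℂ := ∑' n : ℤ, (-1) ^ n * Q ^ tri n * x ^ n

lemma summable_th (hQ0 : Q ≠ 0) (hQ : ‖Q‖ < 1) {x : ℂ} (hx : x ≠ 0) :
    Summable (fun n : ℤ => ‖(-1) ^ n * Q ^ tri n * x ^ n‖) := by
  simpa using summable_gauss (norm_pos_iff.2 hQ0) hQ (norm_pos_iff.2 hx)

lemma th_mul (hQ0 : Q ≠ 0) {x : ℂ} (hx : x ≠ 0) : th Q (x * Q) = -x⁻¹ * th Q x := by
  unfold th
  rw [← (Equiv.addRight (1 : ℤ)).tsum_eq (fun n : ℤ => (-1 : ℂ) ^ n * Q ^ tri n * x ^ n),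
    ← tsum_mul_left]
  refine tsum_congr fun n => ?_
  simp only [Equiv.coe_addRight]
  rw [tri_add_one, neg_one_zpow_add_one, zpow_add₀ hQ0, zpow_add_one₀ hx, mul_zpow]
  field_simp

lemma th_inv {x : ℂ} (hx : x ≠ 0) : th Q x⁻¹ = -x⁻¹ * th Q x := by
  unfold th
  rw [← (Equiv.subLeft (1 : ℤ)).tsum_eq (fun n : ℤ => (-1 : ℂ) ^ n * Q ^ tri n * x ^ n),
    ← tsum_mul_left]
  refine tsum_congr fun n => ?_
  simp only [Equiv.subLeft_apply]
  rw [tri_one_sub, sub_eq_neg_add, neg_one_zpow_add_one, neg_one_zpow_neg, zpow_add_one₀ hx,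
    inv_zpow, zpow_neg]
  field_simp

lemma th_one : th Q 1 = 0 := by
  have := th_inv (Q := Q) (one_ne_zero (α := ℂ))
  simp only [inv_one, neg_one_mul] at this
  linear_combination (1/2) * this

lemma th_differentiableAt (hQ0 : Q ≠ 0) (hQ : ‖Q‖ < 1) {x : ℂ} (hx : x ≠ 0) :
    DifferentiableAt ℂ (th Q) x := by
  have hxn : 0 < ‖x‖ := norm_pos_iff.2 hx
  have hu := (summable_gauss (norm_pos_iff.2 hQ0) hQ (s := 2 * ‖x‖) (by positivity)).add
    (summable_gauss (norm_pos_iff.2 hQ0) hQ (s := ‖x‖ / 2) (by positivity))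
  have ho : IsOpen {y : ℂ | ‖x‖ / 2 < ‖y‖ ∧ ‖y‖ < 2 * ‖x‖} :=
    (isOpen_lt continuous_const continuous_norm).inter (isOpen_lt continuous_norm continuous_const)
  have hne : ∀ y ∈ {y : ℂ | ‖x‖ / 2 < ‖y‖ ∧ ‖y‖ < 2 * ‖x‖}, y ≠ 0 := by
    rintro y hy rfl
    have := hy.1
    rw [norm_zero] at this
    linarith
  have h := Complex.differentiableOn_tsum_of_summable_norm
    (F := fun (n : ℤ) (x : ℂ) => (-1 : ℂ) ^ n * Q ^ tri n * x ^ n) hu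
    (U := {y : ℂ | ‖x‖ / 2 < ‖y‖ ∧ ‖y‖ < 2 * ‖x‖}) (fun n y hy =>
      ((differentiableAt_zpow.2 (Or.inl (hne y hy))).const_mul _).differentiableWithinAt) ho
    (fun n y hy => by
      simp only [norm_mul, norm_zpow, norm_neg, norm_one, one_zpow, one_mul]
      rw [← mul_add]
      gcongr
      rcases le_total 0 n with hn | hn
      · lift n to ℕ using hn
        simp only [zpow_natCast]
        have h1 : ‖y‖ ^ n ≤ (2 * ‖x‖) ^ n := by gcongr; exact hy.2.le
        have h2 : 0 ≤ (‖x‖ / 2) ^ n := by positivity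
        linarith
      · obtain ⟨k, rfl⟩ := Int.exists_eq_neg_ofNat hn
        simp only [zpow_neg, zpow_natCast]
        have h1 : (‖y‖ ^ k)⁻¹ ≤ ((‖x‖ / 2) ^ k)⁻¹ := by gcongr; exact hy.1.le
        have h2 : 0 ≤ ((2 * ‖x‖) ^ k)⁻¹ := by positivity
        linarith)
  exact h.differentiableAt (ho.mem_nhds ⟨by linarith, by linarith⟩)

/-- Uniform lower bound for the denominators `1 - xQ^m` near a point `x₀`, over the indices `m`
for which the denominator does not vanish at `x₀`. -/
lemma denom_bound (hQ0 : Q ≠ 0) (hQ : ‖Q‖ < 1) {x₀ : ℂ} (hx : x₀ ≠ 0) :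
    ∃ δ > 0, ∀ᶠ x in 𝓝 x₀, ∀ m : ℤ, 1 - x₀ * Q ^ m ≠ 0 → δ ≤ ‖1 - x * Q ^ m‖ := by
  have hxn : 0 < ‖x₀‖ := norm_pos_iff.2 hx
  have hQn : 0 < ‖Q‖ := norm_pos_iff.2 hQ0
  have h0 := tendsto_pow_atTop_nhds_zero_of_lt_one hQn.le hQ
  obtain ⟨N, hN⟩ := eventually_atTop.1 ((h0.eventually_le_const
    (show (0:ℝ) < 1 / (4 * ‖x₀‖) by positivity)).and
    (h0.eventually_le_const (show (0:ℝ) < ‖x₀‖ / 4 by positivity)))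
  have tail : ∀ᶠ x in 𝓝 x₀, ∀ m : ℤ, N ≤ m.natAbs → 1 / 2 ≤ ‖1 - x * Q ^ m‖ := by
    have h1 : ∀ᶠ x : ℂ in 𝓝 x₀, ‖x‖ < 2 * ‖x₀‖ :=
      continuous_norm.continuousAt.eventually_lt continuousAt_const (by linarith)
    have h2 : ∀ᶠ x : ℂ in 𝓝 x₀, 3 / 4 * ‖x₀‖ < ‖x‖ :=
      continuousAt_const.eventually_lt continuous_norm.continuousAt (by linarith)
    filter_upwards [h1, h2] with x h1 h2 m hm
    obtain ⟨h3, h4⟩ := hN _ hm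
    rcases le_total 0 m with h | h
    · lift m to ℕ using h
      simp only [Int.natAbs_natCast] at h3
      have h5 : ‖x * Q ^ (m : ℤ)‖ ≤ 1 / 2 := by
        rw [norm_mul, zpow_natCast, norm_pow]
        calc ‖x‖ * ‖Q‖ ^ m ≤ (2 * ‖x₀‖) * (1 / (4 * ‖x₀‖)) := by gcongr
          _ = 1 / 2 := by field_simp; norm_num
      have h6 := norm_sub_norm_le (1 : ℂ) (x * Q ^ (m : ℤ))
      rw [norm_one] at h6
      linarith
    · obtain ⟨k, rfl⟩ := Int.exists_eq_neg_ofNat h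
      simp only [Int.natAbs_neg, Int.natAbs_natCast] at h4
      have h5 : 3 ≤ ‖x * Q ^ (-(k : ℤ))‖ := by
        rw [norm_mul, zpow_neg, zpow_natCast, norm_inv, norm_pow, ← div_eq_mul_inv,
          le_div_iff₀ (by positivity)]
        linarith
      have h6 := norm_sub_norm_le (x * Q ^ (-(k : ℤ))) 1
      rw [norm_one, norm_sub_rev] at h6
      linarith
  -- the finitely many remaining indices
  have fin : ∀ n : ℕ, ∃ δ > 0, ∀ᶠ x in 𝓝 x₀, ∀ m : ℤ, m.natAbs < n → 1 - x₀ * Q ^ m ≠ 0 →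
      δ ≤ ‖1 - x * Q ^ m‖ := by
    have one : ∀ m : ℤ, ∃ δ > 0, ∀ᶠ x in 𝓝 x₀, 1 - x₀ * Q ^ m ≠ 0 → δ ≤ ‖1 - x * Q ^ m‖ := by
      intro m
      by_cases h : 1 - x₀ * Q ^ m = 0
      · exact ⟨1, one_pos, Eventually.of_forall fun x h' => absurd h h'⟩
      · have hpos : 0 < ‖1 - x₀ * Q ^ m‖ := norm_pos_iff.2 h
        refine ⟨‖1 - x₀ * Q ^ m‖ / 2, by positivity, ?_⟩
        have hc : ContinuousAt (fun x : ℂ => ‖1 - x * Q ^ m‖) x₀ := by fun_prop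
        filter_upwards [continuousAt_const.eventually_lt hc (half_lt_self hpos)] with x hx _
        exact hx.le
    intro n
    induction n with
    | zero => exact ⟨1, one_pos, Eventually.of_forall fun x m hm => absurd hm (by omega)⟩
    | succ n ih =>
      obtain ⟨δ, hδ, h⟩ := ih
      obtain ⟨δ₁, hδ₁, h₁⟩ := one n
      obtain ⟨δ₂, hδ₂, h₂⟩ := one (-n)
      refine ⟨min δ (min δ₁ δ₂), by positivity, ?_⟩
      filter_upwards [h, h₁, h₂] with x h h₁ h₂ m hm hne
      by_cases hm' : m.natAbs < n
      · exact (min_le_left _ _).trans (h m hm' hne)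
      · rcases (show m = n ∨ m = -n by omega) with rfl | rfl
        · exact ((min_le_right _ _).trans (min_le_left _ _)).trans (h₁ hne)
        · exact ((min_le_right _ _).trans (min_le_right _ _)).trans (h₂ hne)
  obtain ⟨δ, hδ, h⟩ := fin N
  refine ⟨min δ (1 / 2), by positivity, ?_⟩
  filter_upwards [h, tail] with x h h' m hne
  by_cases hm : m.natAbs < N
  · exact (min_le_left _ _).trans (h m hm hne)
  · exact (min_le_right _ _).trans (h' m (not_lt.1 hm))

/-- The partial fraction series `∑ c_m / (1 - xQ^m)`. -/
noncomputable def apl (Q : ℂ) (c : ℤ → ℂ) (x : ℂ) : ℂ := ∑' m : ℤ, c m / (1 - x * Q ^ m)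

lemma apl_summable (hQ0 : Q ≠ 0) (hQ : ‖Q‖ < 1) {c : ℤ → ℂ} (hc : Summable (fun m => ‖c m‖))
    {x : ℂ} (hx : x ≠ 0) : Summable (fun m : ℤ => c m / (1 - x * Q ^ m)) := by
  obtain ⟨δ, hδ, h⟩ := denom_bound hQ0 hQ hx
  refine Summable.of_norm_bounded (hc.mul_right δ⁻¹) fun m => ?_
  by_cases hm : 1 - x * Q ^ m = 0
  · rw [hm]; simp; positivity
  · rw [norm_div, div_eq_mul_inv]
    gcongr
    exact h.self_of_nhds m hm

lemma apl_analyticAt (hQ0 : Q ≠ 0) (hQ : ‖Q‖ < 1) {c : ℤ → ℂ} (hc : Summable (fun m => ‖c m‖))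
    {x₀ : ℂ} (hx : x₀ ≠ 0) (hne : ∀ m, c m ≠ 0 → x₀ * Q ^ m ≠ 1) :
    AnalyticAt ℂ (apl Q c) x₀ := by
  obtain ⟨δ, hδ, h⟩ := denom_bound hQ0 hQ hx
  obtain ⟨U, hU, hUo, hxU⟩ := eventually_nhds_iff.1 h
  have key : ∀ y ∈ U, ∀ m, c m ≠ 0 → δ ≤ ‖1 - y * Q ^ m‖ := fun y hy m hm =>
    hU y hy m (sub_ne_zero.2 (hne m hm).symm)
  have hd := Complex.differentiableOn_tsum_of_summable_norm
    (F := fun (m : ℤ) (x : ℂ) => c m / (1 - x * Q ^ m)) (hc.mul_right δ⁻¹) (U := U)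
    (fun m y hy => by
      by_cases hm : c m = 0
      · simp only [hm, zero_div]; exact differentiableWithinAt_const _
      · have h1 : 1 - y * Q ^ m ≠ 0 := fun h0 => by
          have := key y hy m hm
          rw [h0, norm_zero] at this
          linarith
        have : DifferentiableAt ℂ (fun x : ℂ => c m / (1 - x * Q ^ m)) y := by
          fun_prop (disch := assumption)
        exact this.differentiableWithinAt) hUo
    (fun m y hy => by
      by_cases hm : c m = 0
      · simp [hm]
      · rw [norm_div, div_eq_mul_inv]
        gcongr
        exact key y hy m hm)
  exact hd.analyticAt (hUo.mem_nhds hxU)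

/-- The coefficients `(-1)^m Q^{3m(m+1)/2} w^m` of a level three Appell sum. -/
noncomputable def cf (Q w : ℂ) (m : ℤ) : ℂ := (-1) ^ m * Q ^ (3 * (tri m + m)) * w ^ m

lemma cf_zero (w : ℂ) : cf Q w 0 = 1 := by simp [cf, tri_zero]

lemma summable_cf (hQ0 : Q ≠ 0) (hQ : ‖Q‖ < 1) {w : ℂ} (hw : w ≠ 0) :
    Summable (fun m => ‖cf Q w m‖) := by
  have hQn := norm_pos_iff.2 hQ0
  refine (summable_gauss (r := ‖Q‖ ^ 3) (s := ‖Q‖ ^ 3 * ‖w‖) (by positivity)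
    (pow_lt_one₀ hQn.le hQ (by norm_num)) (by have := norm_pos_iff.2 hw; positivity)).congr
    fun m => ?_
  simp only [cf, norm_mul, norm_zpow, norm_neg, norm_one, one_zpow, one_mul]
  rw [mul_add, zpow_add₀ hQn.ne', zpow_mul, zpow_mul, mul_zpow, mul_assoc]
  norm_cast

/-- The level three Appell sum `∑ (-1)^m Q^{3m(m+1)/2} w^m / (1 - xQ^m)`. -/
noncomputable def BB (Q x w : ℂ) : ℂ := apl Q (cf Q w) x

/-- The Appell sum with its term of index `0` removed, so that it is regular at `x = 1`. -/
noncomputable def BR (Q x w : ℂ) : ℂ := apl Q (fun m => if m = 0 then 0 else cf Q w m) x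

/-- The theta series obtained from the numerators of `BB`. -/
noncomputable def Th (Q w : ℂ) : ℂ := ∑' m : ℤ, cf Q w m

lemma BB_shift (hQ0 : Q ≠ 0) {w : ℂ} (hw : w ≠ 0) (x : ℂ) :
    BB Q (x * Q) w = -w⁻¹ * BB Q x (w * Q⁻¹ * Q⁻¹ * Q⁻¹) := by
  unfold BB apl
  rw [← (Equiv.addRight (1 : ℤ)).tsum_eq
    (fun m : ℤ => cf Q (w * Q⁻¹ * Q⁻¹ * Q⁻¹) m / (1 - x * Q ^ m)), ← tsum_mul_left]
  refine tsum_congr fun n => ?_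
  simp only [Equiv.coe_addRight, cf]
  have h1 : x * Q * Q ^ n = x * Q ^ (n + 1) := by rw [zpow_add_one₀ hQ0]; ring
  have h2 : Q ^ (3 * (tri n + n + (n + 1))) =
      Q ^ (3 * (tri n + n)) * Q ^ (n + 1) * Q ^ (n + 1) * Q ^ (n + 1) := by
    simp only [← zpow_add₀ hQ0]
    congr 1
    ring
  rw [h1, tri_add_one, neg_one_zpow_add_one, mul_zpow, mul_zpow, mul_zpow, zpow_add_one₀ hw,
    inv_zpow, h2]
  have := zpow_ne_zero (n + 1) hQ0
  generalize Q ^ (n + 1) = y at *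
  have := zpow_ne_zero n hw
  field_simp

lemma cf_div (w : ℂ) (m : ℤ) : cf Q (w * Q⁻¹) m = cf Q w m * (Q ^ m)⁻¹ := by
  simp only [cf]
  rw [mul_zpow, inv_zpow]
  ring

lemma BB_div (hQ0 : Q ≠ 0) (hQ : ‖Q‖ < 1) {w : ℂ} (hw : w ≠ 0) {x : ℂ} (hx : x ≠ 0)
    (hne : ∀ m : ℤ, x * Q ^ m ≠ 1) :
    BB Q x (w * Q⁻¹) = x * BB Q x w + Th Q (w * Q⁻¹) := by
  have hw' : w * Q⁻¹ ≠ 0 := mul_ne_zero hw (inv_ne_zero hQ0)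
  unfold BB apl Th
  rw [← tsum_mul_left, ← ((apl_summable hQ0 hQ (summable_cf hQ0 hQ hw) hx).mul_left x).tsum_add
    (summable_cf hQ0 hQ hw').of_norm]
  refine tsum_congr fun m => ?_
  rw [cf_div]
  have h1 := zpow_ne_zero m hQ0
  have h2 : 1 - x * Q ^ m ≠ 0 := sub_ne_zero.2 (hne m).symm
  generalize Q ^ m = y at *
  rw [← mul_div_assoc, div_add' _ _ _ h2]
  congr 1
  field_simp
  ring

/-- The cubic `Q`-difference equation of the Appell sum. -/
lemma BB_fe (hQ0 : Q ≠ 0) (hQ : ‖Q‖ < 1) {w : ℂ} (hw : w ≠ 0) {x : ℂ} (hx : x ≠ 0)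
    (hne : ∀ m : ℤ, x * Q ^ m ≠ 1) :
    BB Q (x * Q) w = -w⁻¹ * (x ^ 3 * BB Q x w + x ^ 2 * Th Q (w * Q⁻¹) +
      x * Th Q (w * Q⁻¹ * Q⁻¹) + Th Q (w * Q⁻¹ * Q⁻¹ * Q⁻¹)) := by
  have hi := inv_ne_zero hQ0
  rw [BB_shift hQ0 hw, BB_div hQ0 hQ (mul_ne_zero (mul_ne_zero hw hi) hi) hx hne,
    BB_div hQ0 hQ (mul_ne_zero hw hi) hx hne, BB_div hQ0 hQ hw hx hne]
  ring

/-- The reflection `m ↦ -m` of the Appell sum.  It holds at the poles as well, since the terms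
with zero denominator are `0` on both sides. -/
lemma BB_inv (hQ0 : Q ≠ 0) {x : ℂ} (hx : x ≠ 0) (w : ℂ) :
    BB Q x w = -x⁻¹ * BB Q x⁻¹ (Q⁻¹ * Q⁻¹ * w⁻¹) := by
  unfold BB apl
  rw [← (Equiv.neg ℤ).tsum_eq (fun m : ℤ => cf Q w m / (1 - x * Q ^ m)), ← tsum_mul_left]
  refine tsum_congr fun m => ?_
  simp only [Equiv.neg_apply, cf]
  rw [neg_one_zpow_neg, tri_neg, mul_zpow, mul_zpow, inv_zpow, inv_zpow, zpow_neg, zpow_neg,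
    show 3 * (tri m + m + -m) = 3 * (tri m + m) - m - m - m by ring, zpow_sub₀ hQ0, zpow_sub₀ hQ0,
    zpow_sub₀ hQ0]
  have h1 := zpow_ne_zero m hQ0
  by_cases h2 : x = Q ^ m
  · have h3 : 1 - x⁻¹ * Q ^ m = 0 := by rw [← h2, inv_mul_cancel₀ hx, sub_self]
    have h4 : 1 - x * (Q ^ m)⁻¹ = 0 := by rw [← h2, mul_inv_cancel₀ hx, sub_self]
    rw [h3, h4]; simp
  · have h3 : x - Q ^ m ≠ 0 := sub_ne_zero.2 h2
    have h4 : Q ^ m - x ≠ 0 := sub_ne_zero.2 (Ne.symm h2)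
    have e1 : 1 - x⁻¹ * Q ^ m = (x - Q ^ m) / x := by field_simp
    have e2 : 1 - x * (Q ^ m)⁻¹ = -(x - Q ^ m) / Q ^ m := by field_simp; ring
    rw [e1, e2]
    generalize Q ^ m = y at *
    field_simp

lemma BB_analyticAt (hQ0 : Q ≠ 0) (hQ : ‖Q‖ < 1) {w : ℂ} (hw : w ≠ 0) {x : ℂ} (hx : x ≠ 0)
    (hne : ∀ m : ℤ, x * Q ^ m ≠ 1) : AnalyticAt ℂ (fun y => BB Q y w) x :=
  apl_analyticAt hQ0 hQ (summable_cf hQ0 hQ hw) hx (fun m _ => hne m)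

lemma summable_cf' (hQ0 : Q ≠ 0) (hQ : ‖Q‖ < 1) {w : ℂ} (hw : w ≠ 0) :
    Summable (fun m : ℤ => ‖(if m = 0 then 0 else cf Q w m)‖) :=
  (summable_cf hQ0 hQ hw).of_nonneg_of_le (fun _ => norm_nonneg _) fun m => by
    split_ifs <;> simp

lemma BR_analyticAt (hQ0 : Q ≠ 0) (hQ : ‖Q‖ < 1) {w : ℂ} (hw : w ≠ 0) :
    AnalyticAt ℂ (fun y => BR Q y w) 1 :=
  apl_analyticAt hQ0 hQ (summable_cf' hQ0 hQ hw) one_ne_zero (fun m hm h => by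
    have hm0 : m ≠ 0 := by rintro rfl; simp at hm
    rw [one_mul] at h
    have h2 : ‖Q‖ ^ m = 1 := by rw [← norm_zpow, h, norm_one]
    exact hm0 ((zpow_eq_one_iff_right₀ (norm_nonneg _) hQ.ne).1 h2))

lemma BB_eq_BR (hQ0 : Q ≠ 0) (hQ : ‖Q‖ < 1) {w : ℂ} (hw : w ≠ 0) {x : ℂ} (hx : x ≠ 0) :
    BB Q x w = 1 / (1 - x) + BR Q x w := by
  unfold BB BR
  have h := (apl_summable hQ0 hQ (summable_cf hQ0 hQ hw) hx).tsum_eq_add_tsum_ite 0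
  unfold apl
  rw [h, cf_zero, zpow_zero, mul_one]
  congr 1
  refine tsum_congr fun m => ?_
  by_cases hm : m = 0 <;> simp [hm]

end RankFive

/-! ### Generating functions of partitions by largest part -/

namespace RankFive

open Filter Topology

/-- The finite q-Pochhammer symbol `(a;q)_m`. -/
noncomputable def pf (a q : ℂ) (m : ℕ) : ℂ := ∏ i ∈ Finset.range m, (1 - a * q ^ i)

lemma pf_zero (a q : ℂ) : pf a q 0 = 1 := by simp [pf]

lemma pf_succ (a q : ℂ) (m : ℕ) : pf a q (m + 1) = pf a q m * (1 - a * q ^ m) := by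
  simp [pf, Finset.prod_range_succ]

lemma pf_succ' (a q : ℂ) (m : ℕ) : pf a q (m + 1) = (1 - a) * pf (a * q) q m := by
  rw [pf, Finset.prod_range_succ', pf, mul_comm]
  simp only [pow_zero, mul_one]
  congr 1
  exact Finset.prod_congr rfl fun i _ => by ring

lemma pf_tendsto {q : ℂ} (hq : ‖q‖ < 1) (a : ℂ) :
    Tendsto (pf a q) atTop (𝓝 (qPochInf a q)) :=
  (poch_multipliable hq a).hasProd.tendsto_prod_nat

lemma pf_inv_bdd {q : ℂ} (hq : ‖q‖ < 1) {a : ℂ} (h : qPochInf a q ≠ 0) :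
    ∃ K : ℝ, ∀ m, ‖(pf a q m)⁻¹‖ ≤ K := by
  obtain ⟨K, hK⟩ := ((pf_tendsto hq a).inv₀ h).norm.bddAbove_range
  exact ⟨K, fun m => hK ⟨m, rfl⟩⟩

section Comb

lemma sup_mem {s : Multiset ℕ} (h : s.sup ≠ 0) : s.sup ∈ s := by
  induction s using Multiset.induction_on with
  | empty => simp at h
  | cons a s ih =>
    rw [Multiset.sup_cons] at h ⊢
    rcases le_total s.sup a with h' | h'
    · rw [sup_of_le_left h']; exact Multiset.mem_cons_self a s
    · rw [sup_of_le_right h'] at h ⊢; exact Multiset.mem_cons_of_mem (ih h)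

lemma sup_le_size {n : ℕ} (p : n.Partition) : p.parts.sup ≤ n := by
  by_cases h : p.parts.sup = 0
  · omega
  · have := Multiset.le_sum_of_mem (sup_mem h)
    rwa [p.parts_sum] at this

variable {R : Type*} [CommSemiring R]

/-- Partitions of `n` with all parts at most `m`, weighted by `y` per part. -/
def cle (y : R) (m n : ℕ) : R :=
  ∑ p : n.Partition with p.parts.sup ≤ m, y ^ p.parts.card

/-- Partitions of `n` with largest part exactly `m` (`m = 0` for the empty partition), weighted
by `y` per part. -/
def ceq (y : R) (m n : ℕ) : R :=
  ∑ p : n.Partition with p.parts.sup = m, y ^ p.parts.card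

lemma ceq_zero_of_lt (y : R) {m n : ℕ} (h : n < m) : ceq y m n = 0 := by
  refine Finset.sum_eq_zero fun p hp => ?_
  have h1 := (Finset.mem_filter.1 hp).2
  have h2 := sup_le_size p
  omega

/-- Removing one copy of the largest part. -/
lemma ceq_eq (y : R) {m : ℕ} (hm : m ≠ 0) (k : ℕ) : ceq y m (k + m) = y * cle y m k := by
  unfold ceq cle
  rw [Finset.mul_sum]
  have hmem : ∀ p : (k + m).Partition, p.parts.sup = m → m ∈ p.parts := fun p hp => by
    have := sup_mem (s := p.parts) (by omega)
    rwa [hp] at this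
  refine Finset.sum_bij'
    (fun p hp => ⟨p.parts.erase m, fun hi => p.parts_pos (Multiset.mem_of_mem_erase hi), by
      have h1 := Multiset.sum_erase (hmem p (Finset.mem_filter.1 hp).2)
      rw [p.parts_sum] at h1
      omega⟩)
    (fun p _ => ⟨m ::ₘ p.parts, fun hi => by
      rcases Multiset.mem_cons.1 hi with rfl | hi
      · omega
      · exact p.parts_pos hi, by
      rw [Multiset.sum_cons, p.parts_sum, add_comm]⟩) ?_ ?_ ?_ ?_ ?_
  · intro p hp
    refine Finset.mem_filter.2 ⟨Finset.mem_univ _, ?_⟩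
    have := (Finset.mem_filter.1 hp).2
    exact (Multiset.sup_mono (Multiset.subset_of_le (Multiset.erase_le m p.parts))).trans this.le
  · intro p hp
    refine Finset.mem_filter.2 ⟨Finset.mem_univ _, ?_⟩
    have := (Finset.mem_filter.1 hp).2
    simp only [Multiset.sup_cons]
    exact sup_of_le_left this
  · intro p hp
    ext1
    exact Multiset.cons_erase (hmem p (Finset.mem_filter.1 hp).2)
  · intro p hp
    ext1
    simp
  · intro p hp
    have h1 := hmem p (Finset.mem_filter.1 hp).2
    have h2 : p.parts.card = (p.parts.erase m).card + 1 := by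
      exact (Multiset.card_erase_add_one h1).symm
    simp only
    rw [h2, pow_succ']

lemma cle_succ (y : R) (m n : ℕ) : cle y (m + 1) n = cle y m n + ceq y (m + 1) n := by
  unfold cle ceq
  rw [← Finset.sum_filter_add_sum_filter_not (s := Finset.univ.filter
    fun p : n.Partition => p.parts.sup ≤ m + 1) (p := fun p => p.parts.sup ≤ m)]
  congr 1
  · rw [Finset.filter_filter]
    refine Finset.sum_congr (Finset.filter_congr fun p _ => ?_) fun _ _ => rfl
    omega
  · rw [Finset.filter_filter]
    refine Finset.sum_congr (Finset.filter_congr fun p _ => ?_) fun _ _ => rfl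
    omega

lemma ceq_zero (y : R) (n : ℕ) : ceq y 0 n = if n = 0 then 1 else 0 := by
  unfold ceq
  split_ifs with h
  · subst h
    rw [Finset.sum_filter, Fintype.sum_unique]
    simp
  · refine Finset.sum_eq_zero fun p hp => ?_
    have h1 := (Finset.mem_filter.1 hp).2
    have h2 : p.parts = 0 := by
      refine Multiset.eq_zero_of_forall_notMem fun a ha => ?_
      have := Multiset.le_sup ha
      have := p.parts_pos ha
      omega
    have h3 := p.parts_sum
    rw [h2] at h3
    simp at h3
    omega

lemma cle_zero (y : R) (n : ℕ) : cle y 0 n = if n = 0 then 1 else 0 := by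
  rw [← ceq_zero y n]
  unfold cle ceq
  simp

end Comb

lemma cle_nonneg (m n : ℕ) : 0 ≤ cle (1 : ℝ) m n := by unfold cle; positivity
lemma ceq_nonneg (m n : ℕ) : 0 ≤ ceq (1 : ℝ) m n := by unfold ceq; positivity

lemma norm_cle_le {y : ℂ} (hy : ‖y‖ ≤ 1) (m n : ℕ) : ‖cle y m n‖ ≤ cle (1 : ℝ) m n := by
  unfold cle
  refine (norm_sum_le _ _).trans (Finset.sum_le_sum fun p _ => ?_)
  rw [norm_pow, one_pow]
  exact pow_le_one₀ (norm_nonneg _) hy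

lemma norm_ceq_le {y : ℂ} (hy : ‖y‖ ≤ 1) (m n : ℕ) : ‖ceq y m n‖ ≤ ceq (1 : ℝ) m n := by
  unfold ceq
  refine (norm_sum_le _ _).trans (Finset.sum_le_sum fun p _ => ?_)
  rw [norm_pow, one_pow]
  exact pow_le_one₀ (norm_nonneg _) hy

lemma sum_ceq_le {r : ℝ} (hr : 0 ≤ r) (m : ℕ) (hm : m ≠ 0) (N : ℕ) :
    ∑ n ∈ Finset.range N, ceq (1 : ℝ) m n * r ^ n ≤
      r ^ m * ∑ n ∈ Finset.range N, cle (1 : ℝ) m n * r ^ n := by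
  calc _ ≤ ∑ n ∈ Finset.range (m + N), ceq (1 : ℝ) m n * r ^ n := by
        refine Finset.sum_le_sum_of_subset_of_nonneg (Finset.range_mono (by omega)) fun i _ _ => ?_
        have := ceq_nonneg m i
        positivity
    _ = _ := by
        rw [Finset.sum_range_add, Finset.mul_sum, Finset.sum_eq_zero, zero_add]
        · refine Finset.sum_congr rfl fun n _ => ?_
          rw [add_comm m n, ceq_eq _ hm, pow_add]
          ring
        · intro n hn
          rw [ceq_zero_of_lt _ (Finset.mem_range.1 hn), zero_mul]

/-- Partial sums of the generating function of partitions into parts at most `m` are bounded by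
the product `∏ 1/(1-r^i)`. -/
lemma sum_cle_le {r : ℝ} (hr : 0 ≤ r) (hr1 : r < 1) (m N : ℕ) :
    ∑ n ∈ Finset.range N, cle (1 : ℝ) m n * r ^ n ≤
      (∏ i ∈ Finset.range m, (1 - r * r ^ i))⁻¹ := by
  induction m with
  | zero =>
    simp only [cle_zero, ite_mul, one_mul, zero_mul, Finset.range_zero, Finset.prod_empty, inv_one]
    rw [Finset.sum_ite_eq' (Finset.range N) 0]
    split_ifs <;> simp
  | succ m ih =>
    have h1 := sum_ceq_le hr (m + 1) (by omega) N
    have h2 : ∑ n ∈ Finset.range N, cle (1 : ℝ) (m + 1) n * r ^ n =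
        ∑ n ∈ Finset.range N, cle (1 : ℝ) m n * r ^ n +
        ∑ n ∈ Finset.range N, ceq (1 : ℝ) (m + 1) n * r ^ n := by
      rw [← Finset.sum_add_distrib]
      exact Finset.sum_congr rfl fun n _ => by rw [cle_succ, add_mul]
    have h3 : 0 < 1 - r * r ^ m := by
      rw [← pow_succ']
      linarith [pow_lt_one₀ hr hr1 (n := m + 1) (by omega)]
    rw [Finset.prod_range_succ, mul_inv, ← div_eq_mul_inv, le_div_iff₀ h3]
    rw [pow_succ'] at h1
    nlinarith

lemma exists_pf_real_bound {r : ℝ} (hr : 0 ≤ r) (hr1 : r < 1) :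
    ∃ K : ℝ, ∀ m, (∏ i ∈ Finset.range m, (1 - r * r ^ i))⁻¹ ≤ K := by
  have hn : ‖(r : ℂ)‖ < 1 := by simpa [abs_of_nonneg hr] using hr1
  obtain ⟨K, hK⟩ := pf_inv_bdd hn (poch_ne_zero_of_norm hn hn)
  refine ⟨K, fun m => (le_abs_self _).trans ?_⟩
  have := hK m
  rwa [show pf (r : ℂ) r m = ((∏ i ∈ Finset.range m, (1 - r * r ^ i) : ℝ) : ℂ) by
    simp [pf], ← Complex.ofReal_inv, Complex.norm_real, Real.norm_eq_abs] at this

lemma summable_cle {y q : ℂ} (hy : ‖y‖ ≤ 1) (hq : ‖q‖ < 1) (m : ℕ) :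
    Summable (fun n => cle y m n * q ^ n) := by
  have h : Summable (fun n => cle (1 : ℝ) m n * ‖q‖ ^ n) :=
    summable_of_sum_range_le (fun n => mul_nonneg (cle_nonneg m n) (by positivity))
      (sum_cle_le (norm_nonneg q) hq m)
  refine Summable.of_norm_bounded h fun n => ?_
  rw [norm_mul, norm_pow]
  gcongr
  exact norm_cle_le hy m n

lemma ceq_hasSum {y q : ℂ} (hy : ‖y‖ ≤ 1) (hq : ‖q‖ < 1) {m : ℕ} (hm : m ≠ 0) :
    HasSum (fun n => ceq y m n * q ^ n) (y * q ^ m * ∑' n, cle y m n * q ^ n) := by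
  have h := (summable_cle hy hq m).hasSum.mul_left (y * q ^ m)
  rw [← hasSum_nat_add_iff' m, Finset.sum_eq_zero, sub_zero]
  · refine h.congr_fun fun n => ?_
    rw [ceq_eq y hm, pow_add]; ring
  · intro n hn
    rw [ceq_zero_of_lt _ (Finset.mem_range.1 hn), zero_mul]

lemma pf_mul_ne_zero {y q : ℂ} (hy : ‖y‖ ≤ 1) (hq : ‖q‖ < 1) (m : ℕ) : pf (y * q) q m ≠ 0 := by
  refine Finset.prod_ne_zero_iff.2 fun i _ h => ?_
  have h1 : y * q * q ^ i = 1 := (sub_eq_zero.1 h).symm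
  have h2 : ‖y * q * q ^ i‖ < 1 := by
    rw [norm_mul, norm_mul, norm_pow]
    have h3 : ‖y‖ * ‖q‖ < 1 := by nlinarith [norm_nonneg q, norm_nonneg y]
    exact mul_lt_one_of_nonneg_of_lt_one_left (by positivity) h3 (pow_le_one₀ (norm_nonneg _) hq.le)
  rw [h1, norm_one] at h2
  exact lt_irrefl _ h2

lemma cle_tsum {y q : ℂ} (hy : ‖y‖ ≤ 1) (hq : ‖q‖ < 1) (m : ℕ) :
    ∑' n, cle y m n * q ^ n = (pf (y * q) q m)⁻¹ := by
  induction m with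
  | zero =>
    rw [tsum_eq_single 0 (fun n hn => by rw [cle_zero, if_neg hn, zero_mul]), cle_zero, pf_zero]
    simp
  | succ m ih =>
    have h1 := (summable_cle hy hq m).hasSum.add (ceq_hasSum hy hq (Nat.succ_ne_zero m))
    have h2 := h1.tsum_eq
    have h3 : (fun n => cle y m n * q ^ n + ceq y (m + 1) n * q ^ n) =
        fun n => cle y (m + 1) n * q ^ n := by
      funext n; rw [cle_succ, add_mul]
    rw [h3, ih, Nat.succ_eq_add_one, pow_succ] at h2
    have h4 := pf_mul_ne_zero hy hq (m + 1)
    have h5 := pf_mul_ne_zero hy hq m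
    rw [pf_succ] at h4 ⊢
    rw [← div_eq_one_iff_eq (inv_ne_zero h4), div_inv_eq_mul]
    have h6 : (pf (y * q) q m)⁻¹ * pf (y * q) q m = 1 := inv_mul_cancel₀ h5
    linear_combination (pf (y * q) q m) * h2 + h6

/-- The rank generating function as a sum over the largest part. -/
lemma rankGF_eq {z q : ℂ} (hz : ‖z‖ = 1) (hq : ‖q‖ < 1) :
    HasSum (fun m : ℕ => z ^ m * q ^ (m + 1) * (pf (z⁻¹ * q) q (m + 1))⁻¹) (rankGF z q - 1) ∧
    Summable (fun n : ℕ => (∑ p : n.Partition, z ^ partitionRank p) * q ^ n) := by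
  have hz0 : z ≠ 0 := by rintro rfl; simp at hz
  have hy : ‖z⁻¹‖ ≤ 1 := by rw [norm_inv, hz, inv_one]
  set F : ℕ × ℕ → ℂ := fun x => z ^ x.1 * (ceq z⁻¹ x.1 x.2 * q ^ x.2) with hF
  have hsum : Summable F := by
    obtain ⟨K, hK⟩ := exists_pf_real_bound (norm_nonneg q) hq
    have hle : ∀ m N, ∑ n ∈ Finset.range N, ceq (1 : ℝ) m n * ‖q‖ ^ n ≤ ‖q‖ ^ m * K := by
      intro m N
      by_cases hm : m = 0
      · subst hm
        have h1 := hK 0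
        simp only [Finset.range_zero, Finset.prod_empty, inv_one] at h1
        simp only [ceq_zero, ite_mul, one_mul, zero_mul, pow_zero]
        rw [Finset.sum_ite_eq' (Finset.range N) 0]
        split_ifs
        · simpa using h1
        · linarith
      · refine (sum_ceq_le (norm_nonneg q) m hm N).trans ?_
        gcongr
        exact (sum_cle_le (norm_nonneg q) hq m N).trans (hK m)
    have hnn : ∀ x : ℕ × ℕ, 0 ≤ ceq (1 : ℝ) x.1 x.2 * ‖q‖ ^ x.2 := fun x =>
      mul_nonneg (ceq_nonneg _ _) (by positivity)
    have h1 : Summable (fun x : ℕ × ℕ => ceq (1 : ℝ) x.1 x.2 * ‖q‖ ^ x.2) := by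
      refine (summable_prod_of_nonneg hnn).2 ⟨fun m => ?_, ?_⟩
      · exact summable_of_sum_range_le (fun n => hnn (m, n)) (hle m)
      · refine Summable.of_nonneg_of_le (fun m => tsum_nonneg fun n => hnn (m, n))
          (fun m => ?_) ((summable_geometric_of_lt_one (norm_nonneg q) hq).mul_right K)
        exact Real.tsum_le_of_sum_range_le (fun n => hnn (m, n)) (hle m)
    refine Summable.of_norm_bounded h1 fun x => ?_
    simp only [hF, norm_mul, norm_pow, hz, one_pow, one_mul]
    gcongr
    exact norm_ceq_le hy _ _
  have hn : ∀ n : ℕ, HasSum (fun m => F (m, n))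
      ((∑ p : n.Partition, z ^ partitionRank p) * q ^ n) := by
    intro n
    have h1 : HasSum (fun m => F (m, n)) _ := hasSum_sum_of_ne_finset_zero (f := fun m => F (m, n)) (s := Finset.range (n + 1))
      (fun m hm => by
        simp only [hF]
        rw [ceq_zero_of_lt _ (by simpa using hm)]
        ring)
    convert h1 using 1
    rw [← Finset.sum_fiberwise_of_maps_to (s := Finset.univ) (t := Finset.range (n + 1))
      (g := fun p : n.Partition => p.parts.sup)
      (fun p _ => Finset.mem_range.2 (Nat.lt_succ_of_le (sup_le_size p))), Finset.sum_mul]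
    refine Finset.sum_congr rfl fun m _ => ?_
    simp only [hF, ceq]
    rw [← mul_assoc, Finset.mul_sum]
    congr 1
    refine Finset.sum_congr rfl fun p hp => ?_
    have h2 := (Finset.mem_filter.1 hp).2
    rw [partitionRank, h2, zpow_sub₀ hz0, zpow_natCast, zpow_natCast, inv_pow, div_eq_mul_inv]
  have hm : ∀ m : ℕ, HasSum (fun n => F (m + 1, n))
      (z ^ m * q ^ (m + 1) * (pf (z⁻¹ * q) q (m + 1))⁻¹) := by
    intro m
    have h1 := (ceq_hasSum hy hq (Nat.succ_ne_zero m)).mul_left (z ^ (m + 1))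
    rw [cle_tsum hy hq] at h1
    have e : z ^ m * q ^ (m + 1) * (pf (z⁻¹ * q) q (m + 1))⁻¹ =
        z ^ (m + 1) * (z⁻¹ * q ^ m.succ * (pf (z⁻¹ * q) q m.succ)⁻¹) := by
      rw [pow_succ z]
      field_simp
    rw [e]
    exact h1
  have hm0 : HasSum (fun n => F (0, n)) 1 := by
    have := hasSum_single (f := fun n => F (0, n)) 0 (fun n hn => by
      simp only [hF]
      rw [ceq_zero, if_neg hn]
      ring)
    simpa [hF, ceq_zero] using this
  have hsw : HasSum (fun x : ℕ × ℕ => F (x.2, x.1)) (∑' x, F x) :=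
    (Equiv.prodComm ℕ ℕ).hasSum_iff.2 hsum.hasSum
  have hA : HasSum (fun n : ℕ => (∑ p : n.Partition, z ^ partitionRank p) * q ^ n) (∑' x, F x) :=
    hsw.prod_fiberwise hn
  refine ⟨?_, hA.summable⟩
  have hB : HasSum (fun m => ∑' n, F (m, n)) (∑' x, F x) :=
    hsum.hasSum.prod_fiberwise fun m => (hsum.prod_factor m).hasSum
  have hC := (hasSum_nat_add_iff' 1).2 hB
  rw [Finset.sum_range_one, hm0.tsum_eq] at hC
  rw [rankGF, hA.tsum_eq]
  refine hC.congr_fun fun m => ?_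
  exact (hm m).tsum_eq.symm

end RankFive

/-! ### The rank generating function as an Appell sum, and the Jacobi triple product -/

namespace RankFive

open Filter Topology

variable {q Q : ℂ}

/-- Near any nonzero point, only that point itself can lie on the orbit `Q^ℤ`. -/
lemma eventually_off_orbit (hQ0 : Q ≠ 0) (hQ : ‖Q‖ < 1) {x : ℂ} (hx : x ≠ 0) :
    ∀ᶠ y in 𝓝[≠] x, y ≠ 0 ∧ ∀ m : ℤ, y * Q ^ m ≠ 1 := by
  obtain ⟨δ, hδ, h⟩ := denom_bound hQ0 hQ hx
  filter_upwards [h.filter_mono nhdsWithin_le_nhds, self_mem_nhdsWithin,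
    (continuousAt_id.eventually_ne hx).filter_mono nhdsWithin_le_nhds] with y hy hyx hy0
  refine ⟨hy0, fun m hm => ?_⟩
  by_cases h0 : 1 - x * Q ^ m = 0
  · apply hyx
    have : y * Q ^ m = x * Q ^ m := by rw [hm]; exact sub_eq_zero.1 h0
    exact mul_right_cancel₀ (zpow_ne_zero m hQ0) this
  · have := hy m h0
    rw [hm, sub_self, norm_zero] at this
    linarith

lemma br_analyticAt (hQ : ‖Q‖ < 1) {x : ℂ} (hx : x ≠ 0) : AnalyticAt ℂ (br Q) x :=
  DifferentiableOn.analyticAt (s := {0}ᶜ)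
    (fun _ hy => (br_differentiableAt hQ hy).differentiableWithinAt)
    (isOpen_compl_singleton.mem_nhds hx)

lemma brh_analyticAt (hQ : ‖Q‖ < 1) {x : ℂ} (hx : x ≠ 0) : AnalyticAt ℂ (brh Q) x :=
  DifferentiableOn.analyticAt (s := {0}ᶜ)
    (fun _ hy => (brh_differentiableAt hQ hy).differentiableWithinAt)
    (isOpen_compl_singleton.mem_nhds hx)

lemma th_analyticAt (hQ0 : Q ≠ 0) (hQ : ‖Q‖ < 1) {x : ℂ} (hx : x ≠ 0) : AnalyticAt ℂ (th Q) x :=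
  DifferentiableOn.analyticAt (s := {0}ᶜ)
    (fun _ hy => (th_differentiableAt hQ0 hQ hy).differentiableWithinAt)
    (isOpen_compl_singleton.mem_nhds hx)

lemma brh_one : brh Q 1 = qPochInf Q Q ^ 2 := by rw [brh, one_mul, div_one, sq]

lemma Th_eq (hQ0 : Q ≠ 0) (w : ℂ) : Th Q w = th (Q ^ 3) (Q ^ 3 * w) := by
  unfold Th th
  refine tsum_congr fun m => ?_
  rw [cf, mul_add, zpow_add₀ hQ0, zpow_mul, zpow_mul, mul_zpow]
  norm_cast
  ring

lemma poch_zero (q : ℂ) : qPochInf 0 q = 1 := by simp [qPochInf]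

lemma poch_eq_pf (hq : ‖q‖ < 1) (a : ℂ) (m : ℕ) :
    qPochInf a q = pf a q m * qPochInf (a * q ^ m) q := by
  induction m with
  | zero => simp [pf_zero]
  | succ m ih =>
    rw [ih, pf_succ, poch_succ hq (a * q ^ m), pow_succ]
    ring_nf

lemma poch_tail_bdd (hq : ‖q‖ < 1) (A : ℝ) :
    ∃ M, ∀ a : ℂ, ‖a‖ ≤ A → ‖qPochInf a q‖ ≤ M := by
  obtain ⟨M, hM⟩ := (isCompact_closedBall (0 : ℂ) A).exists_bound_of_continuousOn
    (poch_continuous hq).continuousOn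
  exact ⟨M, fun a ha => hM a (by simpa using ha)⟩

/-- The series `∑ (zq)^m (q^{m+1}/z;q)_∞`, which is `(q/z;q)_∞` times the Eulerian series
`∑ (zq)^m / (q/z;q)_m` and has no poles in `0 < |z| < 1/|q|`. -/
noncomputable def rho (q z : ℂ) : ℂ := ∑' m : ℕ, (z * q) ^ m * qPochInf (q ^ (m + 1) / z) q

lemma rho_bound (hq : ‖q‖ < 1) {c C : ℝ} (hc : 0 < c) :
    ∃ M, 0 ≤ M ∧ ∀ z : ℂ, c ≤ ‖z‖ → ‖z‖ ≤ C → ∀ m : ℕ,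
      ‖(z * q) ^ m * qPochInf (q ^ (m + 1) / z) q‖ ≤ (C * ‖q‖) ^ m * M := by
  obtain ⟨M, hM⟩ := poch_tail_bdd hq (1 / c)
  have hM0 : 0 ≤ M := (norm_nonneg _).trans (hM 0 (by simp; positivity))
  refine ⟨M, hM0, fun z h1 h2 m => ?_⟩
  rw [norm_mul, norm_pow, norm_mul]
  have h3 : ‖qPochInf (q ^ (m + 1) / z) q‖ ≤ M := by
    refine hM _ ?_
    rw [norm_div, norm_pow]
    have := pow_le_one₀ (norm_nonneg q) hq.le (n := m + 1)
    gcongr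
  have hC : 0 ≤ C := (norm_nonneg z).trans h2
  gcongr

lemma rho_summable (hq : ‖q‖ < 1) {z : ℂ} (hz : z ≠ 0) {w : ℂ} (hw : ‖w‖ < 1) :
    Summable (fun m : ℕ => w ^ m * qPochInf (q ^ (m + 1) / z) q) := by
  obtain ⟨M, hM⟩ := poch_tail_bdd hq (1 / ‖z‖)
  refine Summable.of_norm_bounded
    ((summable_geometric_of_lt_one (norm_nonneg w) hw).mul_right M) fun m => ?_
  rw [norm_mul, norm_pow]
  gcongr
  refine hM _ ?_
  rw [norm_div, norm_pow]
  have := pow_le_one₀ (norm_nonneg q) hq.le (n := m + 1)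
  gcongr

lemma rho_analyticAt (hq : ‖q‖ < 1) {z : ℂ} (hz : z ≠ 0) (hzq : ‖z‖ * ‖q‖ < 1) :
    AnalyticAt ℂ (rho q) z := by
  have hzn := norm_pos_iff.2 hz
  obtain ⟨C, hC1, hC2⟩ : ∃ C, ‖z‖ < C ∧ C * ‖q‖ < 1 := by
    rcases eq_or_ne q 0 with rfl | h
    · exact ⟨‖z‖ + 1, by linarith, by simp⟩
    · have hqn := norm_pos_iff.2 h
      obtain ⟨C, h1, h2⟩ := exists_between ((lt_div_iff₀ hqn).2 hzq)
      exact ⟨C, h1, (lt_div_iff₀ hqn).1 h2⟩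
  have hC0 : 0 < C := hzn.trans hC1
  obtain ⟨M, hM0, hM⟩ := rho_bound hq (c := ‖z‖ / 2) (C := C) (by positivity)
  have ho : IsOpen {y : ℂ | ‖z‖ / 2 < ‖y‖ ∧ ‖y‖ < C} :=
    (isOpen_lt continuous_const continuous_norm).inter (isOpen_lt continuous_norm continuous_const)
  have h := Complex.differentiableOn_tsum_of_summable_norm
    (F := fun (m : ℕ) (z : ℂ) => (z * q) ^ m * qPochInf (q ^ (m + 1) / z) q)
    (U := {y : ℂ | ‖z‖ / 2 < ‖y‖ ∧ ‖y‖ < C})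
    ((summable_geometric_of_lt_one (by positivity) hC2).mul_right M)
    (fun m y hy => by
      have hy0 : y ≠ 0 := by
        rintro rfl
        have := hy.1
        rw [norm_zero] at this
        linarith
      have h1 : DifferentiableAt ℂ (fun y : ℂ => q ^ (m + 1) / y) y :=
        (differentiableAt_const _).div differentiableAt_id hy0
      have h2 : DifferentiableAt ℂ (fun y : ℂ => qPochInf (q ^ (m + 1) / y) q) y :=
        ((poch_differentiable hq) _).comp y h1
      exact (((differentiableAt_id.mul_const q).pow m).mul h2).differentiableWithinAt) ho
    (fun m y hy => hM y hy.1.le hy.2.le m)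
  exact h.analyticAt (ho.mem_nhds ⟨by linarith, hC1⟩)

/-- The `q`-difference equation of `rho`: both `rho q z` and `rho q (z * q)` are related to
`∑ (zq²)^m (q^{m+1}/z;q)_∞`, which is then eliminated. -/
lemma rho_shift (hq : ‖q‖ < 1) (hq0 : q ≠ 0) {z : ℂ} (hz : z ≠ 0) (hzq : ‖z‖ * ‖q‖ < 1) :
    rho q (z * q) = (1 - z⁻¹) * qPochInf (q / z) q +
      z * q ^ 2 * (z * (1 - z * q) * rho q z + (1 - z) * qPochInf (q / z) q) := by
  set u : ℕ → ℂ := fun m => qPochInf (q ^ (m + 1) / z) q with hu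
  have hu0 : qPochInf (q / z) q = u 0 := by simp [hu]
  have hus : ∀ m, u m = (1 - q ^ (m + 1) / z) * u (m + 1) := fun m => by
    simp only [hu]
    rw [poch_succ hq]
    ring_nf
  have hw1 : ‖z * q‖ < 1 := by rwa [norm_mul]
  have hw2 : ‖z * q ^ 2‖ < 1 := by
    rw [pow_two, ← mul_assoc, norm_mul]
    exact mul_lt_one_of_nonneg_of_lt_one_left (norm_nonneg _) hw1 hq.le
  have s0 : Summable (fun m => (z * q) ^ m * u m) := rho_summable hq hz hw1
  have s1 : Summable (fun m => (z * q ^ 2) ^ m * u m) := rho_summable hq hz hw2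
  set σ := ∑' m, (z * q ^ 2) ^ m * u m with hσ
  have hρ : rho q z = ∑' m, (z * q) ^ m * u m := rfl
  -- telescoping relation between the two series
  have t1 : z * q * rho q z = (rho q z - u 0) - z⁻¹ * (σ - u 0) := by
    have e0 := s0.tsum_eq_zero_add
    have e1 := s1.tsum_eq_zero_add
    simp only [pow_zero, one_mul] at e0 e1
    rw [← hρ] at e0
    rw [← hσ] at e1
    have s0' := (summable_nat_add_iff 1).2 s0
    have s1' := (summable_nat_add_iff 1).2 s1
    have e2 : ∑' m, z * q * ((z * q) ^ m * u m) =
        ∑' m, ((z * q) ^ (m + 1) * u (m + 1) - z⁻¹ * ((z * q ^ 2) ^ (m + 1) * u (m + 1))) := by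
      refine tsum_congr fun m => ?_
      rw [hus m]
      have : (z * q ^ 2) ^ (m + 1) = (z * q) ^ (m + 1) * q ^ (m + 1) := by
        rw [← mul_pow]; ring
      rw [this]
      field_simp
      ring
    rw [tsum_mul_left, s0'.tsum_sub (s1'.mul_left z⁻¹), tsum_mul_left, ← hρ] at e2
    rw [e2]
    linear_combination z⁻¹ * e1 - e0
  have t2 : rho q (z * q) = (1 - z⁻¹) * u 0 + z * q ^ 2 * σ := by
    have hs : ∀ m : ℕ, (z * q * q) ^ (m + 1) * qPochInf (q ^ (m + 1 + 1) / (z * q)) q =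
        z * q ^ 2 * ((z * q ^ 2) ^ m * u m) := fun m => by
      simp only [hu]
      rw [show q ^ (m + 1 + 1) / (z * q) = q ^ (m + 1) / z by rw [pow_succ]; field_simp]
      ring
    unfold rho
    rw [tsum_eq_zero_add', tsum_congr hs, tsum_mul_left, ← hσ, pow_zero, one_mul, zero_add, pow_one,
      show q / (z * q) = z⁻¹ by field_simp, poch_succ hq,
      show z⁻¹ * q = q / z by field_simp, hu0]
    exact (s1.mul_left (z * q ^ 2)).congr fun m => (hs m).symm
  rw [t2, hu0]
  have t3 : σ = z * (1 - z * q) * rho q z + (1 - z) * u 0 := by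
    field_simp at t1
    linear_combination t1
  rw [t3]

/-- `[z;q] R(z;q) / (1 - z)` without its poles. -/
noncomputable def psi (q z : ℂ) : ℂ := -br q z / z + qPochInf (z * q) q * rho q z / z

lemma psi_shift (hq : ‖q‖ < 1) (hq0 : q ≠ 0) {z : ℂ} (hz : z ≠ 0) (hzq : ‖z‖ * ‖q‖ < 1) :
    psi q (z * q) = q * z ^ 2 * psi q z - z⁻¹ * br q z * (1 - q * z ^ 2) := by
  unfold psi
  rw [br_mul hq hq0 hz, rho_shift hq hq0 hz hzq, br_eq hq, brh, poch_succ hq (z * q)]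
  field_simp
  ring

/-- On the unit circle `psi` is the rank generating function up to theta factors. -/
lemma psi_eq (hq : ‖q‖ < 1) {z : ℂ} (hz : ‖z‖ = 1) :
    psi q z = brh q z * rankGF z q := by
  have hz0 : z ≠ 0 := by rintro rfl; simp at hz
  have hw1 : ‖z * q‖ < 1 := by rwa [norm_mul, hz, one_mul]
  have s0 : Summable (fun m : ℕ => (z * q) ^ m * qPochInf (q ^ (m + 1) / z) q) :=
    rho_summable hq hz0 hw1
  have h1 := ((rankGF_eq hz hq).1.mul_left (z * qPochInf (q / z) q)).tsum_eq
  have h2 : ∀ m : ℕ, z * qPochInf (q / z) q * (z ^ m * q ^ (m + 1) * (pf (z⁻¹ * q) q (m + 1))⁻¹) =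
      (z * q) ^ (m + 1) * qPochInf (q ^ (m + 1 + 1) / z) q := fun m => by
    have h3 : pf (z⁻¹ * q) q (m + 1) ≠ 0 := pf_mul_ne_zero (by rw [norm_inv, hz, inv_one]) hq _
    rw [show q / z = z⁻¹ * q by field_simp, poch_eq_pf hq (z⁻¹ * q) (m + 1),
      show z⁻¹ * q * q ^ (m + 1) = q ^ (m + 1 + 1) / z by field_simp; ring]
    linear_combination (z * q) ^ (m + 1) * qPochInf (q ^ (m + 1 + 1) / z) q * mul_inv_cancel₀ h3
  rw [tsum_congr h2] at h1
  have h4 := s0.tsum_eq_zero_add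
  rw [h1] at h4
  simp only [pow_zero, one_mul, zero_add, pow_one] at h4
  rw [psi, rho, h4, br_eq hq, brh]
  field_simp
  ring

lemma rho_one (hq : ‖q‖ < 1) : rho q 1 = 1 := by
  have s0 : Summable (fun m : ℕ => (1 * q) ^ m * qPochInf (q ^ (m + 1) / 1) q) :=
    rho_summable hq one_ne_zero (by simpa using hq)
  have h := s0.hasSum.tendsto_sum_nat
  have h2 : ∀ N : ℕ, ∑ m ∈ Finset.range N, (1 * q) ^ m * qPochInf (q ^ (m + 1) / 1) q =
      qPochInf (q ^ N) q := by
    intro N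
    induction N with
    | zero => rw [pow_zero, poch_succ hq]; simp
    | succ N ih =>
      rw [Finset.sum_range_succ, ih, poch_succ hq (q ^ N), one_mul, div_one, pow_succ]
      ring
  simp only [h2] at h
  refine tendsto_nhds_unique h ?_
  have h3 := ((poch_continuous hq).tendsto 0).comp (tendsto_pow_atTop_nhds_zero_of_norm_lt_one hq)
  rw [poch_zero] at h3
  exact h3

/-- The Appell sum `∑ (-1)^m q^{m(3m+1)/2} / (1 - zq^m)` of the rank generating function. -/
noncomputable def AA (q z : ℂ) : ℂ := BB q z q⁻¹

lemma AA_fe (hq0 : q ≠ 0) (hq : ‖q‖ < 1) {z : ℂ} (hz : z ≠ 0) (hne : ∀ m : ℤ, z * q ^ m ≠ 1) :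
    AA q (z * q) = -q * z ^ 3 * AA q z + th (q ^ 3) q * (1 - q * z ^ 2) := by
  unfold AA
  rw [BB_fe hq0 hq (inv_ne_zero hq0) hz hne, Th_eq hq0, Th_eq hq0, Th_eq hq0,
    show q ^ 3 * (q⁻¹ * q⁻¹) = q by field_simp, show q ^ 3 * (q⁻¹ * q⁻¹ * q⁻¹) = 1 by field_simp,
    show q ^ 3 * (q⁻¹ * q⁻¹ * q⁻¹ * q⁻¹) = q⁻¹ by field_simp, th_one, th_inv hq0]
  field_simp
  ring

/-- The rank generating function as an Appell sum, together with Euler's pentagonal number theorem: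
the difference of the two sides of `[z] R / (1 - z) = [z] A / E` extends analytically to `0`, where
its functional equation forces it to vanish. -/
lemma rank_appell (hq0 : q ≠ 0) (hq : ‖q‖ < 1) :
    th (q ^ 3) q = qPochInf q q ∧ ∀ z : ℂ, ‖z‖ = 1 → z ≠ 1 →
      qPochInf q q * rankGF z q = (1 - z) * AA q z := by
  set E := th (q ^ 3) q with hE
  have hqn := norm_pos_iff.2 hq0
  have hi := inv_ne_zero hq0
  have feA : ∀ x ≠ 0, ∀ᶠ y in 𝓝[≠] x, br q (y * q) * AA q (y * q) =
      q * y ^ 2 * (br q y * AA q y) + (-y⁻¹ * br q y * (E * (1 - q * y ^ 2))) := fun x hx => by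
    filter_upwards [eventually_off_orbit hq0 hq hx] with y hy
    rw [br_mul hq hq0 hy.1, AA_fe hq0 hq hy.1 hy.2]
    have := hy.1
    field_simp
    ring
  have hpan : ∀ x ≠ 0, AnalyticAt ℂ (fun y => -y⁻¹ * br q y * (E * (1 - q * y ^ 2))) x :=
    fun x hx => by
      have h1 := br_analyticAt hq hx
      fun_prop (disch := assumption)
  have hone : Rem (fun y => br q y * AA q y) 1 := by
    have h1 : AnalyticAt ℂ (fun y => brh q y * (1 + (1 - y) * BR q y q⁻¹)) 1 := by
      have h2 := brh_analyticAt hq (one_ne_zero (α := ℂ))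
      have h3 := BR_analyticAt hq0 hq hi
      fun_prop
    refine ⟨_, h1, ?_⟩
    filter_upwards [eventually_off_orbit hq0 hq one_ne_zero, self_mem_nhdsWithin] with y hy hy1
    have h4 : 1 - y ≠ 0 := sub_ne_zero.2 (Ne.symm hy1)
    rw [br_eq hq, AA, BB_eq_BR hq0 hq hi hy.1]
    field_simp
  have remA : ∀ x ≠ 0, Rem (fun y => br q y * AA q y) x := by
    intro x hx
    by_cases h : ∀ m : ℤ, x * q ^ m ≠ 1
    · exact Rem.of_analytic ((br_analyticAt hq hx).mul (BB_analyticAt hq0 hq hi hx h))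
    · push Not at h
      obtain ⟨m, hm⟩ := h
      have h1 := hone.orbit hq0 one_ne_zero (u := fun y => q * y ^ 2)
        (fun x _ => by fun_prop) hpan (fun x hx => mul_ne_zero hq0 (pow_ne_zero 2 hx)) feA (-m)
      rwa [one_mul, zpow_neg, ← eq_inv_of_mul_eq_one_left hm] at h1
  obtain ⟨G, hG⟩ := Rem.extend (fun y => br q y * AA q y)
  have hGfe : ∀ x ≠ 0, G (x * q) = q * x ^ 2 * G x + (-x⁻¹ * br q x * (E * (1 - q * x ^ 2))) :=
    fun x hx => extend_fe (u := fun y => q * y ^ 2)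
      (p := fun y => -y⁻¹ * br q y * (E * (1 - q * y ^ 2))) hq0
      (hG x (remA x hx)) (hG _ (remA _ (mul_ne_zero hx hq0))) (by fun_prop)
      (hpan x hx).continuousAt (feA x hx)
  set D : ℂ → ℂ := fun z => E * psi q z - G z with hD
  have hDfe : ∀ z ≠ 0, ‖z‖ * ‖q‖ < 1 → D (z * q) = q * z ^ 2 * D z := fun z hz hzq => by
    simp only [hD]
    rw [hGfe z hz, psi_shift hq hq0 hz hzq]
    ring
  have hDan : ∀ z ≠ 0, ‖z‖ * ‖q‖ < 1 → AnalyticAt ℂ D z := fun z hz hzq => by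
    have h1 := (hG z (remA z hz)).1
    have h2 := br_analyticAt hq hz
    have h3 := rho_analyticAt hq hz hzq
    have h4 : AnalyticAt ℂ (fun z : ℂ => qPochInf (z * q) q) z :=
      ((poch_differentiable hq).comp (differentiable_id.mul_const q)).analyticAt z
    have h5 : AnalyticAt ℂ (psi q) z := by
      unfold psi
      fun_prop (disch := assumption)
    exact (analyticAt_const.mul h5).sub h1
  have hle : ∀ z : ℂ, ‖z‖ ≤ 1 → ‖z‖ * ‖q‖ < 1 := fun z hz =>
    (mul_le_of_le_one_left hqn.le hz).trans_lt hq
  obtain ⟨M, hM⟩ := bdd_near_zero (G := D) (r := 1) (K := 0) hq0 hq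
    (fun x hx => by
      have hx0 : x ≠ 0 := by
        rintro rfl
        have h1 := hx.1
        rw [norm_zero] at h1
        linarith
      exact (hDan x hx0 (hle x hx.2)).continuousAt.continuousWithinAt)
    (fun x hx hx1 M hKM h => by
      rw [hDfe x hx (hle x hx1), norm_mul, norm_mul, norm_pow]
      have h2 := pow_le_one₀ (norm_nonneg x) hx1 (n := 2)
      calc ‖q‖ * ‖x‖ ^ 2 * ‖D x‖ ≤ 1 * 1 * M := by gcongr
        _ = M := by ring)
  have hrem := Complex.differentiableOn_update_limUnder_of_bddAbove (f := D) (c := 0)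
    (s := Metric.ball 0 1) (Metric.ball_mem_nhds 0 one_pos)
    (fun x hx => (hDan x hx.2 (hle x (mem_ball_zero_iff.1 hx.1).le)).differentiableAt.differentiableWithinAt)
    ⟨M, by rintro _ ⟨x, hx, rfl⟩; exact hM x hx.2 (mem_ball_zero_iff.1 hx.1).le⟩
  set H := Function.update D 0 (limUnder (𝓝[≠] 0) D) with hH
  have hHan : AnalyticAt ℂ H 0 := hrem.analyticAt (Metric.ball_mem_nhds 0 one_pos)
  have hHD : ∀ z ≠ 0, H z = D z := fun z hz => Function.update_of_ne hz _ _
  have hHfe1 : ∀ᶠ z in 𝓝[≠] (0 : ℂ), H (z * q) = q * z ^ 2 * H z := by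
    filter_upwards [nhdsWithin_le_nhds (Metric.ball_mem_nhds (0 : ℂ) one_pos), self_mem_nhdsWithin] with z hz hz0
    rw [hHD _ (mul_ne_zero hz0 hq0), hHD _ hz0]
    exact hDfe z hz0 (hle z (by simpa using (mem_ball_zero_iff.1 hz).le))
  have hHfe : ∀ᶠ z in 𝓝 (0 : ℂ), H (z * q) = q * z ^ 2 * H z := by
    have h0 := eq_of_eventually_punctured (x := 0) (f := fun z => H (z * q))
      (g := fun z => q * z ^ 2 * H z)
      (ContinuousAt.comp (g := H) (f := fun z => z * q) (by simpa using hHan.continuousAt)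
        (by fun_prop)) (ContinuousAt.mul (by fun_prop) hHan.continuousAt) hHfe1
    rw [eventually_nhdsWithin_iff] at hHfe1
    filter_upwards [hHfe1] with z hz
    by_cases hz0 : z = 0
    · subst hz0; exact h0
    · exact hz hz0
  have hzero := germ_zero hq0 two_ne_zero hHan hHfe
  have hDz : ∀ n : ℕ, ∀ z ≠ 0, ‖z‖ ≤ 1 → D (z * q ^ n) = 0 → D z = 0 := by
    intro n
    induction n with
    | zero => intro z _ _ h; simpa using h
    | succ n ih =>
      intro z hz hz1 h
      refine ih z hz hz1 ?_
      have hz' : z * q ^ n ≠ 0 := mul_ne_zero hz (pow_ne_zero _ hq0)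
      rw [pow_succ, ← mul_assoc, hDfe (z * q ^ n) hz' ?_] at h
      · exact (mul_eq_zero.1 h).resolve_left (mul_ne_zero hq0 (pow_ne_zero _ hz'))
      · refine hle _ ?_
        rw [norm_mul, norm_pow]
        exact mul_le_one₀ hz1 (by positivity) (pow_le_one₀ hqn.le hq.le)
  have hD0 : ∀ z ≠ 0, ‖z‖ ≤ 1 → D z = 0 := by
    intro z hz hz1
    have ht : Tendsto (fun n : ℕ => z * q ^ n) atTop (𝓝 0) := by
      simpa using (tendsto_pow_atTop_nhds_zero_of_norm_lt_one hq).const_mul z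
    obtain ⟨n, hn⟩ := (ht.eventually hzero).exists
    refine hDz n z hz hz1 ?_
    rwa [hHD _ (mul_ne_zero hz (pow_ne_zero _ hq0))] at hn
  have hJ : qPochInf q q ≠ 0 := poch_ne_zero_of_norm hq hq
  have hEq : E = qPochInf q q := by
    have h1 := hD0 1 one_ne_zero (by simp)
    have h2 : G 1 = qPochInf q q ^ 2 := by
      have h3 := hG 1 (remA 1 one_ne_zero)
      have h4 : AnalyticAt ℂ (fun y => brh q y * (1 + (1 - y) * BR q y q⁻¹)) 1 := by
        have h2 := brh_analyticAt hq (one_ne_zero (α := ℂ))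
        have h3 := BR_analyticAt hq0 hq hi
        fun_prop
      have h5 := eq_of_eventually_punctured h3.1.continuousAt h4.continuousAt ?_
      · rw [h5, brh_one]; ring
      · refine h3.2.symm.trans ?_
        filter_upwards [eventually_off_orbit hq0 hq one_ne_zero, self_mem_nhdsWithin] with y hy hy1
        have h4 : 1 - y ≠ 0 := sub_ne_zero.2 (Ne.symm hy1)
        rw [br_eq hq, AA, BB_eq_BR hq0 hq hi hy.1]
        field_simp
    simp only [hD, psi, h2, rho_one hq, br_one hq, one_mul] at h1
    refine mul_right_cancel₀ hJ ?_
    linear_combination h1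
  refine ⟨hEq, fun z hz hz1 => ?_⟩
  have hz0 : z ≠ 0 := by rintro rfl; simp at hz
  have hoff : ∀ m : ℤ, z * q ^ m ≠ 1 := fun m hm => by
    have h1 : ‖q‖ ^ m = 1 := by
      have := congrArg norm hm
      rwa [norm_mul, hz, one_mul, norm_zpow, norm_one] at this
    have h2 := (zpow_eq_one_iff_right₀ hqn.le hq.ne).1 h1
    subst h2
    simp at hm
    exact hz1 hm
  have h1 := hD0 z hz0 hz.le
  have h2 : G z = br q z * AA q z := by
    have h3 := hG z (remA z hz0)
    exact (eq_of_eventually_punctured ((br_analyticAt hq hz0).mul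
      (BB_analyticAt hq0 hq hi hz0 hoff)).continuousAt h3.1.continuousAt h3.2).symm
  simp only [hD, h2, psi_eq hq hz, br_eq hq, hEq] at h1
  have h5 : brh q z ≠ 0 := by
    have := br_ne_zero hq hq0 hz0 hoff
    rw [br_eq hq] at this
    exact right_ne_zero_of_mul this
  refine mul_left_cancel₀ h5 ?_
  linear_combination h1

/-- The Jacobi triple product.  The quotient of the two sides is elliptic without poles, hence
constant; the pentagonal number theorem fixes the constant. -/
lemma jacobi (hQ0 : Q ≠ 0) (hQ : ‖Q‖ < 1) {x : ℂ} (hx : x ≠ 0) :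
    th Q x = qPochInf Q Q * br Q x := by
  have hfe : ∀ x ≠ 0, ∀ᶠ y in 𝓝[≠] x, th Q (y * Q) / br Q (y * Q) = th Q y / br Q y :=
    fun x hx => by
      filter_upwards [eventually_off_orbit hQ0 hQ hx] with y hy
      rw [th_mul hQ0 hy.1, br_mul hQ hQ0 hy.1]
      exact mul_div_mul_left _ _ (neg_ne_zero.2 (inv_ne_zero hy.1))
  have hone : Rem (fun y => th Q y / br Q y) 1 := by
    have h1 : brh Q 1 ≠ 0 := by
      rw [brh_one]; exact pow_ne_zero _ (poch_ne_zero_of_norm hQ hQ)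
    have h2 : AnalyticAt ℂ (fun y => -th Q y / brh Q y) 1 :=
      (th_analyticAt hQ0 hQ one_ne_zero).neg.div (brh_analyticAt hQ one_ne_zero) h1
    refine (Rem.of_zero h2 (by simp [th_one])).congr ?_
    filter_upwards [self_mem_nhdsWithin] with y hy
    rw [br_eq hQ, ← neg_sub y 1, neg_mul, div_neg, mul_comm (y - 1), ← div_div, neg_div, neg_div]
  have hrem : ∀ x ≠ 0, Rem (fun y => th Q y / br Q y) x := by
    intro x hx
    by_cases h : ∀ m : ℤ, x * Q ^ m ≠ 1
    · exact Rem.of_analytic ((th_analyticAt hQ0 hQ hx).div (br_analyticAt hQ hx)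
        (br_ne_zero hQ hQ0 hx h))
    · push Not at h
      obtain ⟨m, hm⟩ := h
      have h1 := hone.orbit hQ0 one_ne_zero (u := fun _ => 1) (p := fun _ => 0)
        (fun x _ => analyticAt_const) (fun x _ => analyticAt_const) (fun x hx => one_ne_zero)
        (by simpa using hfe) (-m)
      rwa [one_mul, zpow_neg, ← eq_inv_of_mul_eq_one_left hm] at h1
  obtain ⟨C, hC⟩ := elliptic_const hQ0 hQ hrem hfe
  have hall : ∀ x ≠ 0, th Q x = C * br Q x := fun x hx => by
    refine eq_of_eventually_punctured (g := fun y => C * br Q y)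
      (th_analyticAt hQ0 hQ hx).continuousAt
      (continuousAt_const.mul (br_analyticAt hQ hx).continuousAt) ?_
    filter_upwards [hC x hx, eventually_off_orbit hQ0 hQ hx] with y h1 h2
    rw [← h1, div_mul_cancel₀ _ (br_ne_zero hQ hQ0 h2.1 h2.2)]
  obtain ⟨q, rfl⟩ := IsAlgClosed.exists_pow_nat_eq Q (n := 3) (by norm_num)
  have hq0 : q ≠ 0 := by rintro rfl; simp at hQ0
  have hq : ‖q‖ < 1 := by
    rw [norm_pow] at hQ
    exact lt_of_not_ge fun h => absurd hQ (not_lt.2 (one_le_pow₀ h))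
  have h1 := hall q hq0
  rw [(rank_appell hq0 hq).1, poch_split hq q (N := 3) (by norm_num), br,
    show q ^ 3 / q = q * q ^ 1 by field_simp] at h1
  simp only [Finset.prod_range_succ, Finset.prod_range_zero, one_mul, pow_zero, mul_one] at h1
  have h2 : qPochInf q (q ^ 3) * qPochInf (q * q ^ 1) (q ^ 3) ≠ 0 := by
    refine mul_ne_zero (poch_ne_zero_of_norm hQ hq) (poch_ne_zero_of_norm hQ ?_)
    rw [pow_one, norm_mul]
    exact mul_lt_one_of_nonneg_of_lt_one_left (norm_nonneg _) hq hq.le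
  have h3 : C = qPochInf (q ^ 3) (q ^ 3) := by
    refine mul_right_cancel₀ h2 ?_
    rw [← h1, show q * q ^ 2 = q ^ 3 by ring]
    ring
  rw [hall x hx, h3]

end RankFive

/-! ### Partial fractions of a reciprocal of three theta functions -/

namespace RankFive

open Filter Topology

variable {q Q : ℂ}

/-- `x` does not lie on the orbit `Q^ℤ`. -/
def Off (Q x : ℂ) : Prop := ∀ m : ℤ, x * Q ^ m ≠ 1

lemma Off.inv {x : ℂ} (h : Off Q x) : Off Q x⁻¹ := fun m hm => h (-m) (by
  rw [zpow_neg, ← inv_inv x, ← mul_inv, hm, inv_one])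

lemma Off.div_comm {x y : ℂ} (h : Off Q (x / y)) : Off Q (y / x) := by
  rw [← inv_div]; exact h.inv

lemma br_ne (hQ0 : Q ≠ 0) (hQ : ‖Q‖ < 1) {x : ℂ} (hx : x ≠ 0) (h : Off Q x) : br Q x ≠ 0 :=
  br_ne_zero hQ hQ0 hx h

/-- A single Appell sum in the partial fraction decomposition below. -/
noncomputable def pfT (Q b₁ b₂ b₃ x : ℂ) : ℂ :=
  BB Q (x * b₁) (b₁ ^ 2 / (b₂ * b₃)) / (br Q (b₂ / b₁) * br Q (b₃ / b₁))

/-- The difference of the two sides of the partial fraction decomposition of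
`(Q;Q)² / ([x b₁][x b₂][x b₃])`. -/
noncomputable def pfD (Q b₁ b₂ b₃ x : ℂ) : ℂ :=
  qPochInf Q Q ^ 2 / (br Q (x * b₁) * br Q (x * b₂) * br Q (x * b₃)) -
    (pfT Q b₁ b₂ b₃ x + pfT Q b₂ b₁ b₃ x + pfT Q b₃ b₁ b₂ x)

lemma pfT_symm (b₁ b₂ b₃ x : ℂ) : pfT Q b₁ b₂ b₃ x = pfT Q b₁ b₃ b₂ x := by
  rw [pfT, pfT, mul_comm b₂, mul_comm (br Q (b₂ / b₁))]

lemma pfD_swap (b₁ b₂ b₃ : ℂ) : pfD Q b₁ b₂ b₃ = pfD Q b₂ b₁ b₃ := by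
  ext x
  rw [pfD, pfD, pfT_symm b₃ b₁ b₂]
  ring

lemma pfD_rot (b₁ b₂ b₃ : ℂ) : pfD Q b₁ b₂ b₃ = pfD Q b₃ b₁ b₂ := by
  ext x
  rw [pfD, pfD, pfT_symm b₁ b₂ b₃, pfT_symm b₂ b₁ b₃]
  ring

lemma pfT_analyticAt (hQ0 : Q ≠ 0) (hQ : ‖Q‖ < 1) {b₁ b₂ b₃ x : ℂ} (h1 : b₁ ≠ 0) (h2 : b₂ ≠ 0)
    (h3 : b₃ ≠ 0) (hx : x ≠ 0) (h : Off Q (x * b₁)) : AnalyticAt ℂ (pfT Q b₁ b₂ b₃) x := by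
  have hw : b₁ ^ 2 / (b₂ * b₃) ≠ 0 := by positivity
  have ha : AnalyticAt ℂ (fun x => BB Q (x * b₁) (b₁ ^ 2 / (b₂ * b₃))) x :=
    (BB_analyticAt hQ0 hQ hw (mul_ne_zero hx h1) h).fun_comp (f := fun x => x * b₁) (by fun_prop)
  exact ha.div_const

lemma br_mul_analyticAt (hQ : ‖Q‖ < 1) {b x : ℂ} (hb : b ≠ 0) (hx : x ≠ 0) :
    AnalyticAt ℂ (fun x => br Q (x * b)) x :=
  (br_analyticAt hQ (mul_ne_zero hx hb)).fun_comp (f := fun x => x * b) (by fun_prop)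

lemma pfT_fe (hQ0 : Q ≠ 0) (hQ : ‖Q‖ < 1) {b₁ b₂ b₃ : ℂ} (h1 : b₁ ≠ 0) (h2 : b₂ ≠ 0)
    (h3 : b₃ ≠ 0) : ∃ e2 e1 e0 : ℂ, ∀ x ≠ 0, Off Q (x * b₁) →
      pfT Q b₁ b₂ b₃ (x * Q) = -(b₁ * b₂ * b₃) * x ^ 3 * pfT Q b₁ b₂ b₃ x +
        (e2 * x ^ 2 + e1 * x + e0) := by
  set w := b₁ ^ 2 / (b₂ * b₃) with hw
  have hw0 : w ≠ 0 := by positivity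
  set d := (br Q (b₂ / b₁) * br Q (b₃ / b₁))⁻¹ with hd
  refine ⟨-w⁻¹ * b₁ ^ 2 * Th Q (w * Q⁻¹) * d, -w⁻¹ * b₁ * Th Q (w * Q⁻¹ * Q⁻¹) * d,
    -w⁻¹ * Th Q (w * Q⁻¹ * Q⁻¹ * Q⁻¹) * d, fun x hx ho => ?_⟩
  rw [pfT, pfT, ← hw, div_eq_mul_inv (BB _ _ _), div_eq_mul_inv (BB _ _ _), ← hd, show x * Q * b₁ = x * b₁ * Q by ring,
    BB_fe hQ0 hQ hw0 (mul_ne_zero hx h1) ho]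
  have : b₁ * b₂ * b₃ = w⁻¹ * b₁ ^ 3 := by
    rw [hw]; field_simp
  rw [this]
  ring

lemma pfD_fe (hQ0 : Q ≠ 0) (hQ : ‖Q‖ < 1) {b₁ b₂ b₃ : ℂ} (h1 : b₁ ≠ 0) (h2 : b₂ ≠ 0)
    (h3 : b₃ ≠ 0) : ∃ e2 e1 e0 : ℂ, ∀ x ≠ 0, ∀ᶠ y in 𝓝[≠] x,
      pfD Q b₁ b₂ b₃ (y * Q) = -(b₁ * b₂ * b₃) * y ^ 3 * pfD Q b₁ b₂ b₃ y +
        (e2 * y ^ 2 + e1 * y + e0) := by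
  obtain ⟨r2, r1, r0, hr⟩ := pfT_fe hQ0 hQ h1 h2 h3
  obtain ⟨s2, s1, s0, hs⟩ := pfT_fe hQ0 hQ h2 h1 h3
  obtain ⟨u2, u1, u0, hu⟩ := pfT_fe hQ0 hQ h3 h1 h2
  refine ⟨-(r2 + s2 + u2), -(r1 + s1 + u1), -(r0 + s0 + u0), fun x hx => ?_⟩
  have ev : ∀ b : ℂ, b ≠ 0 → ∀ᶠ y in 𝓝[≠] x, Off Q (y * b) := fun b hb =>
    ((tendsto_mul_punctured hb x).eventually
      (eventually_off_orbit hQ0 hQ (mul_ne_zero hx hb))).mono fun y hy => hy.2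
  filter_upwards [ev b₁ h1, ev b₂ h2, ev b₃ h3, (eventually_off_orbit hQ0 hQ hx)]
    with y y1 y2 y3 hy
  have hy0 := hy.1
  rw [pfD, pfD, hr y hy0 y1, hs y hy0 y2, hu y hy0 y3, show y * Q * b₁ = y * b₁ * Q by ring,
    show y * Q * b₂ = y * b₂ * Q by ring, show y * Q * b₃ = y * b₃ * Q by ring,
    br_mul hQ hQ0 (mul_ne_zero hy0 h1), br_mul hQ hQ0 (mul_ne_zero hy0 h2),
    br_mul hQ hQ0 (mul_ne_zero hy0 h3)]
  have e1 := br_ne hQ0 hQ (mul_ne_zero hy0 h1) y1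
  have e2 := br_ne hQ0 hQ (mul_ne_zero hy0 h2) y2
  have e3 := br_ne hQ0 hQ (mul_ne_zero hy0 h3) y3
  field_simp
  ring

/-- The residues at `x = 1 / b₁` cancel. -/
lemma pfD_rem (hQ0 : Q ≠ 0) (hQ : ‖Q‖ < 1) {b₁ b₂ b₃ : ℂ} (h1 : b₁ ≠ 0) (h2 : b₂ ≠ 0)
    (h3 : b₃ ≠ 0) (o2 : Off Q (b₂ / b₁)) (o3 : Off Q (b₃ / b₁)) : Rem (pfD Q b₁ b₂ b₃) b₁⁻¹ := by
  have hi := inv_ne_zero h1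
  have hc : b₁⁻¹ * b₁ = 1 := inv_mul_cancel₀ h1
  have hw0 : b₁ ^ 2 / (b₂ * b₃) ≠ 0 := by positivity
  have c2 : b₁⁻¹ * b₂ = b₂ / b₁ := by ring
  have c3 : b₁⁻¹ * b₃ = b₃ / b₁ := by ring
  have n2 := br_ne hQ0 hQ (div_ne_zero h2 h1) o2
  have n3 := br_ne hQ0 hQ (div_ne_zero h3 h1) o3
  have hJ : qPochInf Q Q ≠ 0 := poch_ne_zero_of_norm hQ hQ
  have aT2 : AnalyticAt ℂ (pfT Q b₂ b₁ b₃) b₁⁻¹ :=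
    pfT_analyticAt hQ0 hQ h2 h1 h3 hi (by rwa [c2])
  have aT3 : AnalyticAt ℂ (pfT Q b₃ b₁ b₂) b₁⁻¹ :=
    pfT_analyticAt hQ0 hQ h3 h1 h2 hi (by rwa [c3])
  have ah : AnalyticAt ℂ (fun x => brh Q (x * b₁)) b₁⁻¹ :=
    (brh_analyticAt hQ (mul_ne_zero hi h1)).fun_comp (f := fun x => x * b₁) (by fun_prop)
  have aR : AnalyticAt ℂ (fun x => BR Q (x * b₁) (b₁ ^ 2 / (b₂ * b₃))) b₁⁻¹ := by
    have := BR_analyticAt hQ0 hQ hw0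
    rw [← hc] at this
    exact this.fun_comp (f := fun x => x * b₁) (by fun_prop)
  have a2 := br_mul_analyticAt hQ h2 hi
  have a3 := br_mul_analyticAt hQ h3 hi
  have hN : AnalyticAt ℂ (fun x => -b₁⁻¹ * (qPochInf Q Q ^ 2 /
      (brh Q (x * b₁) * br Q (x * b₂) * br Q (x * b₃)) -
      1 / (br Q (b₂ / b₁) * br Q (b₃ / b₁)))) b₁⁻¹ := by
    refine analyticAt_const.mul ((analyticAt_const.div ((ah.mul a2).mul a3) ?_).sub
      analyticAt_const)
    simp only [Pi.mul_apply]
    rw [hc, brh_one, c2, c3]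
    positivity
  have r1 := Rem.of_zero hN (by
    rw [hc, brh_one, c2, c3]
    field_simp
    ring)
  have r2 := Rem.of_analytic ((aR.div_const (c := br Q (b₂ / b₁) * br Q (b₃ / b₁))).add
    (aT2.add aT3))
  refine (r1.sub r2).congr ?_
  have ev := (tendsto_mul_punctured h1 b₁⁻¹).eventually
      (eventually_off_orbit hQ0 hQ (mul_ne_zero hi h1))
  filter_upwards [ev, self_mem_nhdsWithin] with y hy hy1
  have d1 : 1 - y * b₁ ≠ 0 := by
    have := hy.2 0
    rw [zpow_zero, mul_one] at this
    exact sub_ne_zero.2 (Ne.symm this)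
  have d2 : y - b₁⁻¹ = -b₁⁻¹ * (1 - y * b₁) := by
    field_simp
    ring
  rw [pfD, pfT, BB_eq_BR hQ0 hQ hw0 hy.1, br_eq hQ (y * b₁), d2]
  simp only [Pi.add_apply]
  rw [mul_div_mul_left _ _ (neg_ne_zero.2 hi), sub_div, add_div, div_div, div_div, div_div]
  ring_nf

/-- Partial fractions: `pfD` satisfies the functional equation of a cubic theta function up to a
quadratic polynomial, and has no poles. -/
lemma pfD_eventually (hQ0 : Q ≠ 0) (hQ : ‖Q‖ < 1) {b₁ b₂ b₃ : ℂ} (h1 : b₁ ≠ 0) (h2 : b₂ ≠ 0)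
    (h3 : b₃ ≠ 0) (o2 : Off Q (b₂ / b₁)) (o3 : Off Q (b₃ / b₁)) (o4 : Off Q (b₃ / b₂)) :
    ∀ x ≠ 0, ∀ᶠ y in 𝓝[≠] x, pfD Q b₁ b₂ b₃ y = 0 := by
  obtain ⟨e2, e1, e0, he⟩ := pfD_fe hQ0 hQ h1 h2 h3
  have hc : -(b₁ * b₂ * b₃) ≠ 0 := neg_ne_zero.2 (mul_ne_zero (mul_ne_zero h1 h2) h3)
  refine cubic_unique hQ0 hQ hc (fun x hx => ?_) he
  have key : ∀ b : ℂ, b ≠ 0 → Rem (pfD Q b₁ b₂ b₃) b⁻¹ → ¬ Off Q (x * b) →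
      Rem (pfD Q b₁ b₂ b₃) x := fun b hb hr ho => by
    unfold Off at ho
    push Not at ho
    obtain ⟨m, hm⟩ := ho
    have h := hr.orbit hQ0 (inv_ne_zero hb) (u := fun y => -(b₁ * b₂ * b₃) * y ^ 3)
      (p := fun y => e2 * y ^ 2 + e1 * y + e0) (fun x _ => by fun_prop) (fun x _ => by fun_prop)
      (fun x hx => mul_ne_zero hc (pow_ne_zero 3 hx)) he (-m)
    have hx' : b⁻¹ * Q ^ (-m) = x := by
      rw [zpow_neg, ← mul_inv, inv_eq_iff_eq_inv]
      exact eq_inv_of_mul_eq_one_left (by rw [← hm]; ring)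
    rwa [hx'] at h
  by_cases k1 : Off Q (x * b₁)
  swap; · exact key b₁ h1 (pfD_rem hQ0 hQ h1 h2 h3 o2 o3) k1
  by_cases k2 : Off Q (x * b₂)
  swap
  · refine key b₂ h2 ?_ k2
    rw [pfD_swap]
    exact pfD_rem hQ0 hQ h2 h1 h3 o2.div_comm o4
  by_cases k3 : Off Q (x * b₃)
  swap
  · refine key b₃ h3 ?_ k3
    rw [pfD_rot]
    exact pfD_rem hQ0 hQ h3 h1 h2 o3.div_comm o4.div_comm
  refine Rem.of_analytic ?_
  have n1 := br_ne hQ0 hQ (mul_ne_zero hx h1) k1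
  have n2 := br_ne hQ0 hQ (mul_ne_zero hx h2) k2
  have n3 := br_ne hQ0 hQ (mul_ne_zero hx h3) k3
  exact (analyticAt_const.div (((br_mul_analyticAt hQ h1 hx).mul (br_mul_analyticAt hQ h2 hx)).mul
    (br_mul_analyticAt hQ h3 hx)) (mul_ne_zero (mul_ne_zero n1 n2) n3)).sub
    (((pfT_analyticAt hQ0 hQ h1 h2 h3 hx k1).add (pfT_analyticAt hQ0 hQ h2 h1 h3 hx k2)).add
    (pfT_analyticAt hQ0 hQ h3 h1 h2 hx k3))

lemma pfD_eq (hQ0 : Q ≠ 0) (hQ : ‖Q‖ < 1) {b₁ b₂ b₃ : ℂ} (h1 : b₁ ≠ 0) (h2 : b₂ ≠ 0)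
    (h3 : b₃ ≠ 0) (o2 : Off Q (b₂ / b₁)) (o3 : Off Q (b₃ / b₁)) (o4 : Off Q (b₃ / b₂))
    {x : ℂ} (hx : x ≠ 0) (k1 : Off Q (x * b₁)) (k2 : Off Q (x * b₂)) (k3 : Off Q (x * b₃)) :
    pfD Q b₁ b₂ b₃ x = 0 := by
  have n1 := br_ne hQ0 hQ (mul_ne_zero hx h1) k1
  have n2 := br_ne hQ0 hQ (mul_ne_zero hx h2) k2
  have n3 := br_ne hQ0 hQ (mul_ne_zero hx h3) k3
  refine eq_of_eventually_punctured (g := fun _ => 0) (AnalyticAt.continuousAt (𝕜 := ℂ) ?_)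
    continuousAt_const (pfD_eventually hQ0 hQ h1 h2 h3 o2 o3 o4 x hx)
  exact (analyticAt_const.div (((br_mul_analyticAt hQ h1 hx).mul (br_mul_analyticAt hQ h2 hx)).mul
    (br_mul_analyticAt hQ h3 hx)) (mul_ne_zero (mul_ne_zero n1 n2) n3)).sub
    (((pfT_analyticAt hQ0 hQ h1 h2 h3 hx k1).add (pfT_analyticAt hQ0 hQ h2 h1 h3 hx k2)).add
    (pfT_analyticAt hQ0 hQ h3 h1 h2 hx k3))

/-- The logarithmic derivative `x d/dx log [x;Q]`. -/
noncomputable def LL (Q x : ℂ) : ℂ := x * deriv (br Q) x / br Q x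

lemma LL_refl (hQ0 : Q ≠ 0) (hQ : ‖Q‖ < 1) {x : ℂ} (hx : x ≠ 0) : LL Q (Q / x) = -LL Q x := by
  have h1 : HasDerivAt (fun y => br Q (Q / y)) (deriv (br Q) (Q / x) * (-Q / x ^ 2)) x := by
    have h2 : HasDerivAt (fun y : ℂ => Q / y) (-Q / x ^ 2) x := by
      simpa using (hasDerivAt_const x Q).fun_div (hasDerivAt_id x) hx
    exact (br_differentiableAt hQ (div_ne_zero hQ0 hx)).hasDerivAt.comp x h2
  have h2 : (fun y => br Q (Q / y)) = br Q := funext (br_refl hQ0)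
  rw [h2] at h1
  rw [LL, LL, br_refl hQ0, h1.deriv]
  field_simp

lemma deriv_brh_one (hQ : ‖Q‖ < 1) : deriv (brh Q) 1 = 0 := by
  have h1 : HasDerivAt (fun y => brh Q y⁻¹) (deriv (brh Q) 1 * (-(1 ^ 2)⁻¹)) 1 := by
    have h2 := hasDerivAt_inv (one_ne_zero (α := ℂ))
    have h3 := (brh_differentiableAt (Q := Q) hQ (inv_ne_zero (one_ne_zero (α := ℂ)))).hasDerivAt
    have h4 := h3.comp 1 h2
    rwa [inv_one] at h4
  have h2 : (fun y => brh Q y⁻¹) = brh Q := by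
    ext y
    rw [brh, brh, div_inv_eq_mul, mul_comm y⁻¹, ← div_eq_mul_inv, mul_comm Q y]
    ring
  rw [h2] at h1
  have h3 := h1.deriv
  linear_combination h3 / 2

/-- The constant term at `x = 1` of the partial fraction decomposition with `b₁ = 1`. -/
lemma pf_const (hQ0 : Q ≠ 0) (hQ : ‖Q‖ < 1) {b c : ℂ} (hb : b ≠ 0)
    (hc : c ≠ 0) (ob : Off Q b) (oc : Off Q c) (obc : Off Q (c / b)) :
    BR Q 1 (1 / (b * c)) + br Q b * br Q c * (pfT Q b 1 c 1 + pfT Q c 1 b 1) =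
      LL Q b + LL Q c := by
  have h := pfD_eventually hQ0 hQ one_ne_zero hb hc (by rwa [div_one]) (by rwa [div_one]) obc 1
    one_ne_zero
  have hJ : qPochInf Q Q ≠ 0 := poch_ne_zero_of_norm hQ hQ
  have nb := br_ne hQ0 hQ hb ob
  have nc := br_ne hQ0 hQ hc oc
  have hw0 : 1 / (b * c) ≠ 0 := one_div_ne_zero (mul_ne_zero hb hc)
  set F : ℂ → ℂ := fun y => qPochInf Q Q ^ 2 / (brh Q y * br Q (y * b) * br Q (y * c)) with hF
  set G : ℂ → ℂ := fun y => (1 + (1 - y) * BR Q y (1 / (b * c))) / (br Q b * br Q c) +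
    (1 - y) * (pfT Q b 1 c y + pfT Q c 1 b y) with hG
  have hFG : F =ᶠ[𝓝[≠] 1] G := by
    filter_upwards [h, eventually_off_orbit hQ0 hQ one_ne_zero] with y hy hyo
    have d1 : 1 - y ≠ 0 := by
      have := hyo.2 0
      rw [zpow_zero, mul_one] at this
      exact sub_ne_zero.2 (Ne.symm this)
    have h5 : brh Q y ≠ 0 := by
      have := br_ne hQ0 hQ hyo.1 hyo.2
      rw [br_eq hQ] at this
      exact right_ne_zero_of_mul this
    rw [pfD, pfT, mul_one, one_pow, div_one, div_one, BB_eq_BR hQ0 hQ hw0 hyo.1, br_eq hQ y] at hy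
    simp only [hF, hG]
    have e : qPochInf Q Q ^ 2 / (brh Q y * br Q (y * b) * br Q (y * c)) = (1 - y) *
      (qPochInf Q Q ^ 2 / ((1 - y) * brh Q y * br Q (y * b) * br Q (y * c))) := by
      rw [mul_div_assoc', mul_assoc (1 - y), mul_assoc (1 - y), mul_div_mul_left _ _ d1]
    rw [e, sub_eq_zero.1 hy]
    field_simp
    ring
  have aT1 : AnalyticAt ℂ (pfT Q b 1 c) 1 :=
    pfT_analyticAt hQ0 hQ hb one_ne_zero hc one_ne_zero (by rwa [one_mul])
  have aT2 : AnalyticAt ℂ (pfT Q c 1 b) 1 :=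
    pfT_analyticAt hQ0 hQ hc one_ne_zero hb one_ne_zero (by rwa [one_mul])
  have aR := BR_analyticAt hQ0 hQ hw0
  have ah := brh_analyticAt hQ (one_ne_zero (α := ℂ))
  have ab := br_mul_analyticAt hQ hb (one_ne_zero (α := ℂ))
  have ac := br_mul_analyticAt hQ hc (one_ne_zero (α := ℂ))
  have hd0 : brh Q 1 * br Q (1 * b) * br Q (1 * c) ≠ 0 := by
    rw [brh_one, one_mul, one_mul]; positivity
  have aF : AnalyticAt ℂ F 1 := analyticAt_const.div ((ah.mul ab).mul ac) hd0
  have aG : AnalyticAt ℂ G 1 := by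
    refine ((analyticAt_const.add ((analyticAt_const.sub analyticAt_id).mul aR)).div_const).add
      ((analyticAt_const.sub analyticAt_id).mul (aT1.add aT2))
  have hev : F =ᶠ[𝓝 1] G := by
    exact (AnalyticAt.frequently_eq_iff_eventually_eq aF aG).1 hFG.frequently
  have hder := hev.deriv_eq
  have dsub : HasDerivAt (fun y : ℂ => 1 - y) (-1) 1 := by
    simpa using (hasDerivAt_const (1 : ℂ) (1 : ℂ)).fun_sub (hasDerivAt_id 1)
  have hG' : deriv G 1 = -BR Q 1 (1 / (b * c)) / (br Q b * br Q c) -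
      (pfT Q b 1 c 1 + pfT Q c 1 b 1) := by
    have h1 := ((dsub.mul aR.differentiableAt.hasDerivAt).const_add 1).div_const (br Q b * br Q c)
    have h2 := dsub.mul (aT1.add aT2).differentiableAt.hasDerivAt
    have h3 := (h1.add h2).deriv
    refine h3.trans ?_
    simp only [Pi.add_apply]
    ring
  have hb' : HasDerivAt (fun y => br Q (y * b)) (deriv (br Q) b * b) 1 := by
    have h2 : HasDerivAt (fun y : ℂ => y * b) b 1 := by simpa using (hasDerivAt_id 1).mul_const b
    have h3 := (br_differentiableAt (Q := Q) hQ (x := 1 * b) (by simpa)).hasDerivAt.comp 1 h2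
    rwa [one_mul] at h3
  have hc' : HasDerivAt (fun y => br Q (y * c)) (deriv (br Q) c * c) 1 := by
    have h2 : HasDerivAt (fun y : ℂ => y * c) c 1 := by simpa using (hasDerivAt_id 1).mul_const c
    have h3 := (br_differentiableAt (Q := Q) hQ (x := 1 * c) (by simpa)).hasDerivAt.comp 1 h2
    rwa [one_mul] at h3
  have hh' : HasDerivAt (brh Q) 0 1 := by
    rw [← deriv_brh_one hQ]; exact ah.differentiableAt.hasDerivAt
  have hF' : deriv F 1 = -(LL Q b + LL Q c) / (br Q b * br Q c) := by
    have h3 := ((hasDerivAt_const (1 : ℂ) (qPochInf Q Q ^ 2)).div ((hh'.mul hb').mul hc') hd0).deriv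
    refine h3.trans ?_
    simp only [Pi.mul_apply, one_mul, brh_one, LL]
    field_simp
    ring
  rw [hF', hG'] at hder
  field_simp at hder
  linear_combination hder

end RankFive

/-! ### Partial fractions at modulus `t ^ 5` -/

namespace RankFive

open Filter Topology

variable {q Q t : ℂ}

lemma pow_five_ne (ht0 : t ≠ 0) : t ^ 5 ≠ 0 := pow_ne_zero 5 ht0

lemma norm_pow_five (ht : ‖t‖ < 1) : ‖t ^ 5‖ < 1 := by
  rw [norm_pow]; exact pow_lt_one₀ (norm_nonneg t) ht (by norm_num)

lemma off_pow (ht0 : t ≠ 0) (ht : ‖t‖ < 1) {k : ℕ} (hk : ¬ 5 ∣ k) : Off (t ^ 5) (t ^ k) := by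
  intro m hm
  have h1 : ‖t‖ ^ ((k : ℤ) + 5 * m) = 1 := by
    have := congrArg norm hm
    rw [norm_mul, norm_zpow, norm_pow, norm_pow, norm_one] at this
    rw [zpow_add₀ (norm_ne_zero_iff.2 ht0), zpow_mul]
    exact_mod_cast this
  have h2 := (zpow_eq_one_iff_right₀ (norm_nonneg t) ht.ne).1 h1
  omega

lemma off_one (ht0 : t ≠ 0) (ht : ‖t‖ < 1) : Off (t ^ 5) t := by
  simpa using off_pow ht0 ht (k := 1) (by norm_num)

lemma br_t_ne (ht0 : t ≠ 0) (ht : ‖t‖ < 1) : br (t ^ 5) t ≠ 0 :=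
  br_ne (pow_five_ne ht0) (norm_pow_five ht) ht0 (off_one ht0 ht)

lemma br_t2_ne (ht0 : t ≠ 0) (ht : ‖t‖ < 1) : br (t ^ 5) (t ^ 2) ≠ 0 :=
  br_ne (pow_five_ne ht0) (norm_pow_five ht) (pow_ne_zero 2 ht0) (off_pow ht0 ht (by norm_num))

lemma br_t3 (ht0 : t ≠ 0) : br (t ^ 5) (t ^ 3) = br (t ^ 5) (t ^ 2) := by
  rw [← br_refl (pow_five_ne ht0) (t ^ 2)]
  congr 1
  field_simp

lemma br_t4 (ht0 : t ≠ 0) : br (t ^ 5) (t ^ 4) = br (t ^ 5) t := by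
  rw [← br_refl (pow_five_ne ht0) t]
  congr 1
  field_simp

lemma BB_t4 (ht0 : t ≠ 0) : BB (t ^ 5) (t ^ 4) (t ^ 5) = (t ^ 4)⁻¹ * BB (t ^ 5) t 1 := by
  have h := BB_shift (pow_five_ne ht0) (w := t ^ 5) (pow_five_ne ht0) t⁻¹
  rw [show t⁻¹ * t ^ 5 = t ^ 4 by field_simp] at h
  rw [h, BB_inv (pow_five_ne ht0) ht0 1]
  field_simp

lemma BB_t3 (ht0 : t ≠ 0) : BB (t ^ 5) (t ^ 3) (t ^ 5) = (t ^ 3)⁻¹ * BB (t ^ 5) (t ^ 2) 1 := by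
  have h := BB_shift (pow_five_ne ht0) (w := t ^ 5) (pow_five_ne ht0) (t ^ 2)⁻¹
  rw [show (t ^ 2)⁻¹ * t ^ 5 = t ^ 3 by field_simp] at h
  rw [h, BB_inv (pow_five_ne ht0) (pow_ne_zero 2 ht0) 1]
  field_simp

lemma BB_t3' (ht0 : t ≠ 0) :
    BB (t ^ 5) (t ^ 3) (t ^ 3) = t⁻¹ * BB (t ^ 5) (t ^ 2) (t ^ 2) := by
  have h := BB_shift (pow_five_ne ht0) (w := t ^ 3) (pow_ne_zero 3 ht0) (t ^ 2)⁻¹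
  rw [show (t ^ 2)⁻¹ * t ^ 5 = t ^ 3 by field_simp] at h
  rw [h, BB_inv (pow_five_ne ht0) (pow_ne_zero 2 ht0) (t ^ 2)]
  field_simp

/-- Partial fractions for `1 / ([t][t²][t⁴])`. -/
lemma pf_i (ht0 : t ≠ 0) (ht : ‖t‖ < 1) :
    qPochInf (t ^ 5) (t ^ 5) ^ 2 / br (t ^ 5) t = BB (t ^ 5) t (t ^ 4)⁻¹ -
      t * BB (t ^ 5) (t ^ 2) t⁻¹ +
      t * BB (t ^ 5) t 1 * (br (t ^ 5) t / br (t ^ 5) (t ^ 2)) := by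
  have hQ0 := pow_five_ne ht0
  have hQ := norm_pow_five ht
  have h := pfD_eq hQ0 hQ one_ne_zero ht0 (pow_ne_zero 3 ht0) (by simpa using off_one ht0 ht)
    (by simpa using off_pow ht0 ht (k := 3) (by norm_num))
    (by rw [show t ^ 3 / t = t ^ 2 by field_simp]; exact off_pow ht0 ht (by norm_num)) ht0
    (by simpa using off_one ht0 ht)
    (by rw [← pow_two]; exact off_pow ht0 ht (by norm_num))
    (by rw [show t * t ^ 3 = t ^ 4 by ring]; exact off_pow ht0 ht (by norm_num))
  have n1 := br_t_ne ht0 ht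
  have n2 := br_t2_ne ht0 ht
  rw [pfD, pfT, pfT, pfT, show t * t ^ 3 = t ^ 4 by ring, show t * t = t ^ 2 by ring,
    show (1 : ℂ) ^ 2 / t ^ 4 = (t ^ 4)⁻¹ by simp, show t ^ 2 / (1 * t ^ 3) = t⁻¹ by field_simp,
    show (t ^ 3) ^ 2 / (1 * t) = t ^ 5 by field_simp, mul_one, div_one, div_one,
    show t ^ 3 / t = t ^ 2 by field_simp, show t / t ^ 3 = (t ^ 2)⁻¹ by field_simp, one_div,
    one_div, br_inv hQ ht0, br_inv hQ (pow_ne_zero 2 ht0), br_inv hQ (pow_ne_zero 3 ht0),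
    br_t3 ht0, br_t4 ht0, BB_t4 ht0] at h
  field_simp at h ⊢
  linear_combination h

/-- Partial fractions for `1 / ([t][t²][t³])`. -/
lemma pf_ii (ht0 : t ≠ 0) (ht : ‖t‖ < 1) :
    qPochInf (t ^ 5) (t ^ 5) ^ 2 / br (t ^ 5) (t ^ 2) = BB (t ^ 5) t (t ^ 3)⁻¹ +
      t ^ 2 * BB (t ^ 5) (t ^ 2) (t ^ 2) -
      t * BB (t ^ 5) (t ^ 2) 1 * (br (t ^ 5) (t ^ 2) / br (t ^ 5) t) := by
  have hQ0 := pow_five_ne ht0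
  have hQ := norm_pow_five ht
  have h := pfD_eq hQ0 hQ one_ne_zero ht0 (pow_ne_zero 2 ht0) (by simpa using off_one ht0 ht)
    (by simpa using off_pow ht0 ht (k := 2) (by norm_num))
    (by rw [show t ^ 2 / t = t by field_simp]; exact off_one ht0 ht) ht0
    (by simpa using off_one ht0 ht)
    (by rw [← pow_two]; exact off_pow ht0 ht (by norm_num))
    (by rw [show t * t ^ 2 = t ^ 3 by ring]; exact off_pow ht0 ht (by norm_num))
  have n1 := br_t_ne ht0 ht
  have n2 := br_t2_ne ht0 ht
  rw [pfD, pfT, pfT, pfT, show t * t ^ 2 = t ^ 3 by ring, show t * t = t ^ 2 by ring,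
    show (1 : ℂ) ^ 2 / t ^ 3 = (t ^ 3)⁻¹ by simp, show t ^ 2 / (1 * t ^ 2) = 1 by field_simp,
    show (t ^ 2) ^ 2 / (1 * t) = t ^ 3 by field_simp, mul_one, div_one, div_one,
    show t ^ 2 / t = t by field_simp, show t / t ^ 2 = t⁻¹ by field_simp, one_div,
    one_div, br_inv hQ ht0, br_inv hQ (pow_ne_zero 2 ht0),
    br_t3 ht0, BB_t3' ht0] at h
  field_simp at h ⊢
  linear_combination h

/-- The constant term of the partial fractions at `x = 1` for `1 / ([x][x t][x t²])`. -/
lemma pf_iii (ht0 : t ≠ 0) (ht : ‖t‖ < 1) :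
    BR (t ^ 5) 1 (t ^ 3)⁻¹ - t * BB (t ^ 5) t 1 * (br (t ^ 5) (t ^ 2) / br (t ^ 5) t) +
      t ^ 3 * BB (t ^ 5) (t ^ 2) (t ^ 3) = LL (t ^ 5) t + LL (t ^ 5) (t ^ 2) := by
  have hQ0 := pow_five_ne ht0
  have hQ := norm_pow_five ht
  have n1 := br_t_ne ht0 ht
  have n2 := br_t2_ne ht0 ht
  rw [← pf_const hQ0 hQ ht0 (pow_ne_zero 2 ht0) (off_one ht0 ht) (off_pow ht0 ht (by norm_num))
    (by rw [show t ^ 2 / t = t by field_simp]; exact off_one ht0 ht)]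
  rw [pfT, pfT, show 1 / (t * t ^ 2) = (t ^ 3)⁻¹ by field_simp,
    show t ^ 2 / (1 * t ^ 2) = 1 by field_simp,
    show (t ^ 2) ^ 2 / (1 * t) = t ^ 3 by field_simp, one_mul, one_mul, one_div, one_div,
    show t ^ 2 / t = t by field_simp, show t / t ^ 2 = t⁻¹ by field_simp,
    br_inv hQ ht0, br_inv hQ (pow_ne_zero 2 ht0)]
  field_simp
  ring

/-- The constant term of the partial fractions at `x = 1` for `1 / ([x][x t][x t³])`. -/
lemma pf_iv (ht0 : t ≠ 0) (ht : ‖t‖ < 1) :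
    BR (t ^ 5) 1 (t ^ 4)⁻¹ - t * BB (t ^ 5) t t⁻¹ +
      t ^ 2 * BB (t ^ 5) (t ^ 2) 1 * (br (t ^ 5) t / br (t ^ 5) (t ^ 2)) =
      LL (t ^ 5) t - LL (t ^ 5) (t ^ 2) := by
  have hQ0 := pow_five_ne ht0
  have hQ := norm_pow_five ht
  have n1 := br_t_ne ht0 ht
  have n2 := br_t2_ne ht0 ht
  have h3 : LL (t ^ 5) (t ^ 3) = -LL (t ^ 5) (t ^ 2) := by
    rw [← LL_refl hQ0 hQ (pow_ne_zero 2 ht0)]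
    congr 1
    field_simp
  rw [sub_eq_add_neg (LL _ _), ← h3,
    ← pf_const hQ0 hQ ht0 (pow_ne_zero 3 ht0) (off_one ht0 ht) (off_pow ht0 ht (by norm_num))
    (by rw [show t ^ 3 / t = t ^ 2 by field_simp]; exact off_pow ht0 ht (by norm_num))]
  rw [pfT, pfT, show 1 / (t * t ^ 3) = (t ^ 4)⁻¹ by field_simp,
    show t ^ 2 / (1 * t ^ 3) = t⁻¹ by field_simp,
    show (t ^ 3) ^ 2 / (1 * t) = t ^ 5 by field_simp, one_mul, one_mul, one_div, one_div,
    show t ^ 3 / t = t ^ 2 by field_simp, show t / t ^ 3 = (t ^ 2)⁻¹ by field_simp,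
    br_inv hQ ht0, br_inv hQ (pow_ne_zero 3 ht0), br_inv hQ (pow_ne_zero 2 ht0), br_t3 ht0,
    BB_t3 ht0]
  field_simp
  ring

end RankFive

/-! ### The three-term relation and its logarithmic derivatives -/

namespace RankFive

open Filter Topology

variable {q Q t : ℂ}

lemma tri_sum_even (k l : ℤ) : tri (k + l) + tri (k - l) = 2 * tri k + (2 * tri l + l) := by
  have h1 := two_mul_tri (k + l)
  have h2 := two_mul_tri (k - l)
  have h3 := two_mul_tri k
  have h4 := two_mul_tri l
  nlinarith

lemma tri_sum_odd (k l : ℤ) :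
    tri (k + l + 1) + tri (k - l) = (2 * tri k + k) + (2 * tri l + 2 * l) := by
  have h1 := two_mul_tri (k + l + 1)
  have h2 := two_mul_tri (k - l)
  have h3 := two_mul_tri k
  have h4 := two_mul_tri l
  nlinarith

/-- The theta series `∑ Q^{k²} x^{2k}`. -/
noncomputable def thb (Q x : ℂ) : ℂ := ∑' k : ℤ, Q ^ (2 * tri k + k) * x ^ (2 * k)

/-- The theta series `∑ Q^{k²+k} x^{2k+1}`. -/
noncomputable def thd (Q x : ℂ) : ℂ := ∑' k : ℤ, Q ^ (2 * tri k + 2 * k) * x ^ (2 * k + 1)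

lemma summable_quad (hQ0 : Q ≠ 0) (hQ : ‖Q‖ < 1) {x : ℂ} (hx : x ≠ 0) (a b : ℤ) :
    Summable (fun k : ℤ => ‖Q ^ (2 * tri k + a * k) * x ^ (2 * k + b)‖) := by
  have h1 := norm_pos_iff.2 hQ0
  have h2 := norm_pos_iff.2 hx
  have h := (summable_gauss (r := ‖Q‖ ^ 2) (s := ‖Q‖ ^ a * ‖x‖ ^ 2) (by positivity)
    (pow_lt_one₀ h1.le hQ two_ne_zero) (by positivity)).mul_right (‖x‖ ^ b)
  refine h.congr fun k => ?_
  rw [norm_mul, norm_zpow, norm_zpow, zpow_add₀ h1.ne', zpow_add₀ h2.ne', mul_zpow, zpow_mul,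
    zpow_mul, zpow_mul]
  norm_cast
  ring

lemma summable_thb (hQ0 : Q ≠ 0) (hQ : ‖Q‖ < 1) {x : ℂ} (hx : x ≠ 0) :
    Summable (fun k : ℤ => ‖Q ^ (2 * tri k + k) * x ^ (2 * k)‖) := by
  simpa using summable_quad hQ0 hQ hx 1 0

lemma summable_thd (hQ0 : Q ≠ 0) (hQ : ‖Q‖ < 1) {x : ℂ} (hx : x ≠ 0) :
    Summable (fun k : ℤ => ‖Q ^ (2 * tri k + 2 * k) * x ^ (2 * k + 1)‖) :=
  summable_quad hQ0 hQ hx 2 1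

/-- Pairs of integers with even, respectively odd, sum. -/
noncomputable def parityEquiv : (ℤ × ℤ) ⊕ (ℤ × ℤ) ≃ ℤ × ℤ :=
  Equiv.ofBijective
    (Sum.elim (fun p => (p.1 + p.2, p.1 - p.2)) (fun p => (p.1 + p.2 + 1, p.1 - p.2))) (by
    constructor
    · rintro (⟨a, b⟩ | ⟨a, b⟩) (⟨c, d⟩ | ⟨c, d⟩) h <;>
        simp only [Sum.elim_inl, Sum.elim_inr, Prod.mk.injEq] at h
      · have : a = c ∧ b = d := by omega
        rw [this.1, this.2]
      · omega
      · omega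
      · have : a = c ∧ b = d := by omega
        rw [this.1, this.2]
    · rintro ⟨m, n⟩
      rcases Int.even_or_odd' (m + n) with ⟨k, h | h⟩
      · exact ⟨Sum.inl (k, k - n), by simp only [Sum.elim_inl, Prod.mk.injEq]; omega⟩
      · exact ⟨Sum.inr (k, k - n), by simp only [Sum.elim_inr, Prod.mk.injEq]; omega⟩)

lemma parityEquiv_inl (k l : ℤ) : parityEquiv (Sum.inl (k, l)) = (k + l, k - l) := rfl

lemma parityEquiv_inr (k l : ℤ) : parityEquiv (Sum.inr (k, l)) = (k + l + 1, k - l) := rfl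

lemma neg_one_zpow_two_mul (k : ℤ) : (-1 : ℂ) ^ (2 * k) = 1 := by
  rw [zpow_mul]; norm_num

/-- The product formula behind the three-term relation: `[xy][x/y]` is, up to the factor `x`, a
two-by-two determinant in theta series of `x` and of `y`. -/
lemma th_mul_th (hQ0 : Q ≠ 0) (hQ : ‖Q‖ < 1) {x y : ℂ} (hx : x ≠ 0) (hy : y ≠ 0) :
    th Q (x * y) * th Q (x / y) = x * (thd Q x * thb Q y - thb Q x * thd Q y) := by
  have s1 := summable_th hQ0 hQ (mul_ne_zero hx hy)
  have s2 := summable_th hQ0 hQ (div_ne_zero hx hy)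
  have h1 : HasSum (fun p : ℤ × ℤ => ((-1) ^ p.1 * Q ^ tri p.1 * (x * y) ^ p.1) *
      ((-1) ^ p.2 * Q ^ tri p.2 * (x / y) ^ p.2)) (th Q (x * y) * th Q (x / y)) := by
    unfold th
    rw [tsum_mul_tsum_of_summable_norm s1 s2]
    exact (summable_mul_of_summable_norm s1 s2).hasSum
  rw [← parityEquiv.hasSum_iff] at h1
  have hshift : ∑' k : ℤ, Q ^ (2 * tri k) * x ^ (2 * k) = x * thd Q x := by
    rw [← (Equiv.addRight (1 : ℤ)).tsum_eq, thd, ← tsum_mul_left]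
    refine tsum_congr fun k => ?_
    simp only [Equiv.coe_addRight]
    rw [tri_add_one, show 2 * (k + 1) = (2 * k + 1) + 1 by ring, zpow_add_one₀ hx, mul_add]
    ring
  have hshifts : Summable (fun k : ℤ => ‖Q ^ (2 * tri k) * x ^ (2 * k)‖) := by
    simpa using summable_quad hQ0 hQ hx 0 0
  have e1 : HasSum (fun p : ℤ × ℤ => (Q ^ (2 * tri p.1) * x ^ (2 * p.1)) *
      (Q ^ (2 * tri p.2 + p.2) * y ^ (2 * p.2))) (x * thd Q x * thb Q y) := by
    rw [← hshift, thb, tsum_mul_tsum_of_summable_norm hshifts (summable_thb hQ0 hQ hy)]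
    exact (summable_mul_of_summable_norm hshifts (summable_thb hQ0 hQ hy)).hasSum
  have e2 : HasSum (fun p : ℤ × ℤ => (-(Q ^ (2 * tri p.1 + p.1) * x ^ (2 * p.1))) *
      (Q ^ (2 * tri p.2 + 2 * p.2) * y ^ (2 * p.2 + 1)) * x) (-thb Q x * thd Q y * x) := by
    have h2 : HasSum (fun p : ℤ × ℤ => ((Q ^ (2 * tri p.1 + p.1) * x ^ (2 * p.1))) *
        (Q ^ (2 * tri p.2 + 2 * p.2) * y ^ (2 * p.2 + 1))) (thb Q x * thd Q y) := by
      rw [thb, thd, tsum_mul_tsum_of_summable_norm (summable_thb hQ0 hQ hx)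
        (summable_thd hQ0 hQ hy)]
      exact (summable_mul_of_summable_norm (summable_thb hQ0 hQ hx)
        (summable_thd hQ0 hQ hy)).hasSum
    simpa using (h2.neg).mul_right x
  have h2 := HasSum.sum (f := (fun p : ℤ × ℤ => ((-1) ^ p.1 * Q ^ tri p.1 * (x * y) ^ p.1) *
      ((-1) ^ p.2 * Q ^ tri p.2 * (x / y) ^ p.2)) ∘ parityEquiv)
      (a := x * thd Q x * thb Q y) (b := -thb Q x * thd Q y * x)
      (e1.congr_fun ?_) (e2.congr_fun ?_)
  · rw [h1.unique h2]
    ring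
  all_goals
    rintro ⟨k, l⟩
  · simp only [Function.comp, parityEquiv_inl]
    have h3 : (Q ^ tri (k + l)) * Q ^ tri (k - l) = Q ^ (2 * tri k) * Q ^ (2 * tri l + l) := by
      rw [← zpow_add₀ hQ0, ← zpow_add₀ hQ0, tri_sum_even]
    have h4 : (-1 : ℂ) ^ (k + l) * (-1) ^ (k - l) = 1 := by
      rw [← zpow_add₀ (by norm_num), show k + l + (k - l) = 2 * k by ring, neg_one_zpow_two_mul]
    have h5 : (x * y) ^ (k + l) * (x / y) ^ (k - l) = x ^ (2 * k) * y ^ (2 * l) := by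
      rw [mul_zpow, div_eq_mul_inv, mul_zpow, inv_zpow', show 2 * k = (k + l) + (k - l) by ring,
        show 2 * l = (k + l) + -(k - l) by ring, zpow_add₀ hx (k + l) (k - l),
        zpow_add₀ hy (k + l) (-(k - l))]
      ring
    linear_combination (-1 : ℂ) ^ (k + l) * (-1) ^ (k - l) * ((x * y) ^ (k + l) *
      (x / y) ^ (k - l)) * h3 + Q ^ (2 * tri k) * Q ^ (2 * tri l + l) * ((x * y) ^ (k + l) *
      (x / y) ^ (k - l)) * h4 + Q ^ (2 * tri k) * Q ^ (2 * tri l + l) * h5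
  · simp only [Function.comp, parityEquiv_inr]
    have h3 : (Q ^ tri (k + l + 1)) * Q ^ tri (k - l) =
        Q ^ (2 * tri k + k) * Q ^ (2 * tri l + 2 * l) := by
      rw [← zpow_add₀ hQ0, ← zpow_add₀ hQ0, tri_sum_odd]
    have h4 : (-1 : ℂ) ^ (k + l + 1) * (-1) ^ (k - l) = -1 := by
      rw [← zpow_add₀ (by norm_num), show k + l + 1 + (k - l) = 2 * k + 1 by ring,
        neg_one_zpow_add_one, neg_one_zpow_two_mul]
    have h5 : (x * y) ^ (k + l + 1) * (x / y) ^ (k - l) = x ^ (2 * k) * x * y ^ (2 * l + 1) := by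
      rw [mul_zpow, div_eq_mul_inv, mul_zpow, inv_zpow', ← zpow_add_one₀ hx,
        show 2 * k + 1 = (k + l + 1) + (k - l) by ring,
        show 2 * l + 1 = (k + l + 1) + -(k - l) by ring, zpow_add₀ hx (k + l + 1) (k - l),
        zpow_add₀ hy (k + l + 1) (-(k - l))]
      ring
    linear_combination (-1 : ℂ) ^ (k + l + 1) * (-1) ^ (k - l) * ((x * y) ^ (k + l + 1) *
      (x / y) ^ (k - l)) * h3 + Q ^ (2 * tri k + k) * Q ^ (2 * tri l + 2 * l) *
      ((x * y) ^ (k + l + 1) * (x / y) ^ (k - l)) * h4 -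
      Q ^ (2 * tri k + k) * Q ^ (2 * tri l + 2 * l) * h5

/-- The three-term relation for theta functions. -/
lemma br_three_term (hQ0 : Q ≠ 0) (hQ : ‖Q‖ < 1) {a b c d : ℂ} (ha : a ≠ 0) (hb : b ≠ 0)
    (hc : c ≠ 0) (hd : d ≠ 0) :
    b * (br Q (a * b) * br Q (a / b) * (br Q (c * d) * br Q (c / d))) -
      c * (br Q (a * c) * br Q (a / c) * (br Q (b * d) * br Q (b / d))) +
      c * (br Q (a * d) * br Q (a / d) * (br Q (b * c) * br Q (b / c))) = 0 := by
  set J := qPochInf Q Q with hJd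
  have hJ : J ≠ 0 := poch_ne_zero_of_norm hQ hQ
  have key : ∀ x ≠ 0, ∀ y ≠ 0, J ^ 2 * (br Q (x * y) * br Q (x / y)) =
      x * (thd Q x * thb Q y - thb Q x * thd Q y) := fun x hx y hy => by
    rw [← th_mul_th hQ0 hQ hx hy, jacobi hQ0 hQ (mul_ne_zero hx hy),
      jacobi hQ0 hQ (div_ne_zero hx hy)]
    ring
  have hJ4 : J ^ 2 * J ^ 2 ≠ 0 := by positivity
  refine (mul_eq_zero.1 ?_).resolve_left hJ4
  have e : ∀ P₁ P₂ P₃ P₄ P₅ P₆ : ℂ, J ^ 2 * J ^ 2 * (b * (P₁ * P₂) - c * (P₃ * P₄) + c * (P₅ * P₆))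
      = b * ((J ^ 2 * P₁) * (J ^ 2 * P₂)) - c * ((J ^ 2 * P₃) * (J ^ 2 * P₄)) +
        c * ((J ^ 2 * P₅) * (J ^ 2 * P₆)) := by intros; ring
  rw [e, key a ha b hb, key c hc d hd, key a ha c hc, key b hb d hd, key a ha d hd, key b hb c hc]
  ring

lemma hasDerivAt_br_mul (hQ : ‖Q‖ < 1) {b : ℂ} (hb : b ≠ 0) (h : br Q b ≠ 0) :
    HasDerivAt (fun y => br Q (y * b)) (br Q b * LL Q b) 1 := by
  have h2 : HasDerivAt (fun y : ℂ => y * b) b 1 := by simpa using (hasDerivAt_id 1).mul_const b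
  have h3 := (br_differentiableAt (Q := Q) hQ (x := 1 * b) (by simpa)).hasDerivAt.comp 1 h2
  rw [one_mul] at h3
  have e : br Q b * LL Q b = deriv (br Q) b * b := by
    rw [LL]
    field_simp
  rw [e]
  exact h3

lemma hasDerivAt_br_div (hQ : ‖Q‖ < 1) {b : ℂ} (hb : b ≠ 0) (h : br Q b ≠ 0) :
    HasDerivAt (fun y => br Q (b / y)) (-(br Q b * LL Q b)) 1 := by
  have h2 : HasDerivAt (fun y : ℂ => b / y) (-b) 1 := by
    simpa using (hasDerivAt_const (1 : ℂ) b).fun_div (hasDerivAt_id 1) one_ne_zero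
  have h3 := (br_differentiableAt (Q := Q) hQ (x := b / 1) (by simpa)).hasDerivAt.comp 1 h2
  rw [div_one] at h3
  have e : -(br Q b * LL Q b) = deriv (br Q) b * -b := by
    rw [LL]
    field_simp
  rw [e]
  exact h3

lemma hasDerivAt_br_sq (hQ : ‖Q‖ < 1) :
    HasDerivAt (fun y => br Q (y ^ 2)) (-2 * qPochInf Q Q ^ 2) 1 := by
  have h1 : HasDerivAt (br Q) (-qPochInf Q Q ^ 2) (1 ^ 2) := by
    have h2 : HasDerivAt (fun y : ℂ => 1 - y) (-1) 1 := by
      simpa using (hasDerivAt_const (1 : ℂ) (1 : ℂ)).fun_sub (hasDerivAt_id 1)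
    have h3 := h2.mul (brh_differentiableAt (Q := Q) hQ one_ne_zero).hasDerivAt
    have h4 : br Q = (fun y : ℂ => 1 - y) * brh Q := funext (br_eq hQ)
    rw [← h4] at h3
    rw [one_pow]
    have e : -qPochInf Q Q ^ 2 = -1 * brh Q 1 + (1 - 1) * deriv (brh Q) 1 := by
      rw [brh_one]
      ring
    rw [e]
    exact h3
  have h2 : HasDerivAt (fun y : ℂ => y ^ 2) 2 1 := by simpa using hasDerivAt_pow 2 (1 : ℂ)
  have e : -2 * qPochInf Q Q ^ 2 = -qPochInf Q Q ^ 2 * 2 := by ring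
  rw [e]
  exact h1.comp 1 h2

lemma br_div_swap (hQ : ‖Q‖ < 1) {x y : ℂ} (hx : x ≠ 0) (hy : y ≠ 0) :
    br Q (x / y) = -(x / y) * br Q (y / x) := by
  rw [← inv_div y x, br_inv hQ (div_ne_zero hy hx), inv_div]

/-- A relation between logarithmic derivatives, obtained by differentiating at `x = 1` the
three-term relation for `[xt]³[xt²] - x²[t/x]³[t²/x]`. -/
lemma theta_one (ht0 : t ≠ 0) (ht : ‖t‖ < 1) :
    3 * LL (t ^ 5) t + LL (t ^ 5) (t ^ 2) - 1 =
      -(qPochInf (t ^ 5) (t ^ 5) ^ 2 * br (t ^ 5) (t ^ 2) ^ 2 / br (t ^ 5) t ^ 3) := by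
  have hQ0 := pow_five_ne ht0
  have hQ := norm_pow_five ht
  have n1 := br_t_ne ht0 ht
  have n2 := br_t2_ne ht0 ht
  have t2 := pow_ne_zero 2 ht0
  have key : ∀ x ≠ 0, br (t ^ 5) (x * t) ^ 3 * br (t ^ 5) (x * t ^ 2) -
      x ^ 2 * br (t ^ 5) (t / x) ^ 3 * br (t ^ 5) (t ^ 2 / x) =
      br (t ^ 5) (x ^ 2) * br (t ^ 5) (t ^ 2) ^ 3 := fun x hx => by
    have h := br_three_term hQ0 hQ (mul_ne_zero hx ht0) (div_ne_zero hx ht0) t2 one_ne_zero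
    have e1 : br (t ^ 5) (x * t ^ 3) = br (t ^ 5) (t ^ 2 / x) := by
      rw [← br_refl hQ0 (t ^ 2 / x)]
      congr 1
      field_simp
    have e2 : br (t ^ 5) (x / t ^ 3) = -(x / t ^ 3) * br (t ^ 5) (x * t ^ 2) := by
      have h1 := br_mul hQ hQ0 (x := x / t ^ 3) (by positivity)
      rw [show x / t ^ 3 * t ^ 5 = x * t ^ 2 by field_simp] at h1
      rw [h1]
      field_simp
    rw [show x * t * (x / t) = x ^ 2 by field_simp, show x * t / (x / t) = t ^ 2 by field_simp,
      show x * t * t ^ 2 = x * t ^ 3 by ring, show x * t / t ^ 2 = x / t by field_simp,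
      show x / t * t ^ 2 = x * t by field_simp, show x / t / t ^ 2 = x / t ^ 3 by field_simp,
      mul_one, mul_one, div_one, div_one, mul_one, div_one, e1, e2, br_div_swap hQ hx ht0] at h
    field_simp at h
    rw [mul_zero] at h
    linear_combination -(mul_eq_zero.1 h).resolve_left hx
  have d1 := hasDerivAt_br_mul hQ ht0 n1
  have d2 := hasDerivAt_br_mul hQ t2 n2
  have d3 := hasDerivAt_br_div hQ ht0 n1
  have d4 := hasDerivAt_br_div hQ t2 n2
  have d5 : HasDerivAt (fun y : ℂ => y ^ 2) 2 1 := by simpa using hasDerivAt_pow 2 (1 : ℂ)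
  have dl := ((d1.fun_pow 3).fun_mul d2).fun_sub ((d5.fun_mul (d3.fun_pow 3)).fun_mul d4)
  have dr := (hasDerivAt_br_sq hQ).mul_const (br (t ^ 5) (t ^ 2) ^ 3)
  have hev := (continuousAt_id.eventually_ne (one_ne_zero (α := ℂ))).mono fun x hx => key x hx
  have h := (dr.congr_of_eventuallyEq hev).unique dl
  simp only [one_mul, div_one] at h
  field_simp
  refine mul_left_cancel₀ (mul_ne_zero (two_ne_zero (α := ℂ)) n2) ?_
  norm_num at h
  linear_combination -h

/-- The companion of `theta_one`, from the three-term relation for `[xt][t²/x]³ - [xt²]³[t/x]`. -/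
lemma theta_two (ht0 : t ≠ 0) (ht : ‖t‖ < 1) :
    3 * LL (t ^ 5) (t ^ 2) - LL (t ^ 5) t =
      t * qPochInf (t ^ 5) (t ^ 5) ^ 2 * br (t ^ 5) t ^ 2 / br (t ^ 5) (t ^ 2) ^ 3 := by
  have hQ0 := pow_five_ne ht0
  have hQ := norm_pow_five ht
  have n1 := br_t_ne ht0 ht
  have n2 := br_t2_ne ht0 ht
  have t2 := pow_ne_zero 2 ht0
  have key : ∀ x ≠ 0, br (t ^ 5) (x * t) * br (t ^ 5) (t ^ 2 / x) ^ 3 -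
      br (t ^ 5) (x * t ^ 2) ^ 3 * br (t ^ 5) (t / x) =
      t / x * br (t ^ 5) (x ^ 2) * br (t ^ 5) t ^ 3 := fun x hx => by
    have h := br_three_term hQ0 hQ (mul_ne_zero hx t2) (div_ne_zero hx t2)
      (pow_ne_zero 4 ht0) one_ne_zero
    have e1 : br (t ^ 5) (x * t ^ 6) = -(x * t)⁻¹ * br (t ^ 5) (x * t) := by
      rw [← br_mul hQ hQ0 (mul_ne_zero hx ht0)]
      congr 1
      ring
    have e2 : br (t ^ 5) (x / t ^ 6) = x ^ 2 / t ^ 7 * br (t ^ 5) (t / x) := by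
      have h1 := br_mul hQ hQ0 (x := x / t ^ 6) (by positivity)
      rw [show x / t ^ 6 * t ^ 5 = x / t by field_simp, br_div_swap hQ hx ht0] at h1
      field_simp at h1 ⊢
      linear_combination h1
    rw [show x * t ^ 2 * (x / t ^ 2) = x ^ 2 by field_simp,
      show x * t ^ 2 / (x / t ^ 2) = t ^ 4 by field_simp,
      show x * t ^ 2 * t ^ 4 = x * t ^ 6 by ring,
      show x * t ^ 2 / t ^ 4 = x / t ^ 2 by field_simp,
      show x / t ^ 2 * t ^ 4 = x * t ^ 2 by field_simp,
      show x / t ^ 2 / t ^ 4 = x / t ^ 6 by field_simp,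
      mul_one, mul_one, div_one, div_one, mul_one, div_one, e1, e2, br_div_swap hQ hx t2,
      br_t4 ht0] at h
    field_simp at h ⊢
    rw [mul_zero] at h
    linear_combination -(mul_eq_zero.1 h).resolve_left hx
  have d1 := hasDerivAt_br_mul hQ ht0 n1
  have d2 := hasDerivAt_br_mul hQ t2 n2
  have d3 := hasDerivAt_br_div hQ ht0 n1
  have d4 := hasDerivAt_br_div hQ t2 n2
  have d5 : HasDerivAt (fun y : ℂ => t / y) (-t) 1 := by
    simpa using (hasDerivAt_const (1 : ℂ) t).fun_div (hasDerivAt_id 1) one_ne_zero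
  have dl := (d1.fun_mul (d4.fun_pow 3)).fun_sub ((d2.fun_pow 3).fun_mul d3)
  have dr := (d5.fun_mul (hasDerivAt_br_sq hQ)).mul_const (br (t ^ 5) t ^ 3)
  have hev := (continuousAt_id.eventually_ne (one_ne_zero (α := ℂ))).mono fun x hx => key x hx
  have h := (dr.congr_of_eventuallyEq hev).unique dl
  simp only [one_mul, div_one, one_pow, br_one hQ] at h
  field_simp
  refine mul_left_cancel₀ (mul_ne_zero (two_ne_zero (α := ℂ)) n1) ?_
  norm_num at h
  linear_combination h

end RankFive

/-! ### Splitting theta series and Appell sums modulo `5` -/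

namespace RankFive

open Filter Topology

variable {q Q t z : ℂ}

/-- Splitting a sum over `ℤ` by residues modulo `5`, with representatives `-2, …, 2`. -/
lemma tsum_five {f : ℤ → ℂ} (hf : Summable f) :
    ∑' n, f n = ∑' m, f (5 * m + -2) + ∑' m, f (5 * m + -1) + ∑' m, f (5 * m + 0) +
      ∑' m, f (5 * m + 1) + ∑' m, f (5 * m + 2) := by
  have hs : ∀ k : ℤ, Summable fun m => f (5 * m + k) := fun k =>
    hf.comp_injective fun a b h => by
      have : 5 * a + k = 5 * b + k := h
      omega
  have hsh : ∀ k : ℤ, ∑' m, f (5 * m + (k + 5)) = ∑' m, f (5 * m + k) := fun k => by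
    rw [← (Equiv.addRight (1 : ℤ)).tsum_eq (fun m => f (5 * m + k))]
    refine tsum_congr fun m => ?_
    simp only [Equiv.coe_addRight]
    congr 1
    ring
  have h1 := (Int.divModEquiv 5).symm.tsum_eq f
  have h2 : Summable fun p : ℤ × Fin 5 => f ((Int.divModEquiv 5).symm p) :=
    (Int.divModEquiv 5).symm.summable_iff.2 hf
  have h3 : ∑' p : ℤ × Fin 5, f ((Int.divModEquiv 5).symm p) =
      ∑' m : ℤ, ∑ k : Fin 5, f ((Int.divModEquiv 5).symm (m, k)) := by
    rw [h2.tsum_prod]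
    exact tsum_congr fun m => tsum_fintype _
  have h4 : ∀ (m : ℤ) (k : Fin 5), (Int.divModEquiv 5).symm (m, k) = 5 * m + (k : ℕ) := by
    intro m k
    simp [Int.divModEquiv]
    ring
  simp only [h4] at h3
  rw [← h1, show ∑' p : ℤ × Fin 5, f ((Int.divModEquiv 5).symm p) = _ from
    (tsum_congr fun p => by rw [← h4]).trans h3, Summable.tsum_finsetSum fun k _ => hs _]
  simp only [Fin.sum_univ_five]
  have a1 := hsh (-2)
  have a2 := hsh (-1)
  norm_num at a1 a2 ⊢
  rw [a1, a2]
  ring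

lemma tri_five_mul_add (m k : ℤ) : tri (5 * m + k) = 25 * tri m + 10 * m + tri k + 5 * m * k :=
  tri_eq (by linear_combination - 25 * two_mul_tri m - two_mul_tri k)

lemma neg_one_zpow_five (m k : ℤ) : (-1 : ℂ) ^ (5 * m + k) = (-1) ^ k * (-1) ^ m := by
  rw [zpow_add₀ (by norm_num), zpow_mul]
  norm_num
  ring

/-- One residue class of the theta series. -/
lemma th_piece (hq0 : q ≠ 0) (hz : z ≠ 0) (hz5 : z ^ 5 = 1) (k : ℤ) :
    ∑' m : ℤ, (-1) ^ (5 * m + k) * q ^ tri (5 * m + k) * z ^ (5 * m + k) =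
      (-1) ^ k * q ^ tri k * z ^ k * th ((q ^ 5) ^ 5) ((q ^ 5) ^ (2 + k)) := by
  rw [th, ← tsum_mul_left]
  refine tsum_congr fun m => ?_
  have h1 : z ^ (5 * m + k) = z ^ k := by
    rw [zpow_add₀ hz, zpow_mul]
    norm_cast
    rw [hz5, one_zpow, one_mul]
  have h2 : q ^ tri (5 * m + k) =
      q ^ tri k * ((q ^ 5) ^ 5) ^ tri m * ((q ^ 5) ^ (2 + k)) ^ m := by
    rw [← pow_mul, ← zpow_natCast, ← zpow_natCast, ← zpow_mul, ← zpow_mul, ← zpow_mul,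
      ← zpow_add₀ hq0, ← zpow_add₀ hq0, tri_five_mul_add]
    congr 1
    push_cast
    ring
  rw [h1, h2, neg_one_zpow_five]
  ring

/-- The 5-dissection of `(1-z)(zq;q)(q/z;q)(q;q)` for a fifth root of unity `z`. -/
lemma th_dissect (hq0 : q ≠ 0) (hq : ‖q‖ < 1) (hz : z ≠ 0) (hz5 : z ^ 5 = 1) :
    th q z = (1 - z) * th ((q ^ 5) ^ 5) ((q ^ 5) ^ 2) +
      q * (z ^ 2 - z ^ 4) * th ((q ^ 5) ^ 5) (q ^ 5) := by
  set t := q ^ 5 with ht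
  have ht0 : t ≠ 0 := pow_five_ne hq0
  have htn : ‖t‖ < 1 := norm_pow_five hq
  have hQ0 := pow_five_ne ht0
  have hQ := norm_pow_five htn
  rw [th, tsum_five (summable_th hq0 hq hz).of_norm]
  simp only [th_piece hq0 hz hz5]
  have b3 : th (t ^ 5) (t ^ 3) = th (t ^ 5) (t ^ 2) := by
    rw [jacobi hQ0 hQ (by positivity), jacobi hQ0 hQ (by positivity), br_t3 ht0]
  have b4 : th (t ^ 5) (t ^ 4) = th (t ^ 5) t := by
    rw [jacobi hQ0 hQ (by positivity), jacobi hQ0 hQ (by positivity), br_t4 ht0]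
  have z4 : z⁻¹ = z ^ 4 := inv_eq_of_mul_eq_one_right (by linear_combination hz5)
  rw [show tri (-2) = 3 from rfl, show tri (-1) = 1 from rfl, tri_zero, tri_one, tri_two]
  norm_num [th_one]
  rw [b3, b4, z4]
  ring

/-- A single term of the Appell sum at a fifth root of unity, expanded by
`1/(1 - zx) = (1 + zx + ⋯ + z⁴x⁴)/(1 - x⁵)`. -/
lemma cf_term (hq0 : q ≠ 0) (hq : ‖q‖ < 1) (hz5 : z ^ 5 = 1) (k m : ℤ)
    (hn : 5 * m + k ≠ 0) :
    cf q q⁻¹ (5 * m + k) / (1 - z * q ^ (5 * m + k)) =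
      ∑ i ∈ Finset.range 5, ((-1) ^ k * z ^ i * q ^ (3 * tri k + 2 * k + i * k)) *
        (cf ((q ^ 5) ^ 5) ((q ^ 5) ^ (3 * k + i - 7)) m /
          (1 - (q ^ 5) ^ k * ((q ^ 5) ^ 5) ^ m)) := by
  set x := q ^ (5 * m + k) with hx
  have hx5 : x ^ 5 = (q ^ 5) ^ k * ((q ^ 5) ^ 5) ^ m := by
    rw [hx, ← pow_mul, ← zpow_natCast, ← zpow_natCast, ← zpow_natCast, ← zpow_mul, ← zpow_mul,
      ← zpow_mul, ← zpow_add₀ hq0]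
    congr 1
    push_cast
    ring
  have hx1 : 1 - x ^ 5 ≠ 0 := by
    refine sub_ne_zero.2 fun h => hn ?_
    have h1 : ‖q‖ ^ ((5 * m + k) * 5) = 1 := by
      rw [zpow_mul, ← norm_zpow, ← hx]
      have := congrArg norm h
      rw [norm_one, norm_pow] at this
      exact_mod_cast this.symm
    have h2 := (zpow_eq_one_iff_right₀ (norm_nonneg q) hq.ne).1 h1
    omega
  have hzx : 1 - z * x ≠ 0 := fun h => hx1 (by
    have h1 : z * x = 1 := by linear_combination -h
    have h2 : (z * x) ^ 5 = 1 := by rw [h1, one_pow]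
    rw [mul_pow, hz5, one_mul] at h2
    rw [h2, sub_self])
  have hc : ∀ i : ℕ, (-1) ^ k * q ^ (3 * tri k + 2 * k + i * k) *
      cf ((q ^ 5) ^ 5) ((q ^ 5) ^ (3 * k + i - 7)) m = cf q q⁻¹ (5 * m + k) * x ^ i := by
    intro i
    have h2 : q ^ (3 * tri k + 2 * k + i * k) * (((q ^ 5) ^ 5) ^ (3 * (tri m + m)) *
        ((q ^ 5) ^ (3 * k + i - 7)) ^ m) =
        q ^ (3 * (tri (5 * m + k) + (5 * m + k))) * (q⁻¹) ^ (5 * m + k) * x ^ i := by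
      rw [hx, inv_zpow', ← pow_mul, ← zpow_natCast, ← zpow_natCast, ← zpow_natCast, ← zpow_mul,
        ← zpow_mul, ← zpow_mul, ← zpow_mul, ← zpow_add₀ hq0, ← zpow_add₀ hq0, ← zpow_add₀ hq0,
        ← zpow_add₀ hq0, tri_five_mul_add]
      congr 1
      push_cast
      ring
    rw [cf, cf, neg_one_zpow_five]
    linear_combination (-1) ^ k * (-1) ^ m * h2
  rw [← hx5]
  have e : ∀ i ∈ Finset.range 5, ((-1) ^ k * z ^ i * q ^ (3 * tri k + 2 * k + i * k)) *
      (cf ((q ^ 5) ^ 5) ((q ^ 5) ^ (3 * k + i - 7)) m / (1 - x ^ 5)) =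
      cf q q⁻¹ (5 * m + k) * (z ^ i * x ^ i) / (1 - x ^ 5) := fun i _ => by
    rw [mul_div_assoc', mul_right_comm, mul_comm (_ * z ^ i), mul_comm _ (z ^ i)]
    congr 1
    linear_combination z ^ i * hc i
  rw [Finset.sum_congr rfl e, ← Finset.sum_div, ← Finset.mul_sum, div_eq_div_iff hzx hx1]
  simp only [Finset.sum_range_succ, Finset.sum_range_zero]
  linear_combination cf q q⁻¹ (5 * m + k) * x ^ 5 * hz5

lemma off_zpow (ht0 : t ≠ 0) (ht : ‖t‖ < 1) {k : ℤ} (hk : ¬ 5 ∣ k) : Off (t ^ 5) (t ^ k) := by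
  intro m hm
  have h1 : ‖t‖ ^ (k + 5 * m) = 1 := by
    have := congrArg norm hm
    rw [norm_mul, norm_zpow, norm_zpow, norm_pow, norm_one] at this
    rw [zpow_add₀ (norm_ne_zero_iff.2 ht0), zpow_mul]
    exact_mod_cast this
  have h2 := (zpow_eq_one_iff_right₀ (norm_nonneg t) ht.ne).1 h1
  omega

/-- One residue class, other than `0`, of the Appell sum at a fifth root of unity. -/
lemma AA_piece (hq0 : q ≠ 0) (hq : ‖q‖ < 1) (hz5 : z ^ 5 = 1) {k : ℤ} (hk : ¬ 5 ∣ k) :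
    ∑' m : ℤ, cf q q⁻¹ (5 * m + k) / (1 - z * q ^ (5 * m + k)) =
      ∑ i ∈ Finset.range 5, ((-1) ^ k * z ^ i * q ^ (3 * tri k + 2 * k + i * k)) *
        BB ((q ^ 5) ^ 5) ((q ^ 5) ^ k) ((q ^ 5) ^ (3 * k + i - 7)) := by
  have ht0 : q ^ 5 ≠ 0 := pow_five_ne hq0
  have htn : ‖q ^ 5‖ < 1 := norm_pow_five hq
  rw [tsum_congr fun m => cf_term hq0 hq hz5 k m (by omega)]
  rw [Summable.tsum_finsetSum]
  · simp only [tsum_mul_left]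
    rfl
  · intro i _
    exact (apl_summable (pow_five_ne ht0) (norm_pow_five htn)
      (summable_cf (pow_five_ne ht0) (norm_pow_five htn) (zpow_ne_zero _ ht0))
      (zpow_ne_zero _ ht0)).mul_left _

/-- The residue class `0` of the Appell sum at a fifth root of unity. -/
lemma AA_piece_zero (hq0 : q ≠ 0) (hq : ‖q‖ < 1) (hz : z ≠ 0) (hz5 : z ^ 5 = 1) :
    ∑' m : ℤ, cf q q⁻¹ (5 * m + 0) / (1 - z * q ^ (5 * m + 0)) =
      1 / (1 - z) + ∑ i ∈ Finset.range 5, z ^ i *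
        BR ((q ^ 5) ^ 5) 1 ((q ^ 5) ^ ((i : ℤ) - 7)) := by
  have ht0 : q ^ 5 ≠ 0 := pow_five_ne hq0
  have htn : ‖q ^ 5‖ < 1 := norm_pow_five hq
  have hs : Summable fun m : ℤ => cf q q⁻¹ (5 * m + 0) / (1 - z * q ^ (5 * m + 0)) :=
    (apl_summable hq0 hq (summable_cf hq0 hq (inv_ne_zero hq0)) hz).comp_injective
      (i := fun m : ℤ => 5 * m + 0) fun a b h => by
        have : 5 * a + 0 = 5 * b + 0 := h
        omega
  rw [hs.tsum_eq_add_tsum_ite 0]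
  have e : ∀ m : ℤ, (if m = 0 then 0 else cf q q⁻¹ (5 * m + 0) / (1 - z * q ^ (5 * m + 0))) =
      ∑ i ∈ Finset.range 5, z ^ i * ((if m = 0 then 0 else
        cf ((q ^ 5) ^ 5) ((q ^ 5) ^ ((i : ℤ) - 7)) m) / (1 - 1 * ((q ^ 5) ^ 5) ^ m)) := by
    intro m
    split_ifs with hm
    · simp
    · rw [cf_term hq0 hq hz5 0 m (by omega)]
      simp [tri_zero]
  simp only [e]
  rw [Summable.tsum_finsetSum]
  · simp only [tsum_mul_left, BR, apl]
    simp [cf_zero]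
  · intro i _
    exact (apl_summable (pow_five_ne ht0) (norm_pow_five htn)
      (summable_cf' (pow_five_ne ht0) (norm_pow_five htn) (zpow_ne_zero _ ht0))
      one_ne_zero).mul_left _

lemma BR_one_inv (hQ0 : Q ≠ 0) (w : ℂ) : BR Q 1 w = -BR Q 1 (Q⁻¹ * Q⁻¹ * w⁻¹) := by
  rw [BR, BR, apl, apl, ← (Equiv.neg ℤ).tsum_eq, ← tsum_neg]
  refine tsum_congr fun m => ?_
  simp only [Equiv.neg_apply, neg_eq_zero, one_mul]
  split_ifs with hm
  · simp
  have h : cf Q w (-m) = Q ^ (-m) * cf Q (Q⁻¹ * Q⁻¹ * w⁻¹) m := by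
    have h1 : Q ^ (3 * (tri (-m) + -m)) = Q ^ (-m) * (Q ^ (3 * (tri m + m)) * (Q⁻¹ * Q⁻¹) ^ m) := by
      rw [← mul_inv, ← zpow_two, ← zpow_neg, ← zpow_mul, ← zpow_add₀ hQ0, ← zpow_add₀ hQ0, tri_neg]
      congr 1
      ring
    rw [cf, cf, neg_one_zpow_neg, mul_zpow _ (w⁻¹), inv_zpow', h1]
    ring
  rw [h, zpow_neg]
  have hm0 : Q ^ m ≠ 0 := zpow_ne_zero _ hQ0
  by_cases h1 : Q ^ m = 1
  · simp [h1]
  · have h2 : 1 - Q ^ m ≠ 0 := sub_ne_zero.2 (Ne.symm h1)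
    have h3 : 1 - (Q ^ m)⁻¹ ≠ 0 := sub_ne_zero.2 fun h => h1 (inv_eq_one.1 h.symm)
    rw [← neg_div, div_eq_div_iff h3 h2]
    field_simp
    ring

end RankFive

/-! ### The 5-dissections of the Appell sum and of the theta products -/

namespace RankFive

open Filter Topology

variable {q Q t z : ℂ}

/-- The 5-dissection of the Appell sum at a fifth root of unity. -/
lemma AA_dissect (hq0 : q ≠ 0) (hq : ‖q‖ < 1) (hz : z ≠ 0) (hz5 : z ^ 5 = 1) (ht : t = q ^ 5) :
    AA q z = 1 / (1 - z) - (1 - z ^ 4) * BR (t ^ 5) 1 (t ^ 3)⁻¹ -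
        (z - z ^ 3) * BR (t ^ 5) 1 (t ^ 4)⁻¹ -
      (1 - z ^ 4) * q ^ 2 * (BB (t ^ 5) t (t ^ 4)⁻¹ - t * BB (t ^ 5) (t ^ 2) t⁻¹) -
      (z - z ^ 3) * q ^ 3 * (BB (t ^ 5) t (t ^ 3)⁻¹ + t ^ 2 * BB (t ^ 5) (t ^ 2) (t ^ 2)) +
      (z - z ^ 3) * q ^ 4 * t * BB (t ^ 5) (t ^ 2) 1 +
      (1 - z ^ 4) * q * t * BB (t ^ 5) t 1 +
      (z - z ^ 3) * t * BB (t ^ 5) t t⁻¹ -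
      (1 - z ^ 4) * t ^ 3 * BB (t ^ 5) (t ^ 2) (t ^ 3) := by
  have ht0 : t ≠ 0 := ht ▸ pow_five_ne hq0
  have hQ0 := pow_five_ne ht0
  have hs := apl_summable hq0 hq (summable_cf hq0 hq (inv_ne_zero hq0)) hz
  have f1 := BB_inv hQ0 (inv_ne_zero ht0)
  have f2 := BB_inv hQ0 (inv_ne_zero (pow_ne_zero 2 ht0))
  rw [inv_inv] at f1 f2
  have r0 := BR_one_inv hQ0 (t ^ 7)⁻¹
  have r1 := BR_one_inv hQ0 (t ^ 6)⁻¹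
  have r2 := BR_one_inv hQ0 (t ^ 5)⁻¹
  rw [show (t ^ 5)⁻¹ * (t ^ 5)⁻¹ * (t ^ 7)⁻¹⁻¹ = (t ^ 3)⁻¹ by field_simp] at r0
  rw [show (t ^ 5)⁻¹ * (t ^ 5)⁻¹ * (t ^ 6)⁻¹⁻¹ = (t ^ 4)⁻¹ by field_simp] at r1
  rw [show (t ^ 5)⁻¹ * (t ^ 5)⁻¹ * (t ^ 5)⁻¹⁻¹ = (t ^ 5)⁻¹ by field_simp] at r2
  have r2' : BR (t ^ 5) 1 (t ^ 5)⁻¹ = 0 := by linear_combination r2 / 2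
  rw [AA, BB, apl, tsum_five hs, AA_piece_zero hq0 hq hz hz5, AA_piece hq0 hq hz5 (by decide),
    AA_piece hq0 hq hz5 (by decide), AA_piece hq0 hq hz5 (by decide),
    AA_piece hq0 hq hz5 (by decide), ← ht]
  simp only [Finset.sum_range_succ, Finset.sum_range_zero]
  rw [show tri (-2) = 3 from rfl, show tri (-1) = 1 from rfl, tri_one, tri_two]
  norm_num
  have g1 : ∀ w w' : ℂ, (t ^ 5)⁻¹ * (t ^ 5)⁻¹ * w⁻¹ = w' →
      BB (t ^ 5) t⁻¹ w = -t * BB (t ^ 5) t w' := fun w w' h => by rw [f1, h]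
  have g2 : ∀ w w' : ℂ, (t ^ 5)⁻¹ * (t ^ 5)⁻¹ * w⁻¹ = w' →
      BB (t ^ 5) (t ^ 2)⁻¹ w = -t ^ 2 * BB (t ^ 5) (t ^ 2) w' := fun w w' h => by rw [f2, h]
  rw [g1 (t ^ 10)⁻¹ 1 (by field_simp), g1 (t ^ 9)⁻¹ t⁻¹ (by field_simp),
    g1 (t ^ 8)⁻¹ (t ^ 2)⁻¹ (by field_simp), g1 (t ^ 7)⁻¹ (t ^ 3)⁻¹ (by field_simp),
    g1 (t ^ 6)⁻¹ (t ^ 4)⁻¹ (by field_simp), g2 (t ^ 13)⁻¹ (t ^ 3) (by field_simp),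
    g2 (t ^ 12)⁻¹ (t ^ 2) (by field_simp), g2 (t ^ 11)⁻¹ t (by field_simp),
    g2 (t ^ 10)⁻¹ 1 (by field_simp), g2 (t ^ 9)⁻¹ t⁻¹ (by field_simp), r0, r1, r2']
  generalize BB (t ^ 5) t (t ^ 4)⁻¹ = B1
  generalize BB (t ^ 5) t (t ^ 3)⁻¹ = B2
  generalize BB (t ^ 5) t (t ^ 2)⁻¹ = B3
  generalize BB (t ^ 5) t t⁻¹ = B4
  generalize BB (t ^ 5) t 1 = B5
  generalize BB (t ^ 5) (t ^ 2) (t ^ 3) = B6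
  generalize BB (t ^ 5) (t ^ 2) (t ^ 2) = B7
  generalize BB (t ^ 5) (t ^ 2) t = B8
  generalize BB (t ^ 5) (t ^ 2) 1 = B9
  generalize BB (t ^ 5) (t ^ 2) t⁻¹ = B10
  generalize BR (t ^ 5) 1 (t ^ 3)⁻¹ = B11
  generalize BR (t ^ 5) 1 (t ^ 4)⁻¹ = B12
  subst ht
  generalize (1 - z)⁻¹ = c
  field_simp
  ring

/-- The product `(zq;q)(q/z;q)(q;q)` at a primitive fifth root of unity. -/
lemma P_dissect (hq0 : q ≠ 0) (hq : ‖q‖ < 1) (hz1 : z ≠ 1) (hz5 : z ^ 5 = 1) :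
    qPochInf (z * q) q * qPochInf (z⁻¹ * q) q * qPochInf q q =
      th ((q ^ 5) ^ 5) ((q ^ 5) ^ 2) + (z ^ 2 + z ^ 3) * q * th ((q ^ 5) ^ 5) (q ^ 5) := by
  have hz : z ≠ 0 := by
    rintro rfl
    norm_num at hz5
  have h := th_dissect hq0 hq hz hz5
  rw [jacobi hq0 hq hz, br_eq hq, brh, show q / z = z⁻¹ * q by field_simp] at h
  refine mul_left_cancel₀ (sub_ne_zero.2 hz1.symm) ?_
  linear_combination h

/-- The product over all four primitive fifth roots of unity collapses, by
`∏_{z⁵=1} (1 - zx) = 1 - x⁵`. -/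
lemma poch_five (hq : ‖q‖ < 1) (h1 : 1 + z + z ^ 2 + z ^ 3 + z ^ 4 = 0) (hz5 : z ^ 5 = 1) :
    (qPochInf (z * q) q * qPochInf (z⁻¹ * q) q * qPochInf q q) *
      (qPochInf (z ^ 2 * q) q * qPochInf ((z ^ 2)⁻¹ * q) q * qPochInf q q) =
    qPochInf q q * qPochInf (q ^ 5) (q ^ 5) := by
  have i1 : z⁻¹ = z ^ 4 := inv_eq_of_mul_eq_one_right (by linear_combination hz5)
  have i2 : (z ^ 2)⁻¹ = z ^ 3 := inv_eq_of_mul_eq_one_right (by linear_combination hz5)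
  have m := fun a => poch_multipliable hq (a * q)
  have key : qPochInf (z * q) q * qPochInf (z ^ 4 * q) q * (qPochInf (z ^ 2 * q) q *
      qPochInf (z ^ 3 * q) q) * qPochInf (1 * q) q = qPochInf (q ^ 5) (q ^ 5) := by
    simp only [qPochInf]
    rw [← (m z).tprod_mul (m (z ^ 4)), ← (m (z ^ 2)).tprod_mul (m (z ^ 3)),
      ← ((m z).mul (m (z ^ 4))).tprod_mul ((m (z ^ 2)).mul (m (z ^ 3))),
      ← (((m z).mul (m (z ^ 4))).mul ((m (z ^ 2)).mul (m (z ^ 3)))).tprod_mul (m 1)]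
    refine tprod_congr fun k => ?_
    have hx : q ^ 5 * (q ^ 5) ^ k = (q * q ^ k) ^ 5 := by ring
    rw [hx]
    set x := q * q ^ k with hxd
    have e : ∀ c : ℂ, c * q * q ^ k = c * x := fun c => by rw [hxd]; ring
    rw [e, e, e, e, e]
    have z4 : z ^ 4 = -1 - z - z ^ 2 - z ^ 3 := by linear_combination h1
    have e1 : (1 - z * x) * (1 - z ^ 4 * x) = 1 - (z + z ^ 4) * x + x ^ 2 := by
      linear_combination x ^ 2 * hz5
    have e2 : (1 - z ^ 2 * x) * (1 - z ^ 3 * x) = 1 - (z ^ 2 + z ^ 3) * x + x ^ 2 := by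
      linear_combination x ^ 2 * hz5
    have e3 : (z + z ^ 4) * (z ^ 2 + z ^ 3) = -1 := by
      linear_combination h1 + (z + z ^ 2) * hz5
    have e4 : (z + z ^ 4) + (z ^ 2 + z ^ 3) = -1 := by linear_combination h1
    rw [e1, e2]
    linear_combination (1 - 1 * x) * (x ^ 2 * e3 - (x + x ^ 3) * e4)
  rw [i1, i2, ← key, one_mul]
  ring

lemma poch_t (ht : ‖t‖ < 1) (ht0 : t ≠ 0) :
    qPochInf t t = qPochInf (t ^ 5) (t ^ 5) * (br (t ^ 5) t * br (t ^ 5) (t ^ 2)) := by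
  rw [poch_split ht t (N := 5) (by norm_num), br, br, show t ^ 5 / t = t ^ 4 by field_simp,
    show t ^ 5 / t ^ 2 = t ^ 3 by field_simp]
  simp only [Finset.prod_range_succ, Finset.prod_range_zero, ← pow_succ', one_mul, zero_add, pow_one]
  ring

/-- The 5-dissection of Euler's product, from `poch_five` and the dissections at `z` and `z²`. -/
lemma euler_dissect (hq0 : q ≠ 0) (hq : ‖q‖ < 1) (ht : t = q ^ 5)
    (h1 : 1 + z + z ^ 2 + z ^ 3 + z ^ 4 = 0) :
    qPochInf q q = qPochInf (t ^ 5) (t ^ 5) * (br (t ^ 5) (t ^ 2) / br (t ^ 5) t - q -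
      q ^ 2 * (br (t ^ 5) t / br (t ^ 5) (t ^ 2))) := by
  have hz5 : z ^ 5 = 1 := by linear_combination (z - 1) * h1
  have hz1 : z ≠ 1 := by
    rintro rfl
    norm_num at h1
  have hz21 : z ^ 2 ≠ 1 := fun h => hz1 (by
    linear_combination hz5 - (z + z ^ 3) * h)
  have ht0 : t ≠ 0 := ht ▸ pow_five_ne hq0
  have htn : ‖t‖ < 1 := ht ▸ norm_pow_five hq
  have n1 := br_t_ne ht0 htn
  have n2 := br_t2_ne ht0 htn
  have hQ0 := pow_five_ne ht0
  have hQ := norm_pow_five htn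
  have hJ : qPochInf (t ^ 5) (t ^ 5) ≠ 0 := poch_ne_zero_of_norm hQ hQ
  have h := poch_five hq h1 hz5
  rw [P_dissect hq0 hq hz1 hz5, P_dissect hq0 hq hz21
    (by rw [← pow_mul, mul_comm, pow_mul, hz5, one_pow]), ← ht, poch_t htn ht0,
    jacobi hQ0 hQ ht0, jacobi hQ0 hQ (pow_ne_zero 2 ht0)] at h
  have e4 : (z ^ 2 + z ^ 3) + ((z ^ 2) ^ 2 + (z ^ 2) ^ 3) = -1 := by
    linear_combination h1 + z * hz5
  have e3 : (z ^ 2 + z ^ 3) * ((z ^ 2) ^ 2 + (z ^ 2) ^ 3) = -1 := by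
    linear_combination h1 + (z + z ^ 2 + z ^ 3 + z ^ 4) * hz5
  set J := qPochInf (t ^ 5) (t ^ 5)
  set a := br (t ^ 5) t
  set b := br (t ^ 5) (t ^ 2)
  have hn : J * (a * b) ≠ 0 := mul_ne_zero hJ (mul_ne_zero n1 n2)
  refine mul_right_cancel₀ hn ?_
  rw [← h]
  field_simp
  linear_combination q * b * a * e4 + q ^ 2 * a ^ 2 * e3

end RankFive

/-! ### The 5-dissection of the rank generating function -/

namespace RankFive

open Filter Topology

variable {q Q t z : ℂ}

/-- The 5-dissection of the rank generating function at a primitive fifth root of unity.  After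
multiplication by `(q;q)` every coefficient is a polynomial consequence of the partial fractions
`pf_i`, …, `pf_iv` and of `theta_one`, `theta_two`. -/
lemma rank_dissect (hq0 : q ≠ 0) (hq : ‖q‖ < 1) (ht : t = q ^ 5)
    (h1 : 1 + z + z ^ 2 + z ^ 3 + z ^ 4 = 0) (hzn : ‖z‖ = 1) :
    rankGF z q =
      (br (t ^ 5) (t ^ 2) / br (t ^ 5) t * (qPochInf (t ^ 5) (t ^ 5) / br (t ^ 5) t) -
        (2 - (z + z ^ 4)) * t * (qPochInf (t ^ 5) (t ^ 5))⁻¹ * BB (t ^ 5) t 1) +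
      q * (qPochInf (t ^ 5) (t ^ 5) / br (t ^ 5) t) +
      q ^ 2 * ((z + z ^ 4) * (qPochInf (t ^ 5) (t ^ 5) / br (t ^ 5) (t ^ 2))) +
      q ^ 3 * (-(br (t ^ 5) t / br (t ^ 5) (t ^ 2) *
          ((z + z ^ 4) * (qPochInf (t ^ 5) (t ^ 5) / br (t ^ 5) (t ^ 2)))) -
        (1 + 2 * (z + z ^ 4)) * t * (qPochInf (t ^ 5) (t ^ 5))⁻¹ * BB (t ^ 5) (t ^ 2) 1) := by
  have hz5 : z ^ 5 = 1 := by linear_combination (z - 1) * h1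
  have hz1 : z ≠ 1 := by
    rintro rfl
    norm_num at h1
  have hz : z ≠ 0 := by
    rintro rfl
    norm_num at h1
  have ht0 : t ≠ 0 := ht ▸ pow_five_ne hq0
  have htn : ‖t‖ < 1 := ht ▸ norm_pow_five hq
  have n1 := br_t_ne ht0 htn
  have n2 := br_t2_ne ht0 htn
  have hQ := norm_pow_five htn
  have hJ : qPochInf (t ^ 5) (t ^ 5) ≠ 0 := poch_ne_zero_of_norm hQ hQ
  have hE : qPochInf q q ≠ 0 := poch_ne_zero_of_norm hq hq
  refine mul_left_cancel₀ hE ?_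
  rw [(rank_appell hq0 hq).2 z hzn hz1, AA_dissect hq0 hq hz hz5 ht, euler_dissect hq0 hq ht h1]
  have p1 := pf_i ht0 htn
  have p2 := pf_ii ht0 htn
  have p3 := pf_iii ht0 htn
  have p4 := pf_iv ht0 htn
  have o1 := theta_one ht0 htn
  have o2 := theta_two ht0 htn
  have e1 : (1 - z) * (1 - z ^ 4) = 2 - (z + z ^ 4) := by linear_combination hz5
  have e2 : (1 - z) * (z - z ^ 3) = 1 + 2 * (z + z ^ 4) := by linear_combination -h1
  have e3 : (1 - z) * (1 / (1 - z)) = 1 := by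
    have := sub_ne_zero.2 hz1.symm
    field_simp
  set J := qPochInf (t ^ 5) (t ^ 5)
  set a := br (t ^ 5) t
  set b := br (t ^ 5) (t ^ 2)
  have hk : J * J⁻¹ = 1 := mul_inv_cancel₀ hJ
  have hab : b / a * (a / b) = 1 := by field_simp
  have hg : J / b = a / b * (J / a) := by field_simp
  have q1 : J ^ 2 / a = J * (J / a) := by ring
  have q2 : J ^ 2 / b = J * (a / b * (J / a)) := by field_simp
  have q3 : J ^ 2 * b ^ 2 / a ^ 3 = (b / a) ^ 2 * (J / a) * J := by ring
  have q4 : t * J ^ 2 * a ^ 2 / b ^ 3 = t * (a / b) ^ 3 * (J / a) * J := by field_simp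
  rw [q1] at p1
  rw [q2] at p2
  rw [q3] at o1
  rw [q4] at o2
  rw [hg]
  generalize BB (t ^ 5) t (t ^ 4)⁻¹ = B1 at *
  generalize BB (t ^ 5) t (t ^ 3)⁻¹ = B2 at *
  generalize BB (t ^ 5) t t⁻¹ = B4 at *
  generalize BB (t ^ 5) t 1 = B5 at *
  generalize BB (t ^ 5) (t ^ 2) (t ^ 3) = B6 at *
  generalize BB (t ^ 5) (t ^ 2) (t ^ 2) = B7 at *
  generalize BB (t ^ 5) (t ^ 2) 1 = B9 at *
  generalize BB (t ^ 5) (t ^ 2) t⁻¹ = B10 at *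
  generalize BR (t ^ 5) 1 (t ^ 3)⁻¹ = B11 at *
  generalize BR (t ^ 5) 1 (t ^ 4)⁻¹ = B12 at *
  generalize LL (t ^ 5) t = L1 at *
  generalize LL (t ^ 5) (t ^ 2) = L2 at *
  generalize 1 / (1 - z) = c at *
  generalize J⁻¹ = k at *
  generalize b / a = α at *
  generalize a / b = β at *
  generalize J / a = g at *
  have e5 : (1 - z) * (c - (1 - z ^ 4) * B11 - (z - z ^ 3) * B12 -
      (1 - z ^ 4) * q ^ 2 * (B1 - t * B10) - (z - z ^ 3) * q ^ 3 * (B2 + t ^ 2 * B7) +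
      (z - z ^ 3) * q ^ 4 * t * B9 + (1 - z ^ 4) * q * t * B5 + (z - z ^ 3) * t * B4 -
      (1 - z ^ 4) * t ^ 3 * B6) = 1 - (2 - (z + z ^ 4)) * (B11 + q ^ 2 * (B1 - t * B10) -
      q * t * B5 + t ^ 3 * B6) - (1 + 2 * (z + z ^ 4)) * (B12 + q ^ 3 * (B2 + t ^ 2 * B7) -
      q ^ 4 * t * B9 - t * B4) := by
    linear_combination e3 - (B11 + q ^ 2 * (B1 - t * B10) - q * t * B5 + t ^ 3 * B6) * e1 -
      (B12 + q ^ 3 * (B2 + t ^ 2 * B7) - q ^ 4 * t * B9 - t * B4) * e2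
  rw [e5]
  generalize z + z ^ 4 = η at *
  clear e1 e2 e3 e5
  linear_combination -o1 + η * o2 - (2 - η) * p3 - (1 + 2 * η) * p4 + (2 - η) * q ^ 2 * p1 +
    (1 + 2 * η) * q ^ 3 * p2 - (α - q - q ^ 2 * β) * (-(2 - η) * t * B5 -
      q ^ 3 * (1 + 2 * η) * t * B9) * hk - J * g * (-q ^ 2 + q ^ 2 * η - q ^ 3 * β * η) * hab +
    (β ^ 3 * η * g * J + (1 + 2 * η) * β * B9 * t) * ht

end RankFive

/-! ### Holomorphy, power series and residue classes modulo `5` -/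

namespace RankFive

open Filter Topology

variable {q Q t z : ℂ}

/-- Infinite products are holomorphic in the base, also when the parameter is a monomial in it. -/
lemma poch_differentiableAt (c : ℂ) (a : ℕ) {b : ℕ} (hb : b ≠ 0) (hq : ‖q‖ < 1) :
    DifferentiableAt ℂ (fun x => qPochInf (c * x ^ a) (x ^ b)) q := by
  obtain ⟨r, hr1, hr2⟩ := exists_between hq
  have hr0 : 0 ≤ r := (norm_nonneg q).trans hr1.le
  have hu : Summable (fun k : ℕ => ‖c‖ * (r ^ b) ^ k) :=
    (summable_geometric_of_lt_one (by positivity) (pow_lt_one₀ hr0 hr2 hb)).mul_left _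
  have h := hu.hasProdLocallyUniformlyOn_nat_one_add
    (f := fun k x => -(c * x ^ a * (x ^ b) ^ k)) (K := Metric.ball (0 : ℂ) r) Metric.isOpen_ball
    (Eventually.of_forall fun n x hx => by
      have hx1 : ‖x‖ ≤ r := (mem_ball_zero_iff.1 hx).le
      rw [norm_neg, norm_mul, norm_mul, norm_pow, norm_pow, norm_pow]
      gcongr
      exact mul_le_of_le_one_right (norm_nonneg c)
        (pow_le_one₀ (norm_nonneg x) (hx1.trans hr2.le)))
    (fun n => by fun_prop)
  have h2 := h.differentiableOn (.of_forall fun s => by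
    simpa [Finset.prod_fn] using DifferentiableOn.finsetProd (fun _ _ ↦ by fun_prop))
    Metric.isOpen_ball
  have h3 := (h2.differentiableAt (x := q) (Metric.isOpen_ball.mem_nhds (by simpa)))
  simpa [qPochInf, sub_eq_add_neg] using h3

lemma powerSeries_differentiableAt {a : ℕ → ℂ}
    (ha : ∀ x : ℂ, ‖x‖ < 1 → Summable fun n => a n * x ^ n) (hq : ‖q‖ < 1) :
    DifferentiableAt ℂ (fun x => ∑' n, a n * x ^ n) q := by
  obtain ⟨r, hr1, hr2⟩ := exists_between hq
  have hr0 : 0 ≤ r := (norm_nonneg q).trans hr1.le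
  have hu := (ha r (by rwa [Complex.norm_real, Real.norm_of_nonneg hr0])).norm
  have h := Complex.differentiableOn_tsum_of_summable_norm (F := fun n x => a n * x ^ n) hu
    (U := Metric.ball (0 : ℂ) r) (fun n => by fun_prop) Metric.isOpen_ball (fun n x hx => by
      rw [norm_mul, norm_mul, norm_pow, norm_pow, Complex.norm_real, Real.norm_of_nonneg hr0]
      gcongr
      exact (mem_ball_zero_iff.1 hx).le)
  exact h.differentiableAt (Metric.isOpen_ball.mem_nhds (by simpa))

lemma rankGF_differentiableAt (hz : ‖z‖ = 1) (hq : ‖q‖ < 1) :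
    DifferentiableAt ℂ (rankGF z) q :=
  powerSeries_differentiableAt (fun _ hx => (rankGF_eq hz hx).2) hq

lemma rankGF_zero (hz : ‖z‖ = 1) : rankGF z 0 = 1 := by
  have h := (rankGF_eq hz (q := 0) (by simp)).1
  simp only [pow_succ, mul_zero, zero_mul] at h
  linear_combination h.unique hasSum_zero

/-- If a holomorphic function on the unit disc with nonzero value at `0` is given everywhere by
`∑' n, a n * q ^ n`, then this series really converges on the whole disc: otherwise the
sum would take the default value `0` on an annulus, and the function would vanish identically. -/
lemma coeff_summable {F : ℂ → ℂ} {a : ℕ → ℂ} (hF : ∀ x : ℂ, ‖x‖ < 1 → DifferentiableAt ℂ F x)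
    (h0 : F 0 ≠ 0) (ha : ∀ x : ℂ, ‖x‖ < 1 → F x = ∑' n, a n * x ^ n) (hq : ‖q‖ < 1) :
    Summable fun n => a n * q ^ n := by
  obtain ⟨w, hw1, hw2⟩ : ∃ w : ℂ, ‖q‖ < ‖w‖ ∧ Summable fun n => a n * w ^ n := by
    by_contra! hn
    obtain ⟨r, hr1, hr2⟩ := exists_between hq
    have hr0 : 0 ≤ r := (norm_nonneg q).trans hr1.le
    have hrn : ‖(r : ℂ)‖ = r := by rw [Complex.norm_real, Real.norm_of_nonneg hr0]
    have hev : F =ᶠ[𝓝 (r : ℂ)] 0 := by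
      filter_upwards [continuous_norm.continuousAt.eventually (lt_mem_nhds (hr1.trans_eq hrn.symm)),
        continuous_norm.continuousAt.eventually (gt_mem_nhds (hrn.trans_lt hr2))] with x hx1 hx2
      rw [ha x hx2, tsum_eq_zero_of_not_summable (hn x hx1), Pi.zero_apply]
    have hd : DifferentiableOn ℂ F (Metric.ball 0 1) := fun x hx =>
      (hF x (mem_ball_zero_iff.1 hx)).differentiableWithinAt
    have := (hd.analyticOnNhd Metric.isOpen_ball).eqOn_zero_of_preconnected_of_eventuallyEq_zero
      (convex_ball (0 : ℂ) 1).isPreconnected (z₀ := r) (by simpa [abs_of_nonneg hr0] using hr2) hev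
    exact h0 (this (by simp))
  exact summable_powerSeries_of_norm_lt hw2.hasSum.tendsto_sum_nat.cauchySeq hw1

/-- Sorting a power series by residues of the exponent modulo `5`. -/
lemma tsum_residues {a : ℕ → ℂ} (hs : Summable fun n => a n * q ^ n) :
    ∑' n, a n * q ^ n = ∑' n, a (5 * n) * (q ^ 5) ^ n + q * ∑' n, a (5 * n + 1) * (q ^ 5) ^ n +
      q ^ 2 * ∑' n, a (5 * n + 2) * (q ^ 5) ^ n + q ^ 3 * ∑' n, a (5 * n + 3) * (q ^ 5) ^ n +
      q ^ 4 * ∑' n, a (5 * n + 4) * (q ^ 5) ^ n := by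
  have h : ∀ k : ℕ, ∑' m, a (k + 5 * m) * q ^ (k + 5 * m) =
      q ^ k * ∑' n, a (5 * n + k) * (q ^ 5) ^ n := fun k => by
    rw [← tsum_mul_left]
    refine tsum_congr fun m => ?_
    rw [add_comm k, pow_add, pow_mul]
    ring
  rw [Nat.sumByResidueClasses hs 5, show (Finset.univ : Finset (ZMod 5)) = {0, 1, 2, 3, 4} from rfl]
  simp only [h]
  rw [Finset.sum_insert (by decide), Finset.sum_insert (by decide), Finset.sum_insert (by decide),
    Finset.sum_insert (by decide), Finset.sum_singleton]
  rw [show (0 : ZMod 5).val = 0 from rfl, show (1 : ZMod 5).val = 1 from rfl,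
    show (2 : ZMod 5).val = 2 from rfl, show (3 : ZMod 5).val = 3 from rfl,
    show (4 : ZMod 5).val = 4 from rfl]
  simp only [pow_zero, pow_one, one_mul, add_zero]
  ring

/-- Fourier inversion on the group of fifth roots of unity. -/
lemma fourier_five (h1 : 1 + z + z ^ 2 + z ^ 3 + z ^ 4 = 0) {x₀ x₁ x₂ x₃ x₄ : ℂ}
    (h : ∀ w : ℂ, w ^ 5 = 1 → x₀ + w * x₁ + w ^ 2 * x₂ + w ^ 3 * x₃ + w ^ 4 * x₄ = 0) :
    x₃ = 0 := by
  have hz5 : z ^ 5 = 1 := by linear_combination (z - 1) * h1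
  have hp : ∀ n : ℕ, (z ^ n) ^ 5 = 1 := fun n => by rw [← pow_mul, mul_comm, pow_mul, hz5, one_pow]
  have e0 := h 1 (one_pow 5)
  have e1 := h z hz5
  have e2 := h (z ^ 2) (hp 2)
  have e3 := h (z ^ 3) (hp 3)
  have e4 := h (z ^ 4) (hp 4)
  have h6 : z ^ 6 = z := by linear_combination z * hz5
  have h8 : z ^ 8 = z ^ 3 := by linear_combination z ^ 3 * hz5
  have h12 : z ^ 12 = z ^ 2 := by linear_combination (z ^ 2 * (z ^ 5 + 1)) * hz5
  have h9 : z ^ 9 = z ^ 4 := by linear_combination z ^ 4 * hz5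
  have h16 : z ^ 16 = z := by linear_combination (z * (z ^ 10 + z ^ 5 + 1)) * hz5
  simp only [← pow_mul] at e2 e3 e4
  norm_num [h6, h8, h9, h12, h16] at e2 e3 e4
  linear_combination (1 / 5) * (e0 + z ^ 2 * e1 + z ^ 4 * e2 + z * e3 + z ^ 3 * e4)
    - (1 / 5) * (x₀ + x₁ + x₂ + x₄) * h1
    - (1 / 5) * (4 * x₃ + (z + z ^ 2) * x₁ + (z + z ^ 3) * x₂ + (z + z ^ 2) * x₄) * hz5

lemma zeta5_norm : ‖zeta5‖ = 1 := by
  rw [zeta5, show (2 * Real.pi * Complex.I / 5 : ℂ) = ((2 * Real.pi / 5 : ℝ) : ℂ) * Complex.I by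
    push_cast; ring, Complex.norm_exp_ofReal_mul_I]

lemma zeta5_sum : 1 + zeta5 + zeta5 ^ 2 + zeta5 ^ 3 + zeta5 ^ 4 = 0 := by
  have h := (Complex.isPrimitiveRoot_exp 5 (by norm_num)).geom_sum_eq_zero (by norm_num)
  simp only [Finset.sum_range_succ, Finset.sum_range_zero] at h
  rw [zeta5]
  norm_num at h
  exact h

end RankFive

/-! ### The residue class `3` of the product -/

namespace RankFive

open Filter Topology

variable {q Q t z : ℂ}

/-- The product on the left-hand side is holomorphic on the unit disc. -/
lemma product_differentiableAt (hzn : ‖z‖ = 1) (hq : ‖q‖ < 1) :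
    DifferentiableAt ℂ (fun x => qPochInf (z * x) x * qPochInf (z⁻¹ * x) x * qPochInf x x *
      rankGF z (x ^ 2)) q := by
  have h : ∀ c : ℂ, DifferentiableAt ℂ (fun x => qPochInf (c * x) x) q := fun c => by
    simpa only [pow_one] using poch_differentiableAt c 1 one_ne_zero hq
  have h1 : DifferentiableAt ℂ (fun x => qPochInf x x) q := by simpa only [one_mul] using h 1
  have hq2 : ‖q ^ 2‖ < 1 := by
    rw [norm_pow]; exact pow_lt_one₀ (norm_nonneg q) hq two_ne_zero
  have hR : DifferentiableAt ℂ (fun x => rankGF z (x ^ 2)) q :=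
    (rankGF_differentiableAt hzn hq2).fun_comp' q (by fun_prop)
  exact (((h z).fun_mul (h z⁻¹)).fun_mul h1).fun_mul hR

/-- The series in the hypothesis converges on the whole unit disc. -/
lemma product_summable (hzn : ‖z‖ = 1) {a : ℕ → ℂ}
    (ha : ∀ q : ℂ, ‖q‖ < 1 →
      qPochInf (z * q) q * qPochInf (z⁻¹ * q) q * qPochInf q q * rankGF z (q ^ 2) =
        ∑' n : ℕ, a n * q ^ n) (hq : ‖q‖ < 1) : Summable fun n => a n * q ^ n := by
  refine coeff_summable (fun x hx => product_differentiableAt hzn hx) ?_ ha hq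
  simp [poch_zero, rankGF_zero hzn]

/-- The residue class `3` modulo `5`, isolated by comparing both expansions of the product at the
five points `w q` with `w ^ 5 = 1`. -/
lemma residue_three (h1 : 1 + z + z ^ 2 + z ^ 3 + z ^ 4 = 0) (hzn : ‖z‖ = 1) {a : ℕ → ℂ}
    (ha : ∀ q : ℂ, ‖q‖ < 1 →
      qPochInf (z * q) q * qPochInf (z⁻¹ * q) q * qPochInf q q * rankGF z (q ^ 2) =
        ∑' n : ℕ, a n * q ^ n) (ht0 : t ≠ 0) (ht : ‖t‖ < 1) :
    ∑' n, a (5 * n + 3) * t ^ n = (z ^ 2 + z ^ 3) * th (t ^ 5) t *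
      (qPochInf ((t ^ 2) ^ 5) ((t ^ 2) ^ 5) / br ((t ^ 2) ^ 5) (t ^ 2)) := by
  have hz5 : z ^ 5 = 1 := by linear_combination (z - 1) * h1
  have hz1 : z ≠ 1 := by
    rintro rfl
    norm_num at h1
  obtain ⟨q, rfl⟩ : ∃ q : ℂ, q ^ 5 = t := IsAlgClosed.exists_pow_nat_eq t (by norm_num)
  have hq0 : q ≠ 0 := by
    rintro rfl
    exact ht0 (by norm_num)
  have hq : ‖q‖ < 1 := by
    rw [norm_pow] at ht
    exact (pow_lt_one_iff_of_nonneg (norm_nonneg q) (by norm_num)).1 ht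
  have key : ∀ w : ℂ, w ^ 5 = 1 → _ := fun w hw => by
    have hw0 : w ≠ 0 := by
      rintro rfl
      norm_num at hw
    have hwn : ‖w‖ = 1 := Complex.norm_eq_one_of_pow_eq_one hw (by norm_num)
    have hx0 : w * q ≠ 0 := mul_ne_zero hw0 hq0
    have hx : ‖w * q‖ < 1 := by rwa [norm_mul, hwn, one_mul]
    have hx5 : (w * q) ^ 5 = q ^ 5 := by rw [mul_pow, hw, one_mul]
    have hx2 : ‖(w * q) ^ 2‖ < 1 := by
      rw [norm_pow]; exact pow_lt_one₀ (norm_nonneg _) hx two_ne_zero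
    have e := ha (w * q) hx
    rw [tsum_residues (product_summable hzn ha hx), P_dissect hx0 hx hz1 hz5,
      rank_dissect (t := (q ^ 5) ^ 2) (pow_ne_zero 2 hx0) hx2
        (by rw [← hx5, ← pow_mul, ← pow_mul]) h1 hzn, hx5] at e
    exact And.intro e hw
  generalize th ((q ^ 5) ^ 5) ((q ^ 5) ^ 2) = θ₂ at *
  generalize th ((q ^ 5) ^ 5) (q ^ 5) = θ₁ at *
  generalize qPochInf (((q ^ 5) ^ 2) ^ 5) (((q ^ 5) ^ 2) ^ 5) /
    br (((q ^ 5) ^ 2) ^ 5) ((q ^ 5) ^ 2) = g₁ at *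
  generalize br (((q ^ 5) ^ 2) ^ 5) (((q ^ 5) ^ 2) ^ 2) / br (((q ^ 5) ^ 2) ^ 5) ((q ^ 5) ^ 2) *
    g₁ - (2 - (z + z ^ 4)) * (q ^ 5) ^ 2 * (qPochInf (((q ^ 5) ^ 2) ^ 5) (((q ^ 5) ^ 2) ^ 5))⁻¹ *
      BB (((q ^ 5) ^ 2) ^ 5) ((q ^ 5) ^ 2) 1 = g₀ at *
  generalize (z + z ^ 4) * (qPochInf (((q ^ 5) ^ 2) ^ 5) (((q ^ 5) ^ 2) ^ 5) /
    br (((q ^ 5) ^ 2) ^ 5) (((q ^ 5) ^ 2) ^ 2)) = g₂ at *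
  generalize -(br (((q ^ 5) ^ 2) ^ 5) ((q ^ 5) ^ 2) /
    br (((q ^ 5) ^ 2) ^ 5) (((q ^ 5) ^ 2) ^ 2) * g₂) - (1 + 2 * (z + z ^ 4)) * (q ^ 5) ^ 2 *
      (qPochInf (((q ^ 5) ^ 2) ^ 5) (((q ^ 5) ^ 2) ^ 5))⁻¹ *
        BB (((q ^ 5) ^ 2) ^ 5) (((q ^ 5) ^ 2) ^ 2) 1 = g₃ at *
  generalize ∑' n, a (5 * n) * (q ^ 5) ^ n = A₀ at *
  generalize ∑' n, a (5 * n + 1) * (q ^ 5) ^ n = A₁ at *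
  generalize ∑' n, a (5 * n + 2) * (q ^ 5) ^ n = A₂ at *
  generalize ∑' n, a (5 * n + 3) * (q ^ 5) ^ n = A₃ at *
  generalize ∑' n, a (5 * n + 4) * (q ^ 5) ^ n = A₄ at *
  generalize z ^ 2 + z ^ 3 = κ at *
  have hres := fourier_five h1 (x₀ := A₀ - (θ₂ * g₀ + κ * θ₁ * q ^ 5 * g₂))
    (x₁ := q * (A₁ - (κ * θ₁ * g₀ + q ^ 5 * θ₂ * g₃)))
    (x₂ := q ^ 2 * (A₂ - (θ₂ * g₁ + q ^ 5 * κ * θ₁ * g₃)))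
    (x₃ := q ^ 3 * (A₃ - κ * θ₁ * g₁)) (x₄ := q ^ 4 * (A₄ - θ₂ * g₂)) (fun w hw => by
      linear_combination -(key w hw).1 +
        (κ * θ₁ * q ^ 5 * g₂ + w * q * (q ^ 5 * θ₂ * g₃) + w ^ 2 * q ^ 2 * (q ^ 5 * κ * θ₁ * g₃))
          * (key w hw).2)
  exact sub_eq_zero.1 ((mul_eq_zero.1 hres).resolve_left (pow_ne_zero 3 hq0))

lemma Jba_five_two_ne (ht : ‖t‖ < 1) : Jba 5 2 t ≠ 0 := by
  have h : ∀ k : ℕ, k ≠ 0 → ‖t ^ k‖ < 1 := fun k hk => by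
    rw [norm_pow]; exact pow_lt_one₀ (norm_nonneg t) ht hk
  exact mul_ne_zero (mul_ne_zero (poch_ne_zero_of_norm (h 5 (by norm_num)) (h 2 (by norm_num)))
    (poch_ne_zero_of_norm (h 5 (by norm_num)) (h (5 - 2) (by norm_num))))
    (poch_ne_zero_of_norm (h 5 (by norm_num)) (h 5 (by norm_num)))

/-- Rewriting in terms of `J`-products, by splitting the products in base `t⁵` of `J_{5,2}` into
products in base `t¹⁰`. -/
lemma product_form (κ : ℂ) (ht0 : t ≠ 0) (ht : ‖t‖ < 1) :
    κ * th (t ^ 5) t * (qPochInf ((t ^ 2) ^ 5) ((t ^ 2) ^ 5) / br ((t ^ 2) ^ 5) (t ^ 2)) =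
      κ * Jb 5 t * Jba 5 1 t * Jba 10 3 t / Jba 5 2 t := by
  have hn : ∀ k : ℕ, k ≠ 0 → ‖t ^ k‖ < 1 := fun k hk => by
    rw [norm_pow]; exact pow_lt_one₀ (norm_nonneg t) ht hk
  have hp : ∀ j k : ℕ, j ≠ 0 → k ≠ 0 → qPochInf (t ^ j) (t ^ k) ≠ 0 := fun j k hj hk =>
    poch_ne_zero_of_norm (hn k hk) (hn j hj)
  have hs : ∀ j : ℕ, qPochInf (t ^ j) (t ^ 5) =
      qPochInf (t ^ j) (t ^ 10) * qPochInf (t ^ (j + 5)) (t ^ 10) := fun j => by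
    rw [poch_split (hn 5 (by norm_num)) (t ^ j) two_ne_zero]
    simp only [Finset.prod_range_succ, Finset.prod_range_zero, one_mul, mul_one, ← pow_add,
      ← pow_mul]
    norm_num
  have e4 : t ^ 5 / t = t ^ 4 := by field_simp
  have e8 : (t ^ 2) ^ 5 / t ^ 2 = t ^ 8 := by field_simp
  rw [jacobi (pow_ne_zero 5 ht0) (hn 5 (by norm_num)) ht0, br, br, e4, e8, ← pow_mul]
  simp only [Jb, Jba]
  norm_num
  rw [hs 2, hs 3]
  norm_num
  have h5 := hp 5 5 (by norm_num) (by norm_num)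
  have h2 := hp 2 10 (by norm_num) (by norm_num)
  have h7 := hp 7 10 (by norm_num) (by norm_num)
  have h3 := hp 3 10 (by norm_num) (by norm_num)
  have h8 := hp 8 10 (by norm_num) (by norm_num)
  field_simp

lemma residue_summable {a : ℕ → ℂ} (hs : ∀ q : ℂ, ‖q‖ < 1 → Summable fun n => a n * q ^ n)
    (ht : ‖t‖ < 1) : Summable fun n => a (5 * n + 3) * t ^ n := by
  by_cases ht0 : t = 0
  · subst ht0
    refine summable_of_ne_finset_zero (s := {0}) fun n hn => ?_
    rw [zero_pow (by simpa using hn), mul_zero]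
  obtain ⟨q, rfl⟩ : ∃ q : ℂ, q ^ 5 = t := IsAlgClosed.exists_pow_nat_eq t (by norm_num)
  have hq0 : q ≠ 0 := by
    rintro rfl
    exact ht0 (by norm_num)
  have hq : ‖q‖ < 1 := by
    rw [norm_pow] at ht
    exact (pow_lt_one_iff_of_nonneg (norm_nonneg q) (by norm_num)).1 ht
  have h := ((hs q hq).comp_injective (i := fun n : ℕ => 5 * n + 3)
    (fun m n h => by simpa using h)).mul_left (q ^ 3)⁻¹
  refine h.congr fun n => ?_
  simp only [Function.comp_apply, pow_add, pow_mul]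
  field_simp

lemma rhs_continuousAt (κ : ℂ) (ht : ‖t‖ < 1) :
    ContinuousAt (fun x => κ * Jb 5 x * Jba 5 1 x * Jba 10 3 x / Jba 5 2 x) t := by
  have h : ∀ j k : ℕ, k ≠ 0 → ContinuousAt (fun x => qPochInf (x ^ j) (x ^ k)) t :=
    fun j k hk => by simpa only [one_mul] using (poch_differentiableAt 1 j hk ht).continuousAt
  have hJ : ∀ b a : ℕ, b ≠ 0 → ContinuousAt (Jba b a) t := fun b a hb =>
    ((h a b hb).mul (h (b - a) b hb)).mul (h b b hb)
  exact (((continuousAt_const.mul (h 5 5 (by norm_num))).mul (hJ 5 1 (by norm_num))).mul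
    (hJ 10 3 (by norm_num))).div (hJ 5 2 (by norm_num)) (Jba_five_two_ne ht)

end RankFive

theorem U53_rank_theta_product_qsq (a : ℕ → ℂ)
    (ha : ∀ q : ℂ, ‖q‖ < 1 →
      qPochInf (zeta5 * q) q * qPochInf (zeta5⁻¹ * q) q * qPochInf q q *
          rankGF zeta5 (q ^ 2) =
        ∑' n : ℕ, a n * q ^ n) :
    ∀ q : ℂ, ‖q‖ < 1 →
      ∑' n : ℕ, a (5 * n + 3) * q ^ n =
        (zeta5 ^ 2 + zeta5 ^ 3) * Jb 5 q * Jba 5 1 q * Jba 10 3 q / Jba 5 2 q := by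
  intro q hq
  have hne : ∀ t : ℂ, t ≠ 0 → ‖t‖ < 1 → ∑' n : ℕ, a (5 * n + 3) * t ^ n =
      (zeta5 ^ 2 + zeta5 ^ 3) * Jb 5 t * Jba 5 1 t * Jba 10 3 t / Jba 5 2 t := fun t ht0 ht => by
    rw [RankFive.residue_three RankFive.zeta5_sum RankFive.zeta5_norm ha ht0 ht,
      RankFive.product_form _ ht0 ht]
  by_cases hq0 : q = 0
  -- The dissections need `q ≠ 0`; the value at `0` follows by continuity.
  · subst hq0
    have hc := (RankFive.powerSeries_differentiableAt (a := fun n => a (5 * n + 3))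
      (fun x hx => RankFive.residue_summable
        (fun y hy => RankFive.product_summable RankFive.zeta5_norm ha hy) hx) hq).continuousAt
    refine RankFive.eq_of_eventually_punctured hc (RankFive.rhs_continuousAt _ hq) ?_
    filter_upwards [self_mem_nhdsWithin, nhdsWithin_le_nhds (Metric.ball_mem_nhds (0 : ℂ) one_pos)]
      with t ht0 ht
    exact hne t ht0 (by simpa using ht)
  · exact hne q hq0 hq
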